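/- arXiv:1504.07506 — 2 statements merged into one kernel-verified Lean document; each statement's English description precedes it below -/
import Mathlib

section
/- Let G be a finite group, H a subgroup of G of index n ≥ 2, F a field of characteristic p > 0, and V an H-module of finite dimension a over F. Then for every submodule S of the induced module V↑G = F[G] ⊗_{F[H]} V, d_G(S) ≤ a·E(n,p). -/
/-- `dMod G S` is `d_G(S)`: the minimal number of elements required to generate the
(`G`-stable) submodule `S` as a `G`-module. -/
noncomputable def dMod (G : Type*) [Group G] {F W : Type*} [Field F] [AddCommGroup W]
    [Module F W] [DistribMulAction G W] (S : Submodule F W) : ℕ :=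
  sInf {m : ℕ | ∃ T : Finset W, T.card = m ∧ (T : Set W) ⊆ (S : Set W) ∧
    Submodule.span F {w : W | ∃ g : G, ∃ t ∈ T, w = g • t} = S}

/-- `lpp n` is the largest prime power dividing `n` (with `lpp 1 = 1`). -/
def lpp (n : ℕ) : ℕ :=
  max 1 (n.primeFactors.sup fun q => q ^ n.factorization q)

/-- `E(n,p) = min{⌊b·n/√((p−1)·log_p(n_p))⌋, n/lpp(n/n_p)}` with `b = √(2/π)`, the first term
of the minimum being `+∞` (i.e. omitted) when `n_p = 1`. -/
noncomputable def Efun (n p : ℕ) : ℕ :=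
  if n.factorization p = 0 then n / lpp (n / p ^ n.factorization p)
  else
    min
      ⌊Real.sqrt (2 / Real.pi) * n /
        Real.sqrt (((p : ℝ) - 1) * Real.logb p (p ^ n.factorization p))⌋₊
      (n / lpp (n / p ^ n.factorization p))

/-!
Restricting the action from `G` to a Sylow subgroup can only increase the number of generators.
For a prime `q ≠ p` with `q ^ e = lpp (n / n_p)`, Maschke's theorem for a Sylow
`q`-subgroup makes `S` a quotient of the whole module, which is generated by the summands at
representatives of the orbits; each orbit has at least `q ^ e` points, so there are at most
`n / q ^ e` orbits.

For a Sylow `p`-subgroup each orbit has `p ^ m` points with `p ^ m ≥ n_p`, and one orbit at a time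
suffices. An index-`p` subgroup `R` splits the orbit into `p` orbits of `R`, and the components of
the elements of `S` in these filter `S` by `R`-modules. For a chain of `l` submodules this yields
an `l × p` rectangle of `R`-modules, which is cut into hooks, each of them again a chain; by
induction the number of generators is at most `dim V` times the width of a product of `m` chains
with `p` elements. That width is estimated by convolution: in a suitable order the uniform
distribution on a chain of `p` points is dominated by the sum of `p - 1` independent signs, whence
the central binomial coefficient with its Wallis bound `2 ^ s / √(π s / 2)` at `s = (p - 1) m`.
-/

/-! ## Chains in products of chains -/

section ChainCount

/-- The number of chains in the iterated hook decomposition of the product of a chain with `l`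
elements and `m` chains with `p` elements: a rectangle of size `l × p` splits into the hooks of
sizes `l + p - 1`, `l + p - 3`, …. For `l = 1` this is the width of the product of `m` chains. -/
def chainCount (p : ℕ) : ℕ → ℕ → ℕ
  | 0, _ => 1
  | m + 1, l => ∑ t ∈ Finset.range (min l p), chainCount p m (l + p - 1 - 2 * t)

/-- Convolution on `ℤ` with the indicator function of `{k - 1, k - 3, …, 1 - k}`. On odd functions
it performs the recursion of `chainCount`. -/
def chainConv (k : ℕ) : Module.End ℝ (ℤ → ℝ) :=
  ∑ i ∈ Finset.range k, LinearMap.funLeft ℝ ℝ fun l : ℤ => l + k - 1 - 2 * i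

/-- The chain convolution by `k + 1` points, normalised to preserve total mass. -/
noncomputable def avgConv (k : ℕ) : Module.End ℝ (ℤ → ℝ) :=
  ((k + 1 : ℕ) : ℝ)⁻¹ • chainConv (k + 1)

/-- The odd functions on `ℤ` that are nonnegative on the positive integers. The convolutions are
compared in the order with this positive cone. -/
structure IsOddNonneg (f : ℤ → ℝ) : Prop where
  odd : Function.Odd f
  nonneg : ∀ ⦃l⦄, 0 < l → 0 ≤ f l

/-- The sign function on `ℤ` with real values. -/
def realSign (l : ℤ) : ℝ := (l.sign : ℝ)

variable {f g : ℤ → ℝ}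

theorem chainConv_apply (k : ℕ) (f : ℤ → ℝ) (l : ℤ) :
    chainConv k f l = ∑ i ∈ Finset.range k, f (l + k - 1 - 2 * i) := by
  simp [chainConv, LinearMap.funLeft_apply]

theorem chainConv_commute (j k : ℕ) : Commute (chainConv j) (chainConv k) := by
  refine LinearMap.ext fun f => funext fun l => ?_
  simp only [Module.End.mul_apply, chainConv_apply]
  rw [Finset.sum_comm]
  refine Finset.sum_congr rfl fun i _ => Finset.sum_congr rfl fun i' _ => congrArg f ?_
  ring

theorem chainConv_one : chainConv 1 = 1 := by
  refine LinearMap.ext fun f => funext fun l => ?_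
  simp [chainConv_apply]

theorem chainConv_two_apply (f : ℤ → ℝ) (l : ℤ) :
    chainConv 2 f l = f (l + 1) + f (l - 1) := by
  rw [chainConv_apply, Finset.sum_range_succ, Finset.sum_range_one]
  congr 2 <;> push_cast <;> ring

theorem chainConv_two_mul (k : ℕ) :
    chainConv 2 * chainConv (k + 1) = chainConv (k + 2) + chainConv k := by
  refine LinearMap.ext fun f => funext fun l => ?_
  rw [Module.End.mul_apply, chainConv_two_apply]
  simp only [LinearMap.add_apply, Pi.add_apply, chainConv_apply]
  rw [Finset.sum_range_succ _ (k + 1), Finset.sum_range_succ _ k, add_right_comm,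
    Finset.sum_range_succ _ k, Finset.sum_range_succ _ k, ← sub_eq_zero]
  push_cast
  have shift_add (i : ℤ) : l + 1 + ((k : ℤ) + 1) - 1 - 2 * i = l + (k + 2) - 1 - 2 * i := by ring
  have shift_sub (i : ℤ) : l - 1 + ((k : ℤ) + 1) - 1 - 2 * i = l + k - 1 - 2 * i := by ring
  have last : l + ((k : ℤ) + 2) - 1 - 2 * (k + 1) = l + k - 1 - 2 * k := by ring
  simp only [shift_add, shift_sub, last]
  ring

theorem odd_chainConv (hf : Function.Odd f) (k : ℕ) : Function.Odd (chainConv k f) := by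
  intro l
  rw [chainConv_apply, chainConv_apply, ← Finset.sum_range_reflect, ← Finset.sum_neg_distrib]
  refine Finset.sum_congr rfl fun i hi => ?_
  have := Finset.mem_range.1 hi
  rw [← hf]
  congr 1
  omega

theorem odd_chainConv_pow (hf : Function.Odd f) (k m : ℕ) :
    Function.Odd ((chainConv k ^ m) f) := by
  induction m with
  | zero => exact hf
  | succ m ih => rw [pow_succ', Module.End.mul_apply]; exact odd_chainConv ih k

theorem odd_avgConv (hf : Function.Odd f) (k : ℕ) : Function.Odd (avgConv k f) :=
  Function.Odd.const_smul (odd_chainConv hf (k + 1)) ((k + 1 : ℕ) : ℝ)⁻¹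

theorem chainConv_apply_comm (hf : Function.Odd f) (k l : ℕ) :
    chainConv k f l = chainConv l f k := by
  wlog hkl : k ≤ l generalizing k l
  · exact (this l k (by omega)).symm
  obtain ⟨d, rfl⟩ := Nat.exists_eq_add_of_le hkl
  rw [chainConv_apply, chainConv_apply, Finset.sum_range_add]
  -- The `d` surplus terms are symmetric about `0`, so they cancel in pairs.
  have surplus : ∑ x ∈ Finset.range d, f (k + (k + d : ℕ) - 1 - 2 * (k + x : ℕ)) = 0 := by
    rw [← self_eq_neg]
    conv_lhs => rw [← Finset.sum_range_reflect]
    rw [← Finset.sum_neg_distrib]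
    refine Finset.sum_congr rfl fun i hi => ?_
    have := Finset.mem_range.1 hi
    rw [← hf]
    congr 1
    omega
  rw [surplus, add_zero]
  refine Finset.sum_congr rfl fun i _ => congrArg f ?_
  ring

theorem chainConv_apply_eq_sum_min (hf : Function.Odd f) (k l : ℕ) :
    chainConv k f l = ∑ t ∈ Finset.range (min l k), f (l + k - 1 - 2 * t : ℕ) := by
  wlog hkl : k ≤ l generalizing k l
  · rw [chainConv_apply_comm hf, this l k (by omega), min_comm, add_comm k l]
  rw [min_eq_right hkl, chainConv_apply]
  refine Finset.sum_congr rfl fun i hi => congrArg f ?_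
  have := Finset.mem_range.1 hi
  omega

theorem odd_realSign : Function.Odd realSign := fun l => by simp [realSign]

theorem realSign_of_pos {l : ℤ} (hl : 0 < l) : realSign l = 1 := by
  simp [realSign, Int.sign_eq_one_of_pos hl]

theorem realSign_of_neg {l : ℤ} (hl : l < 0) : realSign l = -1 := by
  simp [realSign, Int.sign_eq_neg_one_of_neg hl]

theorem chainConv_realSign (k l : ℕ) : chainConv k realSign l = min (l : ℝ) k := by
  rw [chainConv_apply_eq_sum_min odd_realSign, Finset.sum_eq_card_nsmul (b := (1 : ℝ))]
  · simp
  · intro t ht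
    have := Finset.mem_range.1 ht
    exact realSign_of_pos (by omega)

theorem chainCount_eq_chainConv_pow (p m : ℕ) {l : ℕ} (hl : 0 < l) :
    (chainCount p m l : ℝ) = (chainConv p ^ m) realSign l := by
  induction m generalizing l with
  | zero => simp [chainCount, realSign_of_pos (Int.natCast_pos.2 hl)]
  | succ m ih =>
    rw [pow_succ', Module.End.mul_apply,
      chainConv_apply_eq_sum_min (odd_chainConv_pow odd_realSign p m), chainCount, Nat.cast_sum]
    refine Finset.sum_congr rfl fun t ht => ih ?_
    have := Finset.mem_range.1 ht
    omega

namespace IsOddNonneg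

theorem zero : IsOddNonneg 0 := ⟨fun _ => by simp, fun _ _ => le_rfl⟩

theorem add (hf : IsOddNonneg f) (hg : IsOddNonneg g) : IsOddNonneg (f + g) :=
  ⟨hf.odd.add hg.odd, fun _ hl => add_nonneg (hf.nonneg hl) (hg.nonneg hl)⟩

theorem smul (hf : IsOddNonneg f) {c : ℝ} (hc : 0 ≤ c) : IsOddNonneg (c • f) :=
  ⟨fun l => by simp [hf.odd l], fun _ hl => mul_nonneg hc (hf.nonneg hl)⟩

theorem chainConv (hf : IsOddNonneg f) (k : ℕ) : IsOddNonneg (chainConv k f) := by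
  refine ⟨odd_chainConv hf.odd k, fun l hl => ?_⟩
  lift l to ℕ using hl.le
  rw [chainConv_apply_eq_sum_min hf.odd]
  refine Finset.sum_nonneg fun t ht => hf.nonneg ?_
  have := Finset.mem_range.1 ht
  omega

theorem avgConv (hf : IsOddNonneg f) (k : ℕ) : IsOddNonneg (avgConv k f) :=
  (hf.chainConv _).smul (by positivity)

theorem avgConv_pow (hf : IsOddNonneg f) (k m : ℕ) : IsOddNonneg ((_root_.avgConv k ^ m) f) := by
  induction m with
  | zero => exact hf
  | succ m ih => rw [pow_succ', Module.End.mul_apply]; exact ih.avgConv k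

end IsOddNonneg

theorem avgConv_zero : avgConv 0 = 1 := by simp [avgConv, chainConv_one]

theorem avgConv_commute (j k : ℕ) : Commute (avgConv j) (avgConv k) :=
  ((chainConv_commute _ _).smul_left _).smul_right _

theorem avgConv_pow (k m : ℕ) :
    avgConv k ^ m = (((k + 1 : ℕ) : ℝ) ^ m)⁻¹ • chainConv (k + 1) ^ m := by
  rw [avgConv, smul_pow, inv_pow]

theorem avgConv_one_mul (k : ℕ) :
    avgConv 1 * avgConv k =
      (2 * (k + 1 : ℝ))⁻¹ • (chainConv (k + 2) + chainConv k) := by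
  rw [avgConv, avgConv, smul_mul_smul_comm, one_add_one_eq_two, chainConv_two_mul, ← mul_inv]
  norm_cast

theorem isOddNonneg_avgConv_one_avgConv_sub (k : ℕ) :
    IsOddNonneg (avgConv 1 (avgConv k realSign) - avgConv (k + 1) realSign) := by
  refine ⟨fun l => ?_, fun l hl => ?_⟩
  · rw [Pi.sub_apply, Pi.sub_apply, odd_avgConv (odd_avgConv odd_realSign k),
      odd_avgConv odd_realSign, neg_sub_neg, neg_sub]
  · lift l to ℕ using hl.le
    rw [← Module.End.mul_apply, avgConv_one_mul]
    simp only [avgConv, add_assoc, one_add_one_eq_two, LinearMap.smul_apply, LinearMap.add_apply,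
      Pi.sub_apply, Pi.smul_apply, Pi.add_apply, chainConv_realSign, smul_eq_mul]
    push_cast
    have hl : (0 : ℝ) < l := by exact_mod_cast hl
    have min_concave : (k : ℝ) * min (l : ℝ) (k + 2) ≤ (k + 2) * min (l : ℝ) k := by
      rcases le_total (l : ℝ) k with h | h
      · rw [min_eq_left h, min_eq_left (by linarith)]; nlinarith
      · rw [min_eq_right h]
        nlinarith [min_le_right (l : ℝ) (k + 2)]
    rw [sub_nonneg, inv_mul_le_iff₀ (by positivity), ← mul_assoc, ← div_eq_mul_inv,
      div_mul_eq_mul_div, le_div_iff₀ (by positivity)]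
    nlinarith

theorem isOddNonneg_avgConv_one_pow_sub (k : ℕ) :
    IsOddNonneg ((avgConv 1 ^ k) realSign - avgConv k realSign) := by
  induction k with
  | zero => simpa [avgConv_zero] using IsOddNonneg.zero
  | succ k ih =>
    have h := (ih.avgConv 1).add (isOddNonneg_avgConv_one_avgConv_sub k)
    rwa [map_sub, sub_add_sub_cancel, ← Module.End.mul_apply, ← pow_succ'] at h

theorem isOddNonneg_avgConv_one_pow_mul_sub (k m : ℕ) :
    IsOddNonneg ((avgConv 1 ^ (k * m)) realSign - (avgConv k ^ m) realSign) := by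
  induction m with
  | zero => simpa using IsOddNonneg.zero
  | succ m ih =>
    have h := ((isOddNonneg_avgConv_one_pow_sub k).avgConv_pow 1 (k * m)).add (ih.avgConv k)
    rwa [map_sub, map_sub, ← Module.End.mul_apply, ← Module.End.mul_apply, ← Module.End.mul_apply,
      ← Module.End.mul_apply, ((avgConv_commute k 1).pow_right _).eq, sub_add_sub_cancel, ← pow_add,
      ← pow_succ', ← Nat.mul_succ] at h

theorem chainConv_two_pow_apply (s : ℕ) (f : ℤ → ℝ) (l : ℤ) :
    (chainConv 2 ^ s) f l = ∑ j ∈ Finset.range (s + 1), (s.choose j : ℝ) * f (l + s - 2 * j) := by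
  induction s generalizing l with
  | zero => simp
  | succ s ih =>
    rw [pow_succ', Module.End.mul_apply, chainConv_two_apply, ih, ih,
      Finset.sum_choose_succ_mul (fun j _ => f (l + (s + 1 : ℕ) - 2 * j))]
    congr 1 <;>
    · refine Finset.sum_congr rfl fun j _ => ?_
      congr 2
      push_cast
      ring

theorem chainConv_two_pow_realSign (s : ℕ) :
    (chainConv 2 ^ s) realSign 1 = (s.choose (s / 2) : ℝ) := by
  have odd := odd_chainConv_pow odd_realSign 2 s 1
  have two_mul_eq : 2 * (chainConv 2 ^ s) realSign 1 = ∑ j ∈ Finset.range (s + 1),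
      (s.choose j : ℝ) * (realSign (1 + s - 2 * j) - realSign (-1 + s - 2 * j)) := by
    simp only [mul_sub, Finset.sum_sub_distrib, ← chainConv_two_pow_apply]
    linarith
  have sign_sub_eq_zero (j : ℕ) (hj : 2 * j + 1 < s ∨ s + 1 < 2 * j) :
      realSign (1 + s - 2 * j) - realSign (-1 + s - 2 * j) = 0 := by
    rcases hj with hj | hj
    · rw [realSign_of_pos (by omega), realSign_of_pos (by omega), sub_self]
    · rw [realSign_of_neg (by omega), realSign_of_neg (by omega), sub_self]
  obtain ⟨r, rfl | rfl⟩ := Nat.even_or_odd' s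
  · rw [Finset.sum_eq_single_of_mem r (Finset.mem_range.2 (by omega)) fun j _ hj => by
        rw [sign_sub_eq_zero j (by omega), mul_zero],
      realSign_of_pos (by omega), realSign_of_neg (by omega)] at two_mul_eq
    rw [Nat.mul_div_cancel_left r two_pos]
    linarith
  · rw [Finset.sum_eq_add_of_mem r (r + 1) (Finset.mem_range.2 (by omega))
        (Finset.mem_range.2 (by omega)) (by omega) fun j _ hj => by
          rw [sign_sub_eq_zero j (by omega), mul_zero],
      realSign_of_pos (by push_cast; omega), realSign_of_neg (l := -1 + _ - 2 * (r + 1 : ℕ))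
        (by push_cast; omega), Nat.choose_symm_half] at two_mul_eq
    have sign_mid_left : realSign (-1 + (2 * r + 1 : ℕ) - 2 * r) = 0 := by
      simp [realSign]
    have sign_mid_right : realSign (1 + (2 * r + 1 : ℕ) - 2 * (r + 1 : ℕ)) = 0 := by
      rw [show (1 + (2 * r + 1 : ℕ) - 2 * (r + 1 : ℕ) : ℤ) = 0 by push_cast; ring]
      simp [realSign]
    rw [sign_mid_left, sign_mid_right] at two_mul_eq
    rw [show (2 * r + 1) / 2 = r by omega]
    linarith

theorem wallisW_mul_centralBinom_sq (n : ℕ) :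
    Real.Wallis.W n * ((n.centralBinom : ℝ) ^ 2 * (2 * n + 1)) = (4 ^ n) ^ 2 := by
  have factorial_eq : (n.centralBinom : ℝ) * (n.factorial : ℝ) ^ 2 = ((2 * n).factorial : ℝ) := by
    have := Nat.choose_mul_factorial_mul_factorial (n := 2 * n) (k := n) (by omega)
    rw [show 2 * n - n = n by omega] at this
    rw [Nat.centralBinom, ← this]
    push_cast
    ring
  have := n.centralBinom_pos
  rw [Real.Wallis.W_eq_factorial_ratio, ← factorial_eq, show (4 : ℝ) = 2 ^ 2 by norm_num,
    ← pow_mul, ← pow_mul, show 2 * (n * 2) = 4 * n by ring]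
  field_simp

theorem centralBinom_le_div_sqrt {n : ℕ} (hn : 0 < n) :
    (n.centralBinom : ℝ) ≤ 4 ^ n / √(Real.pi * n) := by
  rw [le_div_iff₀ (by positivity)]
  refine le_of_sq_le_sq ?_ (by positivity)
  have wallis : Real.pi * n ≤ Real.Wallis.W n * (2 * n + 1) := calc
    Real.pi * n ≤ (2 * (n : ℝ) + 1) / (2 * n + 2) * (Real.pi / 2) * (2 * n + 1) := by
        rw [div_mul_eq_mul_div, div_mul_eq_mul_div, le_div_iff₀ (by positivity)]
        nlinarith [Real.pi_pos]
    _ ≤ Real.Wallis.W n * (2 * n + 1) := by gcongr; exact Real.Wallis.le_W n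
  calc ((n.centralBinom : ℝ) * √(Real.pi * n)) ^ 2
      = (n.centralBinom : ℝ) ^ 2 * (Real.pi * n) := by
        rw [mul_pow, Real.sq_sqrt (by positivity)]
    _ ≤ (n.centralBinom : ℝ) ^ 2 * (Real.Wallis.W n * (2 * n + 1)) := by gcongr
    _ = (4 ^ n) ^ 2 := by rw [← wallisW_mul_centralBinom_sq]; ring

theorem choose_half_le {s : ℕ} (hs : 0 < s) :
    (s.choose (s / 2) : ℝ) ≤ 2 ^ s / √(Real.pi / 2 * s) := by
  obtain ⟨r, rfl | rfl⟩ := Nat.even_or_odd' s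
  · rw [Nat.mul_div_cancel_left r two_pos, ← Nat.centralBinom]
    convert centralBinom_le_div_sqrt (n := r) (by omega) using 2
    · rw [pow_mul]; norm_num
    · push_cast; ring_nf
  · have centralBinom_eq : ((r + 1).centralBinom : ℝ) = 2 * ((2 * r + 1).choose r : ℝ) := by
      rw [Nat.centralBinom, show 2 * (r + 1) = (2 * r + 1) + 1 by ring, Nat.choose_succ_succ,
        Nat.choose_symm_half]
      push_cast
      ring
    have h := centralBinom_le_div_sqrt r.succ_pos
    rw [Nat.succ_eq_add_one, centralBinom_eq, ← le_div_iff₀' two_pos] at h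
    rw [show (2 * r + 1) / 2 = r by omega]
    calc ((2 * r + 1).choose r : ℝ) ≤ 4 ^ (r + 1) / √(Real.pi * (r + 1 : ℕ)) / 2 := h
      _ = 2 ^ (2 * r + 1) / √(Real.pi * (r + 1 : ℕ)) := by
          rw [show (4 : ℝ) = 2 ^ 2 by norm_num, ← pow_mul]; ring
      _ ≤ 2 ^ (2 * r + 1) / √(Real.pi / 2 * (2 * r + 1 : ℕ)) := by
          refine div_le_div_of_nonneg_left (by positivity) (by positivity) (Real.sqrt_le_sqrt ?_)
          push_cast
          linarith [Real.pi_pos]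

theorem chainCount_one_le {p m : ℕ} (hp : 2 ≤ p) (hm : 0 < m) :
    (chainCount p m 1 : ℝ) ≤ √(2 / Real.pi) * p ^ m / √(((p : ℝ) - 1) * m) := by
  obtain ⟨k, rfl⟩ := Nat.exists_eq_add_of_le' (show 1 ≤ p by omega)
  have h := (isOddNonneg_avgConv_one_pow_mul_sub k m).nonneg one_pos
  rw [avgConv_pow, avgConv_pow, one_add_one_eq_two, Pi.sub_apply, LinearMap.smul_apply,
    LinearMap.smul_apply, Pi.smul_apply, Pi.smul_apply, chainConv_two_pow_realSign, sub_nonneg,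
    smul_eq_mul, smul_eq_mul, inv_mul_le_iff₀ (by positivity)] at h
  calc (chainCount (k + 1) m 1 : ℝ) = (chainConv (k + 1) ^ m) realSign 1 := by
        exact_mod_cast chainCount_eq_chainConv_pow (k + 1) m one_pos
    _ ≤ ((k + 1 : ℕ) : ℝ) ^ m * (((2 : ℕ) ^ (k * m) : ℝ)⁻¹ * (k * m).choose (k * m / 2)) := h
    _ ≤ ((k + 1 : ℕ) : ℝ) ^ m *
          (((2 : ℕ) ^ (k * m) : ℝ)⁻¹ * (2 ^ (k * m) / √(Real.pi / 2 * (k * m : ℕ)))) := by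
        gcongr
        exact choose_half_le (Nat.mul_pos (by omega) hm)
    _ = √(2 / Real.pi) * (k + 1 : ℕ) ^ m / √((((k + 1 : ℕ) : ℝ) - 1) * m) := by
        rw [← inv_div Real.pi 2, Real.sqrt_inv, Real.sqrt_mul (by positivity)]
        push_cast
        rw [add_sub_cancel_right]
        field_simp

end ChainCount

/-! ## Numbers of generators of modules -/

section RelGenRank

variable {F : Type*} (Q : Type*) {W U : Type*} [Field F] [Group Q] [AddCommGroup W] [Module F W]
  [DistribMulAction Q W] [AddCommGroup U] [Module F U] [DistribMulAction Q U]

/-- The subspace `S` is a `Q`-submodule. -/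
def IsStable (S : Submodule F W) : Prop :=
  ∀ g : Q, ∀ w ∈ S, g • w ∈ S

variable (F) in
/-- The `Q`-submodule generated by a set. -/
def orbitSpan (X : Set W) : Submodule F W :=
  Submodule.span F {w : W | ∃ g : Q, ∃ t ∈ X, w = g • t}

/-- The minimal number of elements of `S` that together with `T` generate a `Q`-module containing
`S`; for `Q`-submodules `T ≤ S` this is the number of generators of `S / T`. -/
noncomputable def relGenRank (S T : Submodule F W) : ℕ :=
  sInf {m : ℕ | ∃ X : Finset W, X.card = m ∧ (X : Set W) ⊆ S ∧ S ≤ T ⊔ orbitSpan F Q X}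

variable {Q}

namespace IsStable

variable {S T : Submodule F W}

theorem subgroup (hS : IsStable Q S) (R : Subgroup Q) : IsStable R S := fun g => hS g

theorem bot : IsStable Q (⊥ : Submodule F W) := by
  rintro g w rfl
  exact smul_zero g

theorem inf (hS : IsStable Q S) (hT : IsStable Q T) : IsStable Q (S ⊓ T) :=
  fun g w hw => ⟨hS g w hw.1, hT g w hw.2⟩

theorem sup (hS : IsStable Q S) (hT : IsStable Q T) : IsStable Q (S ⊔ T) := by
  intro g w hw
  obtain ⟨s, hs, t, ht, rfl⟩ := Submodule.mem_sup.1 hw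
  rw [smul_add]
  exact Submodule.add_mem_sup (hS g s hs) (hT g t ht)

theorem map (hS : IsStable Q S) {f : W →ₗ[F] U} (hf : ∀ (g : Q) w, f (g • w) = g • f w) :
    IsStable Q (S.map f) := by
  rintro g _ ⟨s, hs, rfl⟩
  exact ⟨g • s, hS g s hs, hf g s⟩

theorem ker {f : W →ₗ[F] U} (hf : ∀ (g : Q) w, f (g • w) = g • f w) :
    IsStable Q (LinearMap.ker f) := by
  intro g w hw
  rw [LinearMap.mem_ker] at hw ⊢
  rw [hf, hw, smul_zero]

theorem orbitSpan [SMulCommClass Q F W] (X : Set W) : IsStable Q (orbitSpan F Q X) := by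
  intro g
  suffices h : _root_.orbitSpan F Q X ≤
      (_root_.orbitSpan F Q X).comap (DistribSMul.toLinearMap F W g) from h
  refine Submodule.span_le.2 ?_
  rintro _ ⟨g', t, ht, rfl⟩
  exact Submodule.subset_span ⟨g * g', t, ht, (mul_smul g g' t).symm⟩

end IsStable

theorem span_le_orbitSpan (X : Set W) : Submodule.span F X ≤ orbitSpan F Q X :=
  Submodule.span_mono fun x hx => ⟨1, x, hx, (one_smul Q x).symm⟩

theorem subset_orbitSpan (X : Set W) : X ⊆ orbitSpan F Q X :=
  Submodule.span_le.1 (span_le_orbitSpan X)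

theorem orbitSpan_mono {X Y : Set W} (h : X ⊆ Y) : orbitSpan F Q X ≤ orbitSpan F Q Y :=
  Submodule.span_mono fun _ ⟨g, t, ht, hw⟩ => ⟨g, t, h ht, hw⟩

theorem orbitSpan_subgroup_le (R : Subgroup Q) (X : Set W) : orbitSpan F R X ≤ orbitSpan F Q X :=
  Submodule.span_mono fun _ ⟨g, t, ht, hw⟩ => ⟨g, t, ht, hw⟩

theorem orbitSpan_le {X : Set W} {S : Submodule F W} (hS : IsStable Q S) (h : X ⊆ S) :
    orbitSpan F Q X ≤ S := by
  refine Submodule.span_le.2 ?_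
  rintro _ ⟨g, t, ht, rfl⟩
  exact hS g t (h ht)

theorem map_orbitSpan {f : W →ₗ[F] U} (hf : ∀ (g : Q) w, f (g • w) = g • f w) (X : Set W) :
    (orbitSpan F Q X).map f = orbitSpan F Q (f '' X) := by
  rw [orbitSpan, Submodule.map_span, orbitSpan]
  congr 1
  ext u
  constructor
  · rintro ⟨_, ⟨g, t, ht, rfl⟩, rfl⟩
    exact ⟨g, f t, ⟨t, ht, rfl⟩, hf g t⟩
  · rintro ⟨g, _, ⟨t, ht, rfl⟩, rfl⟩
    exact ⟨g • t, ⟨g, t, ht, rfl⟩, hf g t⟩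

theorem relGenRank_le {S T : Submodule F W} {c : ℕ} (X : Finset W) (hc : X.card ≤ c)
    (hX : (X : Set W) ⊆ S) (h : S ≤ T ⊔ orbitSpan F Q X) : relGenRank Q S T ≤ c :=
  le_trans (Nat.sInf_le ⟨X, rfl, hX, h⟩) hc

variable [FiniteDimensional F W]

theorem exists_finset_card_eq_finrank (S : Submodule F W) :
    ∃ X : Finset W, X.card = Module.finrank F S ∧ Submodule.span F X = S := by
  rw [Module.finrank_eq_spanFinrank_of_free, Submodule.spanFinrank_top]
  exact (IsNoetherian.noetherian S).exists_span_finset_card_eq_spanFinrank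

variable (Q) in
theorem exists_finset_card_eq_relGenRank (S T : Submodule F W) :
    ∃ X : Finset W, X.card = relGenRank Q S T ∧ (X : Set W) ⊆ S ∧ S ≤ T ⊔ orbitSpan F Q X := by
  obtain ⟨X, -, hX⟩ := exists_finset_card_eq_finrank S
  have hgen : S ≤ T ⊔ orbitSpan F Q X := hX.ge.trans ((span_le_orbitSpan _).trans le_sup_right)
  exact Nat.sInf_mem (s := {m | ∃ X : Finset W, X.card = m ∧ (X : Set W) ⊆ S ∧
    S ≤ T ⊔ orbitSpan F Q X}) ⟨_, X, rfl, Submodule.span_le.1 hX.le, hgen⟩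

theorem relGenRank_anti_right (S : Submodule F W) {T T' : Submodule F W} (h : T ≤ T') :
    relGenRank Q S T' ≤ relGenRank Q S T := by
  obtain ⟨X, hcard, hX, hS⟩ := exists_finset_card_eq_relGenRank Q S T
  exact relGenRank_le X hcard.le hX (hS.trans (sup_le_sup_right h _))

theorem relGenRank_le_relGenRank_subgroup (R : Subgroup Q) (S T : Submodule F W) :
    relGenRank Q S T ≤ relGenRank R S T := by
  obtain ⟨X, hcard, hX, hS⟩ := exists_finset_card_eq_relGenRank R S T
  exact relGenRank_le X hcard.le hX (hS.trans (sup_le_sup_left (orbitSpan_subgroup_le R _) _))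

theorem relGenRank_triangle {S T : Submodule F W} (h : T ≤ S) (V : Submodule F W) :
    relGenRank Q S V ≤ relGenRank Q S T + relGenRank Q T V := by
  classical
  obtain ⟨X, hXcard, hX, hS⟩ := exists_finset_card_eq_relGenRank Q S T
  obtain ⟨Y, hYcard, hY, hT⟩ := exists_finset_card_eq_relGenRank Q T V
  refine relGenRank_le (X ∪ Y) ((Finset.card_union_le X Y).trans (by omega)) ?_ ?_
  · rw [Finset.coe_union]
    exact Set.union_subset hX (hY.trans h)
  · rw [Finset.coe_union]
    calc S ≤ T ⊔ orbitSpan F Q X := hS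
      _ ≤ (V ⊔ orbitSpan F Q Y) ⊔ orbitSpan F Q X := sup_le_sup_right hT _
      _ ≤ V ⊔ orbitSpan F Q (X ∪ Y) := by
        rw [sup_assoc]
        exact sup_le_sup_left (sup_le (orbitSpan_mono Set.subset_union_right)
          (orbitSpan_mono Set.subset_union_left)) _

theorem relGenRank_add_finrank_le {S T : Submodule F W} (h : T ≤ S) :
    relGenRank Q S T + Module.finrank F T ≤ Module.finrank F S := by
  obtain ⟨C, hC⟩ := exists_isCompl T
  have sup_eq : T ⊔ C ⊓ S = S := by rw [← sup_inf_assoc_of_le C h, hC.sup_eq_top, top_inf_eq]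
  have inf_eq : T ⊓ (C ⊓ S) = ⊥ := by rw [← inf_assoc, hC.inf_eq_bot, bot_inf_eq]
  obtain ⟨X, hcard, hX⟩ := exists_finset_card_eq_finrank (C ⊓ S)
  have hle : relGenRank Q S T ≤ Module.finrank F ↥(C ⊓ S) :=
    relGenRank_le X hcard.le ((Submodule.span_le.1 hX.le).trans inf_le_right)
      (sup_eq.ge.trans (sup_le_sup_left (hX.ge.trans (span_le_orbitSpan _)) _))
  have := Submodule.finrank_sup_add_finrank_inf_eq T (C ⊓ S)
  rw [sup_eq, inf_eq, finrank_bot] at this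
  omega

theorem sum_relGenRank_add_finrank_le {T : ℕ → Submodule F W} (hT : Antitone T) (k : ℕ) :
    ∑ j ∈ Finset.range k, relGenRank Q (T j) (T (j + 1)) + Module.finrank F (T k) ≤
      Module.finrank F (T 0) := by
  induction k with
  | zero => simp
  | succ k ih =>
    rw [Finset.sum_range_succ]
    have := relGenRank_add_finrank_le (Q := Q) (hT (Nat.le_add_right k 1))
    omega

theorem relGenRank_map_le {f : W →ₗ[F] U} (hf : ∀ (g : Q) w, f (g • w) = g • f w)
    (S : Submodule F W) : relGenRank Q (S.map f) ⊥ ≤ relGenRank Q S ⊥ := by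
  classical
  obtain ⟨X, hcard, hX, hS⟩ := exists_finset_card_eq_relGenRank Q S ⊥
  refine relGenRank_le (X.image f) (Finset.card_image_le.trans hcard.le) ?_ ?_
  · rw [Finset.coe_image]
    exact Set.image_mono hX
  · rw [bot_sup_eq] at hS ⊢
    rw [Finset.coe_image, ← map_orbitSpan hf]
    exact Submodule.map_mono hS

variable [FiniteDimensional F U]

omit [FiniteDimensional F W] in
theorem relGenRank_inf_ker_le {f : W →ₗ[F] U} (hf : ∀ (g : Q) w, f (g • w) = g • f w)
    {S : Submodule F W} (hS : IsStable Q S) :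
    relGenRank Q S (S ⊓ LinearMap.ker f) ≤ relGenRank Q (S.map f) ⊥ := by
  classical
  obtain ⟨X, hcard, hX, hgen⟩ := exists_finset_card_eq_relGenRank Q (S.map f) ⊥
  obtain ⟨Y, hYS, hinj, rfl⟩ :=
    Finset.exists_subset_injOn_image_eq_of_surjOn (f := f) (S : Set W) X hX
  rw [Finset.card_image_of_injOn hinj] at hcard
  refine relGenRank_le Y hcard.le hYS fun s hs => ?_
  rw [bot_sup_eq, Finset.coe_image, ← map_orbitSpan hf] at hgen
  obtain ⟨t, ht, hts⟩ := hgen (Submodule.mem_map_of_mem hs)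
  rw [← sub_add_cancel s t]
  refine Submodule.add_mem_sup ⟨S.sub_mem hs (orbitSpan_le hS hYS ht), ?_⟩ ht
  exact LinearMap.sub_mem_ker_iff.2 hts.symm

theorem relGenRank_le_map_add_inf_ker {f : W →ₗ[F] U} (hf : ∀ (g : Q) w, f (g • w) = g • f w)
    {S : Submodule F W} (hS : IsStable Q S) :
    relGenRank Q S ⊥ ≤ relGenRank Q (S.map f) ⊥ + relGenRank Q (S ⊓ LinearMap.ker f) ⊥ :=
  (relGenRank_triangle inf_le_left ⊥).trans (by gcongr; exact relGenRank_inf_ker_le hf hS)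

end RelGenRank

theorem dMod_eq_relGenRank {G F W : Type*} [Group G] [Field F] [AddCommGroup W] [Module F W]
    [DistribMulAction G W] {S : Submodule F W} (hS : IsStable G S) :
    dMod G S = relGenRank G S ⊥ := by
  refine congrArg sInf (Set.ext fun m => exists_congr fun X => and_congr_right fun _ =>
    and_congr_right fun hX => ?_)
  rw [bot_sup_eq]
  exact ⟨Eq.ge, (orbitSpan_le hS hX).antisymm⟩

section LeadSub

variable {F Q W U : Type*} [Field F] [Group Q] [AddCommGroup W] [Module F W]
  [DistribMulAction Q W] [SMulCommClass Q F W] [AddCommGroup U] [Module F U]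

/-- The subspace of vectors whose translates by `x, …, x ^ i` are all killed by `ρ`. -/
def shiftKer (ρ : W →ₗ[F] U) (x : Q) (i : ℕ) : Submodule F W :=
  ⨅ k < i, LinearMap.ker (ρ ∘ₗ DistribSMul.toLinearMap F W (x ^ (k + 1)))

/-- The `i`-th leading submodule of `S`: read `w` as the sequence of components `ρ (x ^ k • w)`;
then these are the components at `k = 0` of the elements of `S` with vanishing components at
`k = 1, …, i`. -/
def leadSub (ρ : W →ₗ[F] U) (x : Q) (S : Submodule F W) (i : ℕ) : Submodule F U :=
  (S ⊓ shiftKer ρ x i).map ρ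

variable {ρ : W →ₗ[F] U} {x : Q} {S T : Submodule F W}

theorem mem_shiftKer {i : ℕ} {w : W} :
    w ∈ shiftKer ρ x i ↔ ∀ k < i, ρ (x ^ (k + 1) • w) = 0 := by
  simp [shiftKer]

theorem shiftKer_antitone (ρ : W →ₗ[F] U) (x : Q) : Antitone (shiftKer ρ x) :=
  fun _ _ h => biInf_mono fun _ hk => hk.trans_le h

theorem leadSub_mono (ρ : W →ₗ[F] U) (x : Q) (h : S ≤ T) {i j : ℕ} (hji : j ≤ i) :
    leadSub ρ x S i ≤ leadSub ρ x T j :=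
  Submodule.map_mono (inf_le_inf h (shiftKer_antitone ρ x hji))

theorem leadSub_eq_bot {N : ℕ} (hsep : S ⊓ shiftKer ρ x N = ⊥) : leadSub ρ x S N = ⊥ := by
  rw [leadSub, hsep, Submodule.map_bot]

theorem IsStable.leadSub {R : Subgroup Q} [R.Normal] [DistribMulAction R U]
    (hρ : ∀ (r : R) (w : W), ρ (r • w) = r • ρ w) (hS : IsStable Q S) (x : Q) (i : ℕ) :
    IsStable R (leadSub ρ x S i) := by
  refine IsStable.map ((hS.subgroup R).inf fun r w hw => ?_) hρ
  rw [mem_shiftKer] at hw ⊢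
  intro k hk
  let r' : R := ⟨x ^ (k + 1) * r * (x ^ (k + 1))⁻¹, Subgroup.Normal.conj_mem ‹_› _ r.2 _⟩
  have : x ^ (k + 1) • r • w = r' • x ^ (k + 1) • w := by
    simp only [r', Subgroup.smul_def, smul_smul, inv_mul_cancel_right]
  rw [this, hρ, hw k hk, smul_zero]

theorem le_of_le_sup_succ {α : Type*} [SemilatticeSup α] [OrderBot α] {A B : ℕ → α} {N : ℕ}
    (hB : Antitone B) (hN : A N = ⊥) (h : ∀ i < N, A i ≤ B i ⊔ A (i + 1)) {i : ℕ} (hi : i ≤ N) :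
    A i ≤ B i := by
  induction hi using Nat.decreasingInduction with
  | self => rw [hN]; exact bot_le
  | of_succ i hi ih => exact (h i hi).trans (sup_le le_rfl (ih.trans (hB i.le_succ)))

theorem le_of_leadSub_le (hS : IsStable Q S) (hT : IsStable Q T) (hTS : T ≤ S) {N : ℕ}
    (hsep : S ⊓ shiftKer ρ x N = ⊥) (hlead : ∀ i < N, leadSub ρ x S i ≤ leadSub ρ x T i) :
    S ≤ T := by
  suffices h : ∀ i ≤ N, S ⊓ shiftKer ρ x i ≤ T by
    simpa [shiftKer] using h 0 N.zero_le
  intro i hi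
  induction hi using Nat.decreasingInduction with
  | self => exact hsep.le.trans bot_le
  | of_succ i hi ih =>
    intro s hs
    obtain ⟨t, ⟨ht, ht_ker⟩, hts⟩ := hlead i hi (Submodule.mem_map_of_mem hs)
    obtain ⟨hs, hs_ker⟩ := hs
    rw [SetLike.mem_coe, mem_shiftKer] at ht_ker
    rw [SetLike.mem_coe, mem_shiftKer] at hs_ker
    have shift_mem : x⁻¹ • (s - t) ∈ T := by
      refine ih ⟨hS _ _ (S.sub_mem hs (hTS ht)), mem_shiftKer.2 fun k hk => ?_⟩
      rw [smul_smul, pow_succ, mul_inv_cancel_right, smul_sub, map_sub, sub_eq_zero]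
      rcases k with _ | k
      · simpa using hts.symm
      · rw [hs_ker k (by omega), ht_ker k (by omega)]
    simpa using T.add_mem (hT x _ shift_mem) ht

theorem relGenRank_le_sum_leadSub [FiniteDimensional F U] {R : Subgroup Q} [R.Normal]
    [DistribMulAction R U] (hρ : ∀ (r : R) (w : W), ρ (r • w) = r • ρ w)
    (hS : IsStable Q S) (hT : IsStable Q T) (hTS : T ≤ S) {N : ℕ}
    (hsep : S ⊓ shiftKer ρ x N = ⊥) :
    relGenRank Q S T ≤ ∑ i ∈ Finset.range N,
      relGenRank R (leadSub ρ x S i) (leadSub ρ x T i ⊔ leadSub ρ x S (i + 1)) := by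
  classical
  choose X hXcard hX hgen using fun i => exists_finset_card_eq_relGenRank R (leadSub ρ x S i)
    (leadSub ρ x T i ⊔ leadSub ρ x S (i + 1))
  choose Y hYS hYinj hYX using fun i =>
    Finset.exists_subset_injOn_image_eq_of_surjOn (f := ρ) (S ⊓ shiftKer ρ x i : Submodule F W)
      (X i) (hX i)
  set Z := (Finset.range N).biUnion Y with hZ
  have hZS : (Z : Set W) ⊆ S := by
    simp only [hZ, Finset.coe_biUnion, Set.iUnion_subset_iff]
    exact fun i _ => (hYS i).trans inf_le_left
  refine relGenRank_le Z ?_ hZS ?_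
  · refine Finset.card_biUnion_le.trans (Finset.sum_le_sum fun i _ => ?_)
    rw [← hXcard, ← hYX, Finset.card_image_of_injOn (hYinj i)]
  · have hstab : IsStable Q (T ⊔ orbitSpan F Q (Z : Set W)) := hT.sup (.orbitSpan _)
    refine le_of_leadSub_le hS hstab (sup_le hTS (orbitSpan_le hS hZS)) hsep fun i hi =>
      le_of_le_sup_succ (fun _ _ => leadSub_mono ρ x le_rfl) (leadSub_eq_bot hsep)
        (fun i hi => ?_) hi.le
    have hXlead : (X i : Set U) ⊆ leadSub ρ x (T ⊔ orbitSpan F Q (Z : Set W)) i := by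
      rw [← hYX, Finset.coe_image]
      refine Set.image_mono fun y hy =>
        ⟨Submodule.mem_sup_right (subset_orbitSpan _ ?_), (hYS i hy).2⟩
      exact Finset.mem_coe.2 (Finset.mem_biUnion.2 ⟨i, Finset.mem_range.2 hi, hy⟩)
    refine (hgen i).trans (sup_le (sup_le ?_ le_sup_right) ?_)
    · exact (leadSub_mono ρ x le_sup_left le_rfl).trans le_sup_left
    · exact (orbitSpan_le (hstab.leadSub hρ x i) hXlead).trans le_sup_left

end LeadSub

/-! ## Systems of imprimitivity -/

section Imprimitivity

theorem smul_mem_orbit_iff {G α : Type*} [Group G] [MulAction G α] {g : G} {a b : α} :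
    g • a ∈ MulAction.orbit G b ↔ a ∈ MulAction.orbit G b := by
  rw [← MulAction.orbit_eq_iff, MulAction.orbit_smul, MulAction.orbit_eq_iff]

variable {F Q W Ω : Type*} [Field F] [Group Q] [AddCommGroup W] [Module F W]
  [DistribMulAction Q W] [MulAction Q Ω] [Fintype Ω]

variable (Q) in
/-- A system of imprimitivity: `W` is the direct sum of subspaces that `Q` permutes in the way it
permutes the points of `Ω`. The subspaces are recorded through the projections onto them. -/
structure IsImprimitivitySystem (π : Ω → Module.End F W) : Prop extends
    CompleteOrthogonalIdempotents π where
  smul_proj : ∀ (g : Q) (ω : Ω) (w : W), g • π ω w = π (g • ω) (g • w)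

open Classical in
/-- The projection onto the sum of the summands indexed by `A`. -/
noncomputable def projOn (π : Ω → Module.End F W) (A : Set Ω) : Module.End F W :=
  ∑ ω with ω ∈ A, π ω

/-- The subspace of vectors all of whose components outside `A` vanish. -/
def supportedOn (π : Ω → Module.End F W) (A : Set Ω) : Submodule F W :=
  ⨅ ω ∉ A, LinearMap.ker (π ω)

omit [Fintype Ω] in
theorem mem_supportedOn {π : Ω → Module.End F W} {A : Set Ω} {w : W} :
    w ∈ supportedOn π A ↔ ∀ ω ∉ A, π ω w = 0 := by
  simp [supportedOn]

namespace IsImprimitivitySystem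

variable {π : Ω → Module.End F W} {A : Set Ω} {ω : Ω}

theorem subgroup (h : IsImprimitivitySystem Q π) (R : Subgroup Q) : IsImprimitivitySystem R π where
  __ := h
  smul_proj r := h.smul_proj (r : Q)

theorem sum_proj (h : IsImprimitivitySystem Q π) (w : W) : ∑ ω, π ω w = w := by
  rw [← LinearMap.sum_apply, h.complete, Module.End.one_apply]

theorem eq_zero (h : IsImprimitivitySystem Q π) {w : W} (hw : ∀ ω, π ω w = 0) : w = 0 := by
  rw [← h.sum_proj w]
  exact Finset.sum_eq_zero fun ω _ => hw ω

theorem ext (h : IsImprimitivitySystem Q π) {v w : W} (hvw : ∀ ω, π ω v = π ω w) : v = w :=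
  sub_eq_zero.1 (h.eq_zero fun ω => by rw [map_sub, hvw, sub_self])

theorem proj_smul (h : IsImprimitivitySystem Q π) (g : Q) (ω : Ω) (w : W) :
    π ω (g • w) = g • π (g⁻¹ • ω) w := by
  rw [h.smul_proj, smul_inv_smul]

theorem proj_projOn_of_mem (h : IsImprimitivitySystem Q π) (hω : ω ∈ A) (w : W) :
    π ω (projOn π A w) = π ω w := by
  classical
  exact LinearMap.congr_fun (h.mul_sum_of_mem (Finset.mem_filter_univ ω |>.2 hω)) w

theorem proj_projOn_of_notMem (h : IsImprimitivitySystem Q π) (hω : ω ∉ A) (w : W) :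
    π ω (projOn π A w) = 0 := by
  classical
  exact LinearMap.congr_fun (h.mul_sum_of_notMem (mt (Finset.mem_filter_univ ω).1 hω)) w

theorem range_projOn_le (h : IsImprimitivitySystem Q π) (A : Set Ω) :
    LinearMap.range (projOn π A) ≤ supportedOn π A := by
  rintro _ ⟨w, rfl⟩
  exact mem_supportedOn.2 fun ω hω => h.proj_projOn_of_notMem hω w

theorem supportedOn_singleton_le (h : IsImprimitivitySystem Q π) (ω : Ω) :
    supportedOn π {ω} ≤ LinearMap.range (π ω) := by
  intro w hw
  refine ⟨w, ?_⟩
  conv_rhs => rw [← h.sum_proj w]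
  exact (Fintype.sum_eq_single ω fun ω' hω' => mem_supportedOn.1 hw ω' hω').symm

theorem supportedOn_empty (h : IsImprimitivitySystem Q π) : supportedOn π ∅ = ⊥ :=
  (Submodule.eq_bot_iff _).2 fun _ hw =>
    h.eq_zero fun ω => mem_supportedOn.1 hw ω (Set.notMem_empty ω)

theorem projOn_orbit_smul (h : IsImprimitivitySystem Q π) (ω : Ω) (g : Q) (w : W) :
    projOn π (MulAction.orbit Q ω) (g • w) = g • projOn π (MulAction.orbit Q ω) w := by
  refine h.ext fun ω' => ?_
  rw [h.proj_smul g]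
  by_cases hω' : ω' ∈ MulAction.orbit Q ω
  · rw [h.proj_projOn_of_mem hω', h.proj_projOn_of_mem (smul_mem_orbit_iff.2 hω'),
      h.proj_smul]
  · rw [h.proj_projOn_of_notMem hω',
      h.proj_projOn_of_notMem (mt smul_mem_orbit_iff.1 hω'), smul_zero]

theorem supportedOn_orbit_inf_shiftKer [SMulCommClass Q F W] (h : IsImprimitivitySystem Q π)
    {R : Subgroup Q} {x : Q} {N : ℕ} (hx : ∀ g, ∃ r ∈ R, ∃ k < N, g = r * x ^ (k + 1)) (ω : Ω) :
    supportedOn π (MulAction.orbit Q ω) ⊓ shiftKer (projOn π (MulAction.orbit R ω)) x N = ⊥ := by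
  refine (Submodule.eq_bot_iff _).2 fun w ⟨hw, hker⟩ => h.eq_zero fun ω' => ?_
  by_cases hω' : ω' ∈ MulAction.orbit Q ω
  · obtain ⟨g, rfl⟩ := hω'
    obtain ⟨r, hr, k, hk, hg⟩ := hx g⁻¹
    have component := h.proj_projOn_of_mem (A := MulAction.orbit R ω) (ω := r⁻¹ • ω)
      ⟨⟨r⁻¹, R.inv_mem hr⟩, rfl⟩ (x ^ (k + 1) • w)
    rw [mem_shiftKer.1 hker k hk, map_zero, h.proj_smul, eq_comm, smul_eq_zero_iff_eq, smul_smul,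
      ← mul_inv_rev, ← hg, inv_inv] at component
    exact component
  · exact mem_supportedOn.1 hw ω' hω'

end IsImprimitivitySystem

end Imprimitivity

/-! ## The generator bound along a chain for a `p`-group -/

/-- The `s`-th point of the `t`-th hook of the rectangle `[0, l) × [0, p)`: starting at `(0, t)`,
the hook runs to `(l - 1 - t, t)` in the first coordinate and then in the second one to
`(l - 1 - t, p - 1)`. -/
def hook (l t s : ℕ) : ℕ × ℕ :=
  (min s (l - 1 - t), t + (s - (l - 1 - t)))

theorem hook_mono (l t : ℕ) : Monotone (hook l t) := fun s s' h =>
  Prod.mk_le_mk.2 ⟨by omega, by omega⟩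

theorem hook_succ (l t s : ℕ) : hook l t (s + 1) = ((hook l t s).1 + 1, (hook l t s).2) ∨
    hook l t (s + 1) = ((hook l t s).1, (hook l t s).2 + 1) := by
  simp only [hook, Prod.mk.injEq]
  omega

theorem sum_rectangle_eq_sum_hook {M : Type*} [AddCommMonoid M] (l p : ℕ) (f : ℕ × ℕ → M) :
    ∑ j ∈ Finset.range l, ∑ i ∈ Finset.range p, f (j, i) =
      ∑ t ∈ Finset.range (min l p), ∑ s ∈ Finset.range (l + p - 1 - 2 * t), f (hook l t s) := by
  rw [Finset.sum_sigma', Finset.sum_sigma']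
  -- The involution `(t, s) ↦ hook l t s` exchanges the two index sets.
  refine Finset.sum_bij' (fun q _ => ⟨(hook l q.1 q.2).1, (hook l q.1 q.2).2⟩)
    (fun q _ => ⟨(hook l q.1 q.2).1, (hook l q.1 q.2).2⟩) ?_ ?_ ?_ ?_ ?_ <;>
  · rintro ⟨j, i⟩ h
    simp only [Finset.mem_sigma, Finset.mem_range, Sigma.mk.injEq, heq_eq_eq, hook] at h ⊢
    first
    | omega
    | congr 2 <;> omega

section Groups

variable {Q Ω : Type*} [Group Q] [MulAction Q Ω] {p : ℕ} [hp : Fact p.Prime]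

omit hp in
theorem card_orbit_eq_index_mul {R : Subgroup Q} {ω : Ω} (h : MulAction.stabilizer Q ω ≤ R) :
    Nat.card (MulAction.orbit Q ω) = R.index * Nat.card (MulAction.orbit R ω) := by
  have hstab : MulAction.stabilizer R ω = (MulAction.stabilizer Q ω).subgroupOf R := rfl
  rw [Nat.card_coe_set_eq, Nat.card_coe_set_eq, ← MulAction.index_stabilizer,
    ← MulAction.index_stabilizer, hstab, ← Subgroup.relIndex_mul_index h, mul_comm]
  rfl

theorem exists_normal_ge_of_index_eq_pow_succ [Finite Q] (hQ : IsPGroup p Q) {K : Subgroup Q}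
    {m : ℕ} (hK : K.index = p ^ (m + 1)) : ∃ R : Subgroup Q, K ≤ R ∧ R.Normal ∧ R.index = p := by
  obtain ⟨e, he⟩ := IsPGroup.iff_card.1 (hQ.to_subgroup K)
  have hcard : Nat.card Q = p ^ (m + 1 + e) := by
    rw [← K.index_mul_card, hK, he, ← pow_add]
  obtain ⟨R, hR, hKR⟩ := Sylow.exists_subgroup_card_pow_prime_le p (m := m + e)
    (hcard ▸ pow_dvd_pow p (by omega)) K he (by omega)
  have hindex : R.index = p := by
    have h := R.index_mul_card
    rw [hR, hcard, show m + 1 + e = (m + e) + 1 by ring, pow_succ'] at h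
    exact Nat.eq_of_mul_eq_mul_right (pow_pos hp.out.pos _) h
  refine ⟨R, hKR, Subgroup.normal_of_index_eq_minFac_card ?_, hindex⟩
  rw [hindex, hcard, hp.out.pow_minFac (by omega)]

theorem exists_eq_mul_pow_of_index_eq {R : Subgroup Q} [R.Normal] (hR : R.index = p) :
    ∃ x : Q, ∀ g, ∃ r ∈ R, ∃ k < p, g = r * x ^ (k + 1) := by
  obtain ⟨x, hx⟩ : ∃ x, x ∉ R := by
    by_contra! h
    rw [(Subgroup.eq_top_iff' R).2 h, Subgroup.index_top] at hR
    exact hp.out.one_lt.ne hR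
  refine ⟨x, fun g => ?_⟩
  obtain ⟨k, hk⟩ := (Submonoid.mem_powers_iff _ _).1 (mem_powers_of_prime_card (p := p) hR
    (g := (x : Q ⧸ R)) (g' := ((g * x⁻¹ : Q) : Q ⧸ R)) (by rwa [Ne, QuotientGroup.eq_one_iff]))
  have hxp : (x : Q ⧸ R) ^ p = 1 := hR ▸ pow_card_eq_one'
  refine ⟨g * x⁻¹ * (x ^ (k % p))⁻¹, ?_, k % p, Nat.mod_lt _ hp.out.pos, by rw [pow_succ']; group⟩
  rw [← QuotientGroup.eq_one_iff, QuotientGroup.mk_mul, QuotientGroup.mk_inv _ (x ^ _),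
    QuotientGroup.mk_pow, ← pow_eq_pow_mod k hxp, hk, mul_inv_cancel]

theorem exists_normal_card_orbit_eq [Finite Q] (hQ : IsPGroup p Q) {ω : Ω} {m : ℕ}
    (horb : Nat.card (MulAction.orbit Q ω) = p ^ (m + 1)) :
    ∃ R : Subgroup Q, R.Normal ∧ R.index = p ∧ Nat.card (MulAction.orbit R ω) = p ^ m := by
  have hstabilizer : (MulAction.stabilizer Q ω).index = p ^ (m + 1) := by
    rw [MulAction.index_stabilizer, ← Nat.card_coe_set_eq, horb]
  obtain ⟨R, hle, hR, hindex⟩ := exists_normal_ge_of_index_eq_pow_succ hQ hstabilizer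
  refine ⟨R, hR, hindex, ?_⟩
  rw [card_orbit_eq_index_mul hle, hindex, pow_succ'] at horb
  exact Nat.eq_of_mul_eq_mul_left hp.out.pos horb

end Groups

section Chain

variable {F W Ω : Type*} [Field F] [AddCommGroup W] [Module F W] [FiniteDimensional F W]

theorem sum_rectangle_relGenRank_le {Q : Type*} [Group Q] [DistribMulAction Q W]
    (L : ℕ × ℕ → Submodule F W) (l p : ℕ) :
    ∑ j ∈ Finset.range l, ∑ i ∈ Finset.range p,
        relGenRank Q (L (j, i)) (L (j + 1, i) ⊔ L (j, i + 1)) ≤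
      ∑ t ∈ Finset.range (min l p), ∑ s ∈ Finset.range (l + p - 1 - 2 * t),
        relGenRank Q (L (hook l t s)) (L (hook l t (s + 1))) := by
  rw [sum_rectangle_eq_sum_hook l p fun q =>
    relGenRank Q (L q) (L (q.1 + 1, q.2) ⊔ L (q.1, q.2 + 1))]
  refine Finset.sum_le_sum fun t _ => Finset.sum_le_sum fun s _ => relGenRank_anti_right _ ?_
  rcases hook_succ l t s with h | h
  · exact h ▸ le_sup_left
  · exact h ▸ le_sup_right

theorem IsImprimitivitySystem.sum_relGenRank_chain_le {Q : Type*} [Group Q] [Finite Q]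
    [DistribMulAction Q W] [SMulCommClass Q F W] [Fintype Ω] [MulAction Q Ω]
    {π : Ω → Module.End F W} (hπ : IsImprimitivitySystem Q π) {p : ℕ} [Fact p.Prime]
    (hQ : IsPGroup p Q) {ω : Ω} {m : ℕ} (horb : Nat.card (MulAction.orbit Q ω) = p ^ m)
    {T : ℕ → Submodule F W} (hT : Antitone T) (hstab : ∀ j, IsStable Q (T j))
    (hsupp : T 0 ≤ supportedOn π (MulAction.orbit Q ω)) (l : ℕ) :
    ∑ j ∈ Finset.range l, relGenRank Q (T j) (T (j + 1)) ≤
      Module.finrank F (LinearMap.range (π ω)) * chainCount p m l := by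
  induction m generalizing Q l T with
  | zero =>
    have horbit : MulAction.orbit Q ω = {ω} := by
      rw [pow_zero, Nat.card_coe_set_eq, Set.ncard_eq_one] at horb
      obtain ⟨ω', h⟩ := horb
      rw [h, Set.mem_singleton_iff.1 (h ▸ MulAction.mem_orbit_self ω : ω ∈ ({ω'} : Set Ω))]
    rw [horbit] at hsupp
    rw [chainCount, mul_one]
    exact (Nat.le_add_right _ _).trans ((sum_relGenRank_add_finrank_le hT l).trans
      (Submodule.finrank_mono (hsupp.trans (hπ.supportedOn_singleton_le ω))))
  | succ m ih =>
    obtain ⟨R, hR, hindex, horbR⟩ := exists_normal_card_orbit_eq hQ horb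
    obtain ⟨x, hx⟩ := exists_eq_mul_pow_of_index_eq hindex
    set ρ := projOn π (MulAction.orbit R ω)
    have hρ : ∀ (r : R) w, ρ (r • w) = r • ρ w := (hπ.subgroup R).projOn_orbit_smul ω
    have hsep : ∀ j, T j ⊓ shiftKer ρ x p = ⊥ := fun j => eq_bot_mono
      (inf_le_inf_right _ ((hT j.zero_le).trans hsupp)) (hπ.supportedOn_orbit_inf_shiftKer hx ω)
    let L : ℕ × ℕ → Submodule F W := fun q => leadSub ρ x (T q.1) q.2
    have hL : Antitone L := fun q q' h => leadSub_mono ρ x (hT h.1) h.2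
    calc ∑ j ∈ Finset.range l, relGenRank Q (T j) (T (j + 1))
        ≤ ∑ j ∈ Finset.range l, ∑ i ∈ Finset.range p,
            relGenRank R (L (j, i)) (L (j + 1, i) ⊔ L (j, i + 1)) :=
          Finset.sum_le_sum fun j _ => relGenRank_le_sum_leadSub hρ (hstab j) (hstab (j + 1))
            (hT j.le_succ) (hsep j)
      _ ≤ ∑ t ∈ Finset.range (min l p), ∑ s ∈ Finset.range (l + p - 1 - 2 * t),
            relGenRank R (L (hook l t s)) (L (hook l t (s + 1))) :=
          sum_rectangle_relGenRank_le L l p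
      _ ≤ ∑ t ∈ Finset.range (min l p), Module.finrank F (LinearMap.range (π ω)) *
            chainCount p m (l + p - 1 - 2 * t) :=
          Finset.sum_le_sum fun t _ => ih (hπ.subgroup R) (hQ.to_subgroup R) horbR
            (fun s s' h => hL (hook_mono l t h)) (fun s => (hstab _).leadSub hρ x _)
            (LinearMap.map_le_range.trans ((hπ.subgroup R).range_projOn_le _)) _
      _ = _ := by rw [← Finset.mul_sum, chainCount]

end Chain

/-! ## Bounds for systems of imprimitivity -/

section Orbits

open MulAction (orbitRel orbit)

theorem sum_card_orbits (Q Ω : Type*) [Group Q] [MulAction Q Ω] [Finite Ω]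
    [Fintype (orbitRel.Quotient Q Ω)] :
    ∑ o : orbitRel.Quotient Q Ω, Nat.card o.orbit = Nat.card Ω := by
  rw [Nat.card_congr (MulAction.selfEquivSigmaOrbits' Q Ω), Nat.card_sigma]

theorem card_orbits_le_div {Q Ω : Type*} [Group Q] [MulAction Q Ω] [Finite Ω] {c : ℕ} (hc : 0 < c)
    (h : ∀ ω : Ω, c ∣ Nat.card (orbit Q ω)) :
    Nat.card (orbitRel.Quotient Q Ω) ≤ Nat.card Ω / c := by
  have := Fintype.ofFinite (orbitRel.Quotient Q Ω)
  rw [Nat.le_div_iff_mul_le hc, ← sum_card_orbits Q Ω, Nat.card_eq_fintype_card, ← smul_eq_mul,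
    ← Finset.card_univ]
  refine Finset.card_nsmul_le_sum _ _ _ fun o _ => ?_
  induction o using Quotient.inductionOn' with
  | h ω =>
    have : Nonempty (orbit Q ω) := (MulAction.nonempty_orbit ω).to_subtype
    exact Nat.le_of_dvd (Nat.card_pos (α := orbit Q ω)) (h ω)

theorem pow_factorization_dvd_card_orbit_sylow {G Ω : Type*} [Group G] [Finite G] [MulAction G Ω]
    [MulAction.IsPretransitive G Ω] {q : ℕ} [hq : Fact q.Prime] (P : Sylow q G) (ω : Ω) :
    q ^ (Nat.card Ω).factorization q ∣ Nat.card (orbit P ω) := by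
  set K := MulAction.stabilizer G ω
  have card_orbit : Nat.card (orbit P ω) = (K ⊓ P).relIndex P := by
    rw [Nat.card_coe_set_eq, ← MulAction.index_stabilizer, Subgroup.inf_relIndex_right]
    rfl
  have hdvd : q ^ (Nat.card Ω).factorization q ∣ Nat.card (orbit P ω) * P.index := by
    rw [card_orbit, Subgroup.relIndex_mul_index inf_le_right,
      ← MulAction.index_stabilizer_of_transitive G ω]
    exact (Nat.ordProj_dvd _ q).trans (Subgroup.index_dvd_of_le inf_le_left)
  exact (((hq.out.coprime_iff_not_dvd).2 P.not_dvd_index).pow_left _).dvd_of_dvd_mul_right hdvd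

end Orbits

section Bounds

open MulAction (orbitRel orbit)

variable {F W : Type*} [Field F] [AddCommGroup W] [Module F W]

theorem exists_isImprimitivitySystem {Q Ω : Type*} [Group Q] [MulAction Q Ω] [Fintype Ω]
    [DistribMulAction Q W] [SMulCommClass Q F W] {φ : Ω → Submodule F W} (hind : iSupIndep φ)
    (htop : iSup φ = ⊤) (hφ : ∀ (g : Q) (ω : Ω), ∀ w ∈ φ ω, g • w ∈ φ (g • ω)) :
    ∃ π : Ω → Module.End F W, IsImprimitivitySystem Q π ∧
      ∀ ω, LinearMap.range (π ω) ≤ φ ω := by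
  classical
  let _ : DirectSum.Decomposition φ :=
    (DirectSum.isInternal_submodule_of_iSupIndep_of_iSup_eq_top hind htop).chooseDecomposition
  let π : Ω → Module.End F W := fun ω => (φ ω).subtype ∘ₗ DirectSum.component F _ _ ω ∘ₗ
    (DirectSum.decomposeLinearEquiv φ).toLinearMap
  have proj_mem : ∀ ω w, π ω w ∈ φ ω := fun ω w => SetLike.coe_mem _
  have proj_same : ∀ ω, ∀ w ∈ φ ω, π ω w = w := fun ω w hw => DirectSum.decompose_of_mem_same φ hw
  have proj_ne : ∀ ω ω', ω ≠ ω' → ∀ w ∈ φ ω', π ω w = 0 := fun ω ω' h w hw =>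
    DirectSum.decompose_of_mem_ne φ hw h.symm
  refine ⟨π, ⟨⟨⟨fun ω => ?_, fun ω ω' h => ?_⟩, ?_⟩, fun g ω => ?_⟩, ?_⟩
  · exact LinearMap.ext fun w => proj_same ω _ (proj_mem ω w)
  · exact LinearMap.ext fun w => proj_ne ω ω' h _ (proj_mem ω' w)
  · refine DirectSum.decompose_lhom_ext φ fun ω => LinearMap.ext fun w => ?_
    simp only [LinearMap.comp_apply, LinearMap.sum_apply, Submodule.subtype_apply]
    rw [Fintype.sum_eq_single ω fun ω' h => proj_ne ω' ω h _ w.2, proj_same ω _ w.2]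
    rfl
  · suffices h : DistribSMul.toLinearMap F W g ∘ₗ π ω =
        π (g • ω) ∘ₗ DistribSMul.toLinearMap F W g from LinearMap.congr_fun h
    refine DirectSum.decompose_lhom_ext φ fun ω' => LinearMap.ext fun ⟨w, hw⟩ => ?_
    change g • π ω w = π (g • ω) (g • w)
    rcases eq_or_ne ω ω' with rfl | h
    · rw [proj_same ω w hw, proj_same _ _ (hφ g ω w hw)]
    · rw [proj_ne ω ω' h w hw, smul_zero,
        proj_ne _ _ ((MulAction.injective g).ne h) _ (hφ g ω' w hw)]
  · rintro ω _ ⟨w, rfl⟩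
    exact proj_mem ω w

variable [FiniteDimensional F W]

theorem relGenRank_le_relGenRank_top {Q : Type*} [Group Q] [Finite Q] [NeZero (Nat.card Q : F)]
    [DistribMulAction Q W] [SMulCommClass Q F W] {S : Submodule F W} (hS : IsStable Q S) :
    relGenRank Q S ⊥ ≤ relGenRank Q (⊤ : Submodule F W) ⊥ := by
  let σ : Subrepresentation (Representation.ofDistribMulAction F Q W) := ⟨S, fun g => hS g⟩
  obtain ⟨τ, hτ⟩ := exists_isCompl σ
  have compl : IsCompl S τ.toSubmodule := by
    refine IsCompl.of_eq ?_ ?_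
    · exact congrArg Subrepresentation.toSubmodule hτ.inf_eq_bot
    · exact congrArg Subrepresentation.toSubmodule hτ.sup_eq_top
  have proj_smul : ∀ (g : Q) w,
      S.projection τ.toSubmodule compl (g • w) = g • S.projection τ.toSubmodule compl w := by
    intro g w
    obtain ⟨s, hs, t, ht, rfl⟩ :=
      Submodule.mem_sup.1 (compl.sup_eq_top ▸ Submodule.mem_top (x := w))
    have hgs := S.projection_apply_left compl ⟨g • s, hS g s hs⟩
    have hgt := S.projection_apply_right compl ⟨g • t, τ.apply_mem_toSubmodule g ht⟩
    have hs' := S.projection_apply_left compl ⟨s, hs⟩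
    have ht' := S.projection_apply_right compl ⟨t, ht⟩
    rw [smul_add, map_add, map_add, hgs, hgt, hs', ht', add_zero, add_zero]
  have := relGenRank_map_le proj_smul ⊤
  rwa [Submodule.map_top, Submodule.range_projection] at this

namespace IsImprimitivitySystem

variable {Q Ω : Type*} [Group Q] [MulAction Q Ω] [Fintype Ω] [DistribMulAction Q W]
  {π : Ω → Module.End F W} {S : Submodule F W} {d : ℕ}

theorem relGenRank_le_sum_orbits (hπ : IsImprimitivitySystem Q π) [Fintype (orbitRel.Quotient Q Ω)]
    {c : orbitRel.Quotient Q Ω → ℕ} (hc : ∀ o, ∀ S : Submodule F W, IsStable Q S →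
      S ≤ supportedOn π o.orbit → relGenRank Q S ⊥ ≤ c o)
    (hS : IsStable Q S) : relGenRank Q S ⊥ ≤ ∑ o, c o := by
  classical
  suffices h : ∀ A : Finset (orbitRel.Quotient Q Ω), ∀ S, IsStable Q S →
      S ≤ supportedOn π {ω | Quotient.mk'' ω ∈ A} → relGenRank Q S ⊥ ≤ ∑ o ∈ A, c o from
    h Finset.univ S hS fun w _ => mem_supportedOn.2 fun ω hω => absurd (Finset.mem_univ _) hω
  intro A
  induction A using Finset.induction_on with
  | empty =>
    intro S _ hsupp
    have hS : S = ⊥ := eq_bot_mono hsupp (by simpa using hπ.supportedOn_empty)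
    exact relGenRank_le ∅ (by simp) (by simp) (hS.le.trans bot_le)
  | insert o A ho ih =>
    intro S hS hsupp
    obtain ⟨ω, rfl⟩ := Quotient.mk''_surjective o
    set ρ := projOn π (orbit Q ω)
    have hρ : ∀ (g : Q) w, ρ (g • w) = g • ρ w := hπ.projOn_orbit_smul ω
    rw [Finset.sum_insert ho]
    refine (relGenRank_le_map_add_inf_ker hρ hS).trans (add_le_add ?_ ?_)
    · exact hc _ _ (hS.map hρ) (LinearMap.map_le_range.trans (hπ.range_projOn_le _))
    · refine ih _ (hS.inf (.ker hρ)) fun w ⟨hw, hker⟩ => mem_supportedOn.2 fun ω' hω' => ?_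
      by_cases h : ω' ∈ orbit Q ω
      · rw [← hπ.proj_projOn_of_mem h, LinearMap.mem_ker.1 hker, map_zero]
      · refine mem_supportedOn.1 (hsupp hw) ω' ?_
        rw [Set.mem_ofPred_eq, Finset.mem_insert, not_or]
        exact ⟨fun h' => h (MulAction.orbitRel_apply.1 (Quotient.eq''.1 h')), hω'⟩

theorem relGenRank_top_le (hπ : IsImprimitivitySystem Q π) [SMulCommClass Q F W]
    (hd : ∀ ω, Module.finrank F (LinearMap.range (π ω)) ≤ d) :
    relGenRank Q (⊤ : Submodule F W) ⊥ ≤ d * Nat.card (orbitRel.Quotient Q Ω) := by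
  classical
  have := Fintype.ofFinite (orbitRel.Quotient Q Ω)
  choose X hX hspan using fun o : orbitRel.Quotient Q Ω =>
    exists_finset_card_eq_finrank (LinearMap.range (π o.out))
  refine relGenRank_le (Finset.univ.biUnion X) ?_ (Set.subset_univ _) fun w _ => ?_
  · calc _ ≤ ∑ o, (X o).card := Finset.card_biUnion_le
      _ ≤ ∑ _o : orbitRel.Quotient Q Ω, d := Finset.sum_le_sum fun o _ => (hX o).trans_le (hd _)
      _ = _ := by rw [Finset.sum_const, Finset.card_univ, smul_eq_mul, mul_comm,
        Nat.card_eq_fintype_card]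
  · rw [bot_sup_eq, ← hπ.sum_proj w]
    refine Submodule.sum_mem _ fun ω _ => ?_
    set o : orbitRel.Quotient Q Ω := Quotient.mk'' ω
    obtain ⟨g, hg⟩ : ω ∈ orbit Q o.out :=
      MulAction.orbitRel_apply.1 (Quotient.eq''.1 (Quotient.out_eq' o).symm)
    have translate : π ω w = g • π o.out (g⁻¹ • w) := by
      rw [hπ.smul_proj, smul_inv_smul]
      exact congrArg (fun ω => π ω w) hg.symm
    have hXo : (X o : Set W) ⊆ Finset.univ.biUnion X :=
      Finset.coe_subset.2 (Finset.subset_biUnion_of_mem X (Finset.mem_univ o))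
    rw [translate]
    exact IsStable.orbitSpan _ g _
      (span_le_orbitSpan _ (Submodule.span_mono hXo ((hspan o).ge ⟨_, rfl⟩)))

theorem relGenRank_le_mul_card_orbits (hπ : IsImprimitivitySystem Q π) [SMulCommClass Q F W]
    [Finite Q] [NeZero (Nat.card Q : F)]
    (hd : ∀ ω, Module.finrank F (LinearMap.range (π ω)) ≤ d) (hS : IsStable Q S) :
    relGenRank Q S ⊥ ≤ d * Nat.card (orbitRel.Quotient Q Ω) :=
  (relGenRank_le_relGenRank_top hS).trans (hπ.relGenRank_top_le hd)

variable {p : ℕ} [hp : Fact p.Prime]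

theorem relGenRank_le_of_le_supportedOn_orbit (hπ : IsImprimitivitySystem Q π)
    [SMulCommClass Q F W] [Finite Q] (hQ : IsPGroup p Q) {ω : Ω} {m : ℕ}
    (horb : Nat.card (orbit Q ω) = p ^ m) (hS : IsStable Q S)
    (hsupp : S ≤ supportedOn π (orbit Q ω)) :
    relGenRank Q S ⊥ ≤ Module.finrank F (LinearMap.range (π ω)) * chainCount p m 1 := by
  let T : ℕ → Submodule F W := fun j => if j = 0 then S else ⊥
  have hT : Antitone T := antitone_nat_of_succ_le fun j => bot_le
  have hstab : ∀ j, IsStable Q (T j)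
    | 0 => hS
    | _ + 1 => .bot
  simpa [T] using hπ.sum_relGenRank_chain_le hQ horb hT hstab hsupp 1

theorem relGenRank_le_mul_floor (hπ : IsImprimitivitySystem Q π) [SMulCommClass Q F W] [Finite Q]
    (hQ : IsPGroup p Q) (hd : ∀ ω, Module.finrank F (LinearMap.range (π ω)) ≤ d) {k : ℕ}
    (hk : 0 < k) (horb : ∀ ω : Ω, p ^ k ∣ Nat.card (orbit Q ω)) (hS : IsStable Q S) :
    relGenRank Q S ⊥ ≤ d * ⌊√(2 / Real.pi) * Nat.card Ω / √(((p : ℝ) - 1) * k)⌋₊ := by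
  have := Fintype.ofFinite (orbitRel.Quotient Q Ω)
  have hp1 : (0 : ℝ) < (p : ℝ) - 1 := sub_pos.2 (by exact_mod_cast hp.out.one_lt)
  have card_orbit : ∀ o : orbitRel.Quotient Q Ω, ∃ m, k ≤ m ∧ Nat.card o.orbit = p ^ m := by
    intro o
    obtain ⟨ω, rfl⟩ := Quotient.mk''_surjective o
    obtain ⟨m, hm⟩ := hQ.card_orbit ω
    exact ⟨m, (Nat.pow_dvd_pow_iff_le_right hp.out.one_lt).1 (hm ▸ horb ω), hm⟩
  choose m hkm hm using card_orbit
  calc relGenRank Q S ⊥ ≤ ∑ o : orbitRel.Quotient Q Ω, d * chainCount p (m o) 1 :=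
        hπ.relGenRank_le_sum_orbits (fun o S' hS' hsupp => by
          obtain ⟨ω, rfl⟩ := Quotient.mk''_surjective o
          exact (hπ.relGenRank_le_of_le_supportedOn_orbit hQ (hm (Quotient.mk'' ω)) hS' hsupp).trans
            (Nat.mul_le_mul_right _ (hd ω))) hS
    _ = d * ∑ o, chainCount p (m o) 1 := Finset.mul_sum .. |>.symm
    _ ≤ _ := ?_
  refine Nat.mul_le_mul_left d (Nat.le_floor ?_)
  rw [← sum_card_orbits Q Ω, Nat.cast_sum, Nat.cast_sum, Finset.mul_sum, Finset.sum_div]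
  refine Finset.sum_le_sum fun o _ =>
    (chainCount_one_le hp.out.two_le (hk.trans_le (hkm o))).trans ?_
  rw [hm o, Nat.cast_pow]
  gcongr
  exact hkm o

end IsImprimitivitySystem

end Bounds

theorem exists_prime_ne_lpp_eq (n p : ℕ) :
    ∃ q, q.Prime ∧ q ≠ p ∧ lpp (n / p ^ n.factorization p) = q ^ n.factorization q := by
  set k := n / p ^ n.factorization p with hk
  rcases k.primeFactors.eq_empty_or_nonempty with hempty | hne
  · obtain ⟨q, hq, hqprime⟩ := Nat.exists_infinite_primes (max n p + 1)
    refine ⟨q, hqprime, by omega, ?_⟩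
    rw [Nat.factorization_eq_zero_of_lt (by omega : n < q), pow_zero, lpp, hempty]
    rfl
  · obtain ⟨q, hq, hsup⟩ := Finset.exists_mem_eq_sup _ hne fun q => q ^ k.factorization q
    have hqprime := Nat.prime_of_mem_primeFactors hq
    have hn : n ≠ 0 := by
      rintro rfl
      simp [hk] at hq
    have hqp : q ≠ p := by
      rintro rfl
      exact Nat.not_dvd_ordCompl hqprime hn (Nat.dvd_of_mem_primeFactors hq)
    refine ⟨q, hqprime, hqp, ?_⟩
    rw [lpp, hsup, max_eq_right (Nat.one_le_pow _ _ hqprime.pos), hk, Nat.factorization_ordCompl,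
      Finsupp.erase_ne hqp]

section Induced

variable {G F W : Type*} [Group G] [Field F] [AddCommGroup W] [Module F W]
  [DistribMulAction G W] {S : Submodule F W}

theorem dMod_le_relGenRank_subgroup [FiniteDimensional F W] (P : Subgroup G) (hS : IsStable G S) :
    dMod G S ≤ relGenRank P S ⊥ :=
  (dMod_eq_relGenRank hS).trans_le (relGenRank_le_relGenRank_subgroup P S ⊥)

namespace IsImprimitivitySystem

variable [Finite G] [SMulCommClass G F W] [FiniteDimensional F W] {Ω : Type*} [Fintype Ω]
  [MulAction G Ω] [MulAction.IsPretransitive G Ω] {π : Ω → Module.End F W} {d p : ℕ}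

theorem dMod_le_mul_div_lpp (hπ : IsImprimitivitySystem G π) [CharP F p]
    (hd : ∀ ω, Module.finrank F (LinearMap.range (π ω)) ≤ d) (hS : IsStable G S) :
    dMod G S ≤ d * (Nat.card Ω / lpp (Nat.card Ω / p ^ (Nat.card Ω).factorization p)) := by
  obtain ⟨q, hq, hqp, hlpp⟩ := exists_prime_ne_lpp_eq (Nat.card Ω) p
  have : Fact q.Prime := ⟨hq⟩
  let P : Sylow q G := default
  have : NeZero (Nat.card P : F) := by
    refine ⟨?_⟩
    rw [P.card_eq_multiplicity, Nat.cast_pow]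
    refine pow_ne_zero _ fun h => ?_
    rcases (Nat.dvd_prime hq).1 ((CharP.cast_eq_zero_iff F p q).1 h) with h1 | h1
    · exact CharP.char_ne_one F p h1
    · exact hqp h1.symm
  rw [hlpp]
  calc dMod G S ≤ relGenRank P S ⊥ := dMod_le_relGenRank_subgroup P.toSubgroup hS
    _ ≤ d * Nat.card (MulAction.orbitRel.Quotient P Ω) :=
      (hπ.subgroup P.toSubgroup).relGenRank_le_mul_card_orbits hd (hS.subgroup P.toSubgroup)
    _ ≤ _ := Nat.mul_le_mul_left d (card_orbits_le_div (pow_pos hq.pos _)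
      (pow_factorization_dvd_card_orbit_sylow P))

theorem dMod_le_mul_floor (hπ : IsImprimitivitySystem G π) [Fact p.Prime]
    (hd : ∀ ω, Module.finrank F (LinearMap.range (π ω)) ≤ d)
    (hp : (Nat.card Ω).factorization p ≠ 0) (hS : IsStable G S) :
    dMod G S ≤ d * ⌊√(2 / Real.pi) * Nat.card Ω /
      √(((p : ℝ) - 1) * (Nat.card Ω).factorization p)⌋₊ := by
  let P : Sylow p G := default
  exact (dMod_le_relGenRank_subgroup P.toSubgroup hS).trans
    ((hπ.subgroup P.toSubgroup).relGenRank_le_mul_floor P.isPGroup' hd (Nat.pos_of_ne_zero hp)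
      (pow_factorization_dvd_card_orbit_sylow P) (hS.subgroup P.toSubgroup))

theorem dMod_le_mul_Efun (hπ : IsImprimitivitySystem G π) [CharP F p]
    (hd : ∀ ω, Module.finrank F (LinearMap.range (π ω)) ≤ d) (hS : IsStable G S) :
    dMod G S ≤ d * Efun (Nat.card Ω) p := by
  rw [Efun]
  split_ifs with h0
  · exact hπ.dMod_le_mul_div_lpp hd hS
  · have hp : p.Prime := by
      by_contra hp
      exact h0 (Nat.factorization_eq_zero_of_not_prime _ hp)
    have : Fact p.Prime := ⟨hp⟩
    rw [← Nat.mul_min_mul_left, le_min_iff, ← Real.rpow_natCast,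
      Real.logb_rpow (by exact_mod_cast hp.pos) (by exact_mod_cast hp.ne_one)]
    exact ⟨hπ.dMod_le_mul_floor hd h0 hS, hπ.dMod_le_mul_div_lpp hd hS⟩

end IsImprimitivitySystem

end Induced

-- For `p = 0`, i.e. in characteristic zero, `Efun n p` reads `n / lpp n`.
theorem stmt_15_general {G F W : Type*} [Group G] [Finite G] {H : Subgroup G} [Field F] {p : ℕ}
    [CharP F p] [AddCommGroup W] [Module F W] [DistribMulAction G W] [SMulCommClass G F W]
    {V : Submodule F W} [FiniteDimensional F V]
    (hinduced : ∃ φ : G ⧸ H → Submodule F W,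
      (∀ g : G, φ (g : G ⧸ H) = V.map (DistribSMul.toLinearMap F W g)) ∧
        iSupIndep φ ∧ iSup φ = ⊤)
    {S : Submodule F W} (hS : ∀ g : G, ∀ w ∈ S, g • w ∈ S) :
    dMod G S ≤ Module.finrank F V * Efun H.index p := by
  have : Fintype (G ⧸ H) := Fintype.ofFinite _
  obtain ⟨φ, hφ, hind, htop⟩ := hinduced
  have translate : ∀ (g : G) (ω : G ⧸ H), ∀ w ∈ φ ω, g • w ∈ φ (g • ω) := by
    intro g ω w hw
    obtain ⟨x, rfl⟩ := QuotientGroup.mk_surjective ω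
    obtain ⟨v, hv, rfl⟩ := hφ x ▸ hw
    rw [MulAction.Quotient.smul_coe, hφ]
    exact ⟨v, hv, mul_smul g x v⟩
  have finite_and_finrank_le : ∀ ω, FiniteDimensional F (φ ω) ∧
      Module.finrank F (φ ω) ≤ Module.finrank F V := by
    intro ω
    obtain ⟨x, rfl⟩ := QuotientGroup.mk_surjective ω
    rw [hφ]
    exact ⟨inferInstance, Submodule.finrank_map_le _ _⟩
  have := fun ω => (finite_and_finrank_le ω).1
  have : FiniteDimensional F W := by
    have : FiniteDimensional F (⨆ ω, φ ω : Submodule F W) := inferInstance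
    rw [htop] at this
    exact Module.Finite.equiv Submodule.topEquiv
  obtain ⟨π, hπ, hrange⟩ := exists_isImprimitivitySystem hind htop translate
  exact hπ.dMod_le_mul_Efun (fun ω =>
    (Submodule.finrank_mono (hrange ω)).trans (finite_and_finrank_le ω).2) hS

/-- Let `G` be a finite group, `H ≤ G` of index `n ≥ 2`, `F` a field of characteristic
`p > 0`, and `V` an `H`-module of finite dimension `a` over `F`.  The induced module `V↑G` is
presented internally: `W` is a `G`-module containing an `H`-stable subspace `V` of dimension
`a` such that `W` is the direct sum of the translates `g • V` over the cosets `g H ∈ G ⧸ H`.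
Then for every (`G`-stable) submodule `S` of `W`, `d_G(S) ≤ a·E(n,p)`. -/
theorem stmt_15 (G : Type*) [Group G] [Fintype G]
    (H : Subgroup G) (n : ℕ) (hn : 2 ≤ n) (hidx : H.index = n)
    (F W : Type*) [Field F] (p : ℕ) [Fact p.Prime] (hchar : CharP F p)
    [AddCommGroup W] [Module F W] [DistribMulAction G W] [SMulCommClass G F W]
    (V : Submodule F W) [FiniteDimensional F V] (a : ℕ) (ha : Module.finrank F V = a)
    (hVstable : ∀ g ∈ H, ∀ v ∈ V, g • v ∈ V)
    (hinduced : ∃ φ : G ⧸ H → Submodule F W,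
      (∀ g : G, φ (g : G ⧸ H) = V.map (DistribMulAction.toLinearMap F W g)) ∧
        iSupIndep φ ∧ iSup φ = ⊤)
    (S : Submodule F W) (hSstable : ∀ g : G, ∀ w ∈ S, g • w ∈ S) :
    dMod G S ≤ a * Efun n p := by
  subst hidx ha
  exact stmt_15_general hinduced hSstable
end

section
/- Let G be a finite group, H a subgroup of G of index n ≥ 2, F a field of characteristic p > 0, V an H-module of finite dimension a over F, and S a submodule of the induced module V↑G = F[G] ⊗_{F[H]} V. Then: (i) if n_p ≥ √n, then d_G(S) ≤ a·E(n,p) ≤ a·⌊b₁·n/√(log n)⌋, where b₁ := 2/√π; (ii) if n_p ≤ √n, then d_G(S) ≤ a·E(n,p) ≤ ⌊2an/(c'·log n)⌋, where c' := ln 2/1.25506. In particular, d_G(S) ≤ a·E(n,p) ≤ ⌊2an/(c'·log n)⌋ if 2 ≤ n ≤ 1260, and d_G(S) ≤ a·E(n,p) ≤ ⌊a·b₁·n/√(log n)⌋ if n ≥ 1261. -/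
/-!
For a Sylow `q`-subgroup `Q` of `G` with `q ≠ p`, the restriction of the induced module to `Q` is
semisimple, so a submodule needs at most as many generators as the whole module, that is, at most
`a` for each orbit of `Q` on `G ⧸ H`. Every such orbit has at least `n_q` points, whence the bound
`n / lpp (n / n_p)`.

For a Sylow `p`-subgroup `P`, filtering the orbit blocks reduces the question to cyclic modules
generated by a vector fixed by a subgroup `R` of index `p ^ m`. If `z` is central of order `p`
modulo the normal core of `R`, then `(z - 1) ^ p = 0`, and the filtration by the powers of `z - 1`
turns a chain of `l` submodules into an `l × p` grid of submodules of a cyclic module attached to a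
subgroup of index `p ^ (m - 1)`. The grid is cut into hooks, each of which is a chain there.
Iterating, and replacing uniform steps by binomial ones, bounds the number of generators by
`p ^ m / 2 ^ K` times a central binomial coefficient with `K = m * (p - 1)`, which is at most
`√(2 / π) * p ^ m / √K`.

The logarithmic bounds on `E(n, p)` rest on the inequality `log m ≤ 1.25506 * lpp m`: every `m`
divides the least common multiple of `1, …, lpp m`, which is at most `(7 / 2) ^ lpp m`.
-/

section LeastCommonMultiple

lemma le_add_mod_or_le_add_mod {k q : ℕ} (hkq : k < q) (hqk : q ≤ 6 * k) :
    q ≤ 3 * k % q + 3 * k % q ∨ q ≤ k % q + 2 * k % q := by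
  rw [Nat.mod_eq_of_lt hkq]
  rcases lt_or_ge (3 * k) q with h3 | h3
  · rw [Nat.mod_eq_of_lt h3]
    omega
  rcases lt_or_ge (2 * k) q with h2 | h2
  · rw [Nat.mod_eq_of_lt h2]
    omega
  have h2mod : 2 * k % q = 2 * k - q := by
    rw [Nat.mod_eq_sub_mod h2, Nat.mod_eq_of_lt (by omega)]
  rcases le_or_gt (2 * q) (3 * k) with h32 | h32
  · omega
  · have h3mod : 3 * k % q = 3 * k - q := by
      rw [Nat.mod_eq_sub_mod h3, Nat.mod_eq_of_lt (by omega)]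
    omega

lemma log_six_mul_le_log_add_factorization_choose (k : ℕ) {p : ℕ} (hp : p.Prime) :
    Nat.log p (6 * k) ≤ Nat.log p k + (((6 * k).choose (3 * k)).factorization p +
      ((3 * k).choose k).factorization p) := by
  rcases Nat.eq_zero_or_pos k with rfl | hk
  · simp
  set b := Nat.log p (6 * k) + 1
  have carries₁ := Nat.factorization_choose' (n := 3 * k) (k := 3 * k) (b := b) hp
    (by rw [← two_mul, ← mul_assoc]; exact Nat.lt_succ_self _)
  have carries₂ := Nat.factorization_choose' (n := 2 * k) (k := k) (b := b) hp
    (Nat.lt_succ_of_le (Nat.log_mono_right (by omega)))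
  rw [show 3 * k + 3 * k = 6 * k by ring] at carries₁
  rw [show 2 * k + k = 3 * k by ring] at carries₂
  have hsub : Finset.Ioc (Nat.log p k) (Nat.log p (6 * k)) ⊆
      {i ∈ Finset.Ico 1 b | p ^ i ≤ 3 * k % p ^ i + 3 * k % p ^ i} ∪
      {i ∈ Finset.Ico 1 b | p ^ i ≤ k % p ^ i + 2 * k % p ^ i} := by
    intro i hi
    rw [Finset.mem_Ioc] at hi
    rw [← Finset.filter_or, Finset.mem_filter, Finset.mem_Ico]
    exact ⟨by omega, le_add_mod_or_le_add_mod (Nat.lt_pow_of_log_lt hp.one_lt hi.1)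
      (Nat.pow_le_of_le_log (by omega) hi.2)⟩
  have hcard := (Finset.card_le_card hsub).trans (Finset.card_union_le _ _)
  rw [Nat.card_Ioc] at hcard
  omega

lemma lcmUpto_six_mul_dvd (k : ℕ) :
    Nat.lcmUpto (6 * k) ∣ Nat.lcmUpto k * ((6 * k).choose (3 * k) * (3 * k).choose k) := by
  have h₁ : (6 * k).choose (3 * k) ≠ 0 := (Nat.choose_pos (by omega)).ne'
  have h₂ : (3 * k).choose k ≠ 0 := (Nat.choose_pos (by omega)).ne'
  have hk := Nat.lcmUpto_ne_zero k
  rw [← Nat.factorization_prime_le_iff_dvd (Nat.lcmUpto_ne_zero _)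
    (mul_ne_zero hk (mul_ne_zero h₁ h₂))]
  intro p hp
  rw [Nat.factorization_mul hk (mul_ne_zero h₁ h₂), Nat.factorization_mul h₁ h₂,
    Finsupp.add_apply, Finsupp.add_apply, Nat.factorization_lcmUpto _ hp,
    Nat.factorization_lcmUpto _ hp]
  exact log_six_mul_le_log_add_factorization_choose k hp

lemma choose_three_mul_le (k : ℕ) : (3 * k).choose k * 4 ^ k ≤ 27 ^ k := by
  have hterm : 2 ^ (2 * k) * (3 * k).choose k ≤ 3 ^ (3 * k) := by
    have hbinom := add_pow (1 : ℕ) 2 (3 * k)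
    simp only [Nat.cast_id] at hbinom
    have hle := Finset.single_le_sum (f := fun m ↦ 1 ^ m * 2 ^ (3 * k - m) * (3 * k).choose m)
      (s := Finset.range (3 * k + 1)) (fun _ _ ↦ Nat.zero_le _)
      (show k ∈ Finset.range (3 * k + 1) by rw [Finset.mem_range]; omega)
    rwa [one_pow, one_mul, show 3 * k - k = 2 * k by omega, ← hbinom] at hle
  rw [pow_mul, pow_mul] at hterm
  exact (mul_comm _ _).trans_le hterm

lemma lcmUpto_six_mul_le (k : ℕ) : Nat.lcmUpto (6 * k) ≤ Nat.lcmUpto k * 432 ^ k := by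
  have hcentral : (6 * k).choose (3 * k) ≤ 64 ^ k :=
    (Nat.choose_le_two_pow _ _).trans_eq (pow_mul 2 6 k)
  have hprod : (6 * k).choose (3 * k) * (3 * k).choose k ≤ 432 ^ k := by
    refine Nat.le_of_mul_le_mul_right (c := 4 ^ k) ?_ (by positivity)
    calc (6 * k).choose (3 * k) * (3 * k).choose k * 4 ^ k
        = (6 * k).choose (3 * k) * ((3 * k).choose k * 4 ^ k) := mul_assoc _ _ _
      _ ≤ 64 ^ k * 27 ^ k := Nat.mul_le_mul hcentral (choose_three_mul_le k)
      _ = 432 ^ k * 4 ^ k := by rw [← mul_pow, ← mul_pow]; norm_num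
  have hpos : 0 < Nat.lcmUpto k * ((6 * k).choose (3 * k) * (3 * k).choose k) :=
    Nat.mul_pos (Nat.lcmUpto_pos k)
      (Nat.mul_pos (Nat.choose_pos (by omega)) (Nat.choose_pos (by omega)))
  exact (Nat.le_of_dvd hpos (lcmUpto_six_mul_dvd k)).trans (Nat.mul_le_mul_left _ hprod)

lemma monotone_lcmUpto : Monotone Nat.lcmUpto := fun _ n h ↦
  Nat.le_of_dvd (Nat.lcmUpto_pos n) (Finset.lcm_mono (Finset.Icc_subset_Icc_right h))

lemma pow_3024_mul_two_pow_le {k : ℕ} (hk : 40 ≤ k) :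
    3024 ^ (k + 1) * 2 ^ (6 * k) ≤ 2 ^ (k + 1) * 7 ^ (6 * k) := by
  induction k, hk using Nat.le_induction with
  | base => norm_num
  | succ k _ ih =>
    calc 3024 ^ (k + 1 + 1) * 2 ^ (6 * (k + 1))
        = 3024 ^ (k + 1) * 2 ^ (6 * k) * (3024 * 2 ^ 6) := by ring
      _ ≤ 2 ^ (k + 1) * 7 ^ (6 * k) * (2 * 7 ^ 6) := Nat.mul_le_mul ih (by norm_num)
      _ = 2 ^ (k + 1 + 1) * 7 ^ (6 * (k + 1)) := by ring

-- Here `3024 = 7 * 432`; replacing `6 * k + 6` by `6 * k` in the exponents is affordable since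
-- `432 ^ (1 / 5) < 7 / 2`.
lemma lcmUpto_six_mul_mul_two_pow_le {k : ℕ} (hk : 40 ≤ k)
    (h : Nat.lcmUpto (k + 1) * 2 ^ (k + 1) ≤ 7 ^ (k + 1)) :
    Nat.lcmUpto (6 * (k + 1)) * 2 ^ (6 * k) ≤ 7 ^ (6 * k) := by
  refine Nat.le_of_mul_le_mul_right (c := 2 ^ (k + 1)) ?_ (by positivity)
  calc Nat.lcmUpto (6 * (k + 1)) * 2 ^ (6 * k) * 2 ^ (k + 1)
      ≤ Nat.lcmUpto (k + 1) * 432 ^ (k + 1) * 2 ^ (6 * k) * 2 ^ (k + 1) := by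
        gcongr
        exact lcmUpto_six_mul_le (k + 1)
    _ = Nat.lcmUpto (k + 1) * 2 ^ (k + 1) * 432 ^ (k + 1) * 2 ^ (6 * k) := by ring
    _ ≤ 7 ^ (k + 1) * 432 ^ (k + 1) * 2 ^ (6 * k) := by gcongr
    _ = 3024 ^ (k + 1) * 2 ^ (6 * k) := by rw [← mul_pow]; norm_num
    _ ≤ 7 ^ (6 * k) * 2 ^ (k + 1) := (pow_3024_mul_two_pow_le hk).trans_eq (mul_comm _ _)

theorem lcmUpto_mul_two_pow_le (n : ℕ) : Nat.lcmUpto n * 2 ^ n ≤ 7 ^ n := by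
  induction n using Nat.strong_induction_on with
  | _ n ih =>
    rcases lt_or_ge n 246 with hn | hn
    · have hsmall : ∀ m < 246, Nat.lcmUpto m * 2 ^ m ≤ 7 ^ m := by decide +kernel
      exact hsmall n hn
    · obtain ⟨k, r, hr, rfl⟩ : ∃ k r, r < 6 ∧ n = 6 * k + r :=
        ⟨n / 6, n % 6, Nat.mod_lt _ (by norm_num), (Nat.div_add_mod n 6).symm⟩
      calc Nat.lcmUpto (6 * k + r) * 2 ^ (6 * k + r)
          ≤ Nat.lcmUpto (6 * (k + 1)) * 2 ^ (6 * k) * 2 ^ r := by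
            rw [pow_add, ← mul_assoc]
            gcongr
            exact monotone_lcmUpto (by omega)
        _ ≤ 7 ^ (6 * k) * 7 ^ r :=
            Nat.mul_le_mul (lcmUpto_six_mul_mul_two_pow_le (by omega) (ih (k + 1) (by omega)))
              (Nat.pow_le_pow_left (by norm_num) r)
        _ = 7 ^ (6 * k + r) := (pow_add _ _ _).symm

end LeastCommonMultiple

section LargestPrimePower

lemma lpp_pos (m : ℕ) : 0 < lpp m := lt_of_lt_of_le one_pos (le_max_left _ _)

lemma pow_factorization_le_lpp {m q : ℕ} (hq : q ∈ m.primeFactors) :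
    q ^ m.factorization q ≤ lpp m :=
  (Finset.le_sup (f := fun q ↦ q ^ m.factorization q) hq).trans (le_max_right _ _)

lemma lpp_eq_one_or_exists_mem_primeFactors (m : ℕ) :
    lpp m = 1 ∨ ∃ q ∈ m.primeFactors, lpp m = q ^ m.factorization q := by
  rcases m.primeFactors.eq_empty_or_nonempty with h | h
  · exact .inl (by rw [lpp, h, Finset.sup_empty, bot_eq_zero', max_eq_left zero_le_one])
  · obtain ⟨q, hq, hsup⟩ := Finset.exists_mem_eq_sup _ h fun q ↦ q ^ m.factorization q
    refine .inr ⟨q, hq, ?_⟩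
    rw [lpp, hsup, max_eq_right (Nat.one_le_pow _ _ (Nat.pos_of_mem_primeFactors hq))]

lemma dvd_lcmUpto_lpp {m : ℕ} (hm : m ≠ 0) : m ∣ Nat.lcmUpto (lpp m) := by
  rw [← Nat.factorization_prime_le_iff_dvd hm (Nat.lcmUpto_ne_zero _)]
  intro q hq
  rw [Nat.factorization_lcmUpto _ hq]
  by_cases hqm : q ∈ m.primeFactors
  · exact Nat.le_log_of_pow_le hq.one_lt (pow_factorization_le_lpp hqm)
  · rw [← Nat.support_factorization, Finsupp.notMem_support_iff] at hqm
    exact hqm.trans_le (Nat.zero_le _)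

lemma log_seven_halves_le : Real.log (7 / 2) ≤ 1.25506 := by
  rw [Real.log_le_iff_le_exp (by norm_num)]
  calc (7 / 2 : ℝ) ≤ 2.7182818283 * (1 + 0.25506 + 0.25506 ^ 2 / 2) := by norm_num
    _ ≤ Real.exp 1 * Real.exp 0.25506 := by
        gcongr
        · exact Real.exp_one_gt_d9.le
        · exact Real.quadratic_le_exp_of_nonneg (by norm_num)
    _ = Real.exp 1.25506 := by
        rw [← Real.exp_add]
        norm_num

theorem log_le_lpp {m : ℕ} (hm : m ≠ 0) : Real.log m ≤ 1.25506 * lpp m := by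
  have hnat : m * 2 ^ lpp m ≤ 7 ^ lpp m :=
    (Nat.mul_le_mul_right _ (Nat.le_of_dvd (Nat.lcmUpto_pos _) (dvd_lcmUpto_lpp hm))).trans
      (lcmUpto_mul_two_pow_le _)
  have hreal : (m : ℝ) ≤ (7 / 2) ^ lpp m := by
    rw [div_pow, le_div_iff₀ (by positivity)]
    exact_mod_cast hnat
  calc Real.log m ≤ lpp m * Real.log (7 / 2) :=
        (Real.log_le_log (by positivity) hreal).trans_eq (Real.log_pow _ _)
    _ ≤ lpp m * 1.25506 := by gcongr; exact log_seven_halves_le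
    _ = 1.25506 * lpp m := mul_comm _ _

end LargestPrimePower

section BoundsOnE

lemma Efun_le_div (n p : ℕ) : Efun n p ≤ n / lpp (n / p ^ n.factorization p) := by
  unfold Efun
  split_ifs
  · exact le_rfl
  · exact min_le_right _ _

lemma sqrt_le_ordCompl_of_ordProj_le_sqrt {n p : ℕ}
    (h : ((p ^ n.factorization p : ℕ) : ℝ) ≤ √n) :
    √n ≤ (n / p ^ n.factorization p : ℕ) := by
  rcases Nat.eq_zero_or_pos n with rfl | hn
  · simp only [Nat.cast_zero, Real.sqrt_zero, Nat.zero_div, le_refl]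
  have hsqrt : 0 < √n := Real.sqrt_pos.2 (Nat.cast_pos.2 hn)
  refine le_of_mul_le_mul_left ?_ hsqrt
  calc √n * √n = n := Real.mul_self_sqrt n.cast_nonneg
    _ = (p ^ n.factorization p : ℕ) * (n / p ^ n.factorization p : ℕ) := by
        rw [← Nat.cast_mul, Nat.ordProj_mul_ordCompl_eq_self]
    _ ≤ √n * (n / p ^ n.factorization p : ℕ) := by gcongr

theorem Efun_le_of_ordProj_le_sqrt {n p : ℕ} (hn : 2 ≤ n)
    (h : ((p ^ n.factorization p : ℕ) : ℝ) ≤ √n) :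
    (Efun n p : ℝ) ≤ 2 * n / (Real.log 2 / 1.25506 * Real.logb 2 n) := by
  set m := n / p ^ n.factorization p
  have hlog : 0 < Real.log n := Real.log_pos (by exact_mod_cast hn)
  have hlpp : (0 : ℝ) < lpp m := Nat.cast_pos.2 (lpp_pos m)
  have hlogm : Real.log n / 2 ≤ 1.25506 * lpp m := by
    rw [← Real.log_sqrt n.cast_nonneg]
    exact (Real.log_le_log (by positivity) (sqrt_le_ordCompl_of_ordProj_le_sqrt h)).trans
      (log_le_lpp (Nat.ordCompl_pos p (by omega)).ne')
  calc (Efun n p : ℝ) ≤ n / lpp m := (Nat.cast_le.2 (Efun_le_div n p)).trans Nat.cast_div_le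
    _ ≤ 2 * n / (Real.log n / 1.25506) := by
        rw [div_le_div_iff₀ hlpp (by positivity), mul_right_comm, mul_comm]
        gcongr
        rw [div_le_iff₀ (by norm_num)]
        linarith
    _ = 2 * n / (Real.log 2 / 1.25506 * Real.logb 2 n) := by
        rw [div_mul_eq_mul_div, Real.logb, mul_div_cancel₀ _ (Real.log_pos one_lt_two).ne']

lemma logb_two_le_sub_one {p : ℕ} (hp : 1 ≤ p) : Real.logb 2 p ≤ (p : ℝ) - 1 := by
  rw [Real.logb_le_iff_le_rpow one_lt_two (by exact_mod_cast hp), ← Nat.cast_pred hp,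
    Real.rpow_natCast]
  exact_mod_cast Nat.le_of_pred_lt (Nat.lt_two_pow_self (n := p - 1))

lemma logb_self_pow {b : ℝ} (hb : 1 < b) (k : ℕ) : Real.logb b (b ^ k) = k := by
  rw [Real.logb_pow, Real.logb_self_eq_one hb, mul_one]

lemma two_div_sqrt_pi : 2 / √Real.pi = √(2 / Real.pi) * √2 := by
  rw [← Real.sqrt_mul (by positivity), div_mul_eq_mul_div, Real.sqrt_div (by norm_num),
    Real.sqrt_mul_self zero_le_two]

lemma logb_two_div_two_le_of_sqrt_le_pow {n p k : ℕ} (hp : 1 ≤ p) (hn : 0 < n)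
    (h : √n ≤ (p ^ k : ℕ)) : Real.logb 2 n / 2 ≤ ((p : ℝ) - 1) * k := by
  calc Real.logb 2 n / 2 = Real.logb 2 (√n) := by
        rw [Real.logb, Real.logb, Real.log_sqrt n.cast_nonneg, div_right_comm]
    _ ≤ Real.logb 2 ((p : ℝ) ^ k) :=
        Real.logb_le_logb_of_le one_lt_two (by positivity) (by exact_mod_cast h)
    _ = k * Real.logb 2 p := Real.logb_pow _ _ _
    _ ≤ ((p : ℝ) - 1) * k := by
        rw [mul_comm]
        gcongr
        exact logb_two_le_sub_one hp

theorem Efun_le_of_sqrt_le_ordProj {n p : ℕ} (hn : 2 ≤ n) (hp : 2 ≤ p)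
    (h : √n ≤ (p ^ n.factorization p : ℕ)) :
    Efun n p ≤ ⌊(2 / √Real.pi) * n / √(Real.logb 2 n)⌋₊ := by
  have hn1 : (1 : ℝ) < n := by exact_mod_cast hn
  have hk : n.factorization p ≠ 0 := by
    intro h0
    rw [h0, pow_zero, Nat.cast_one, Real.sqrt_le_one] at h
    exact hn1.not_ge h
  rw [Efun, if_neg hk, logb_self_pow (by exact_mod_cast hp)]
  refine (min_le_left _ _).trans (Nat.floor_le_floor ?_)
  have hlog : 0 < Real.logb 2 n := Real.logb_pos one_lt_two hn1
  have hlog_le := logb_two_div_two_le_of_sqrt_le_pow (by omega) (by omega) h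
  set k := n.factorization p
  have hsqrt : √(Real.logb 2 n) ≤ √2 * √(((p : ℝ) - 1) * k) := by
    rw [← Real.sqrt_mul zero_le_two]
    exact Real.sqrt_le_sqrt (by linarith)
  rw [two_div_sqrt_pi, div_le_div_iff₀ (Real.sqrt_pos.2 (by linarith)) (Real.sqrt_pos.2 hlog)]
  calc √(2 / Real.pi) * n * √(Real.logb 2 n)
      ≤ √(2 / Real.pi) * n * (√2 * √(((p : ℝ) - 1) * k)) := by gcongr
    _ = √(2 / Real.pi) * √2 * n * √(((p : ℝ) - 1) * k) := by ring

set_option exponentiation.threshold 2000 in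
lemma logb_two_1260_le : Real.logb 2 1260 ≤ 1308 / 127 := by
  have h : Real.logb 2 (1260 ^ 127) ≤ Real.logb 2 (2 ^ 1308) :=
    Real.logb_le_logb_of_le one_lt_two (by norm_num) (by norm_num)
  rw [Real.logb_pow, logb_self_pow one_lt_two, mul_comm, Nat.cast_ofNat, Nat.cast_ofNat] at h
  exact (le_div_iff₀ (by norm_num)).2 h

lemma le_logb_two_1261 : 10.3 ≤ Real.logb 2 1261 := by
  have h : Real.logb 2 (2 ^ 103) ≤ Real.logb 2 (1261 ^ 10) :=
    Real.logb_le_logb_of_le one_lt_two (by norm_num) (by norm_num)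
  rw [logb_self_pow one_lt_two, Real.logb_pow, Nat.cast_ofNat, Nat.cast_ofNat] at h
  linarith

-- The crossover in `n`: this square is about `10.29978`, while `logb 2 1260` is about `10.29921`
-- and `logb 2 1261` about `10.30035`.
lemma le_sq_sqrt_pi_mul_div_log_two :
    (1308 / 127 : ℝ) ≤ (1.25506 * √Real.pi / Real.log 2) ^ 2 := by
  rw [div_pow, mul_pow, Real.sq_sqrt Real.pi_pos.le, le_div_iff₀ (by positivity)]
  calc (1308 / 127) * Real.log 2 ^ 2 ≤ (1308 / 127) * 0.6931471808 ^ 2 := by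
        gcongr
        exact Real.log_two_lt_d9.le
    _ ≤ 1.25506 ^ 2 * 3.141592 := by norm_num
    _ ≤ 1.25506 ^ 2 * Real.pi := by
        gcongr
        exact Real.pi_gt_d6.le

lemma sq_sqrt_pi_mul_div_log_two_lt :
    (1.25506 * √Real.pi / Real.log 2) ^ 2 < 10.3 := by
  rw [div_pow, mul_pow, Real.sq_sqrt Real.pi_pos.le, div_lt_iff₀ (by positivity)]
  calc 1.25506 ^ 2 * Real.pi ≤ 1.25506 ^ 2 * 3.141593 := by
        gcongr
        exact Real.pi_lt_d6.le
    _ < 10.3 * 0.6931471803 ^ 2 := by norm_num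
    _ ≤ 10.3 * Real.log 2 ^ 2 := by
        gcongr
        exact Real.log_two_gt_d9.le

lemma sqrt_bound_le_log_bound_iff {x N : ℝ} (hx : 0 < x) (hN : 0 < N) :
    (2 / √Real.pi) * N / √x ≤ 2 * N / (Real.log 2 / 1.25506 * x) ↔
      x ≤ (1.25506 * √Real.pi / Real.log 2) ^ 2 := by
  have hlog : 0 < Real.log 2 := Real.log_pos one_lt_two
  have : 0 < √Real.pi := Real.sqrt_pos.2 Real.pi_pos
  obtain ⟨s, hs, rfl⟩ : ∃ s, 0 < s ∧ s ^ 2 = x := ⟨_, Real.sqrt_pos.2 hx, Real.sq_sqrt hx.le⟩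
  rw [Real.sqrt_sq hs.le, sq_le_sq₀ hs.le (by positivity), le_div_iff₀ hlog,
    div_mul_eq_mul_div, div_div, div_le_div_iff₀ (by positivity) (by positivity)]
  have hfactor : 2 * N * (√Real.pi * s) - 2 * N * (Real.log 2 / 1.25506 * s ^ 2) =
      2 * N * s / 1.25506 * (1.25506 * √Real.pi - s * Real.log 2) := by ring
  rw [← sub_nonneg, hfactor, mul_nonneg_iff_of_pos_left (by positivity), sub_nonneg]

theorem Efun_le_of_le_1260 {n p : ℕ} (hn : 2 ≤ n) (hp : 2 ≤ p) (h : n ≤ 1260) :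
    (Efun n p : ℝ) ≤ 2 * n / (Real.log 2 / 1.25506 * Real.logb 2 n) := by
  rcases le_total (√n) (p ^ n.factorization p : ℕ) with hsqrt | hsqrt
  · have hlog : Real.logb 2 n ≤ Real.logb 2 1260 :=
      Real.logb_le_logb_of_le one_lt_two (by positivity) (by exact_mod_cast h)
    have hlog_pos : 0 < Real.logb 2 n := Real.logb_pos one_lt_two (by exact_mod_cast hn)
    exact ((Nat.le_floor_iff (by positivity)).1 (Efun_le_of_sqrt_le_ordProj hn hp hsqrt)).trans
      ((sqrt_bound_le_log_bound_iff hlog_pos (by positivity)).2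
        ((hlog.trans logb_two_1260_le).trans le_sq_sqrt_pi_mul_div_log_two))
  · exact Efun_le_of_ordProj_le_sqrt hn hsqrt

theorem Efun_le_of_1261_le {n p : ℕ} (hp : 2 ≤ p) (h : 1261 ≤ n) :
    (Efun n p : ℝ) ≤ (2 / √Real.pi) * n / √(Real.logb 2 n) := by
  have hn : 2 ≤ n := by omega
  rcases le_total (√n) (p ^ n.factorization p : ℕ) with hsqrt | hsqrt
  · exact (Nat.le_floor_iff (by positivity)).1 (Efun_le_of_sqrt_le_ordProj hn hp hsqrt)
  · refine (Efun_le_of_ordProj_le_sqrt hn hsqrt).trans (le_of_not_ge fun hle ↦ ?_)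
    have hlog : Real.logb 2 1261 ≤ Real.logb 2 n :=
      Real.logb_le_logb_of_le one_lt_two (by norm_num) (by exact_mod_cast h)
    have hlog_pos : 0 < Real.logb 2 n := Real.logb_pos one_lt_two (by exact_mod_cast hn)
    have hlog_le := (sqrt_bound_le_log_bound_iff hlog_pos (by positivity)).1 hle
    linarith [le_logb_two_1261, sq_sqrt_pi_mul_div_log_two_lt]

end BoundsOnE

section StepSum

/-- `stepSum f q x` is `f (x + q - 1) + f (x + q - 3) + ⋯ + f (x - q + 1)`, the sum of `f` over the
lengths of the hooks into which an `x × q` grid is cut when `q ≤ x`. -/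
def stepSum (f : ℤ → ℤ) (q : ℕ) (x : ℤ) : ℤ :=
  ∑ k ∈ Finset.range q, f (x + q - 1 - 2 * k)

variable (f : ℤ → ℤ)

lemma stepSum_zero (x : ℤ) : stepSum f 0 x = 0 := rfl

lemma stepSum_one (x : ℤ) : stepSum f 1 x = f x := by
  simp [stepSum]

lemma stepSum_succ_add_one (q : ℕ) (x : ℤ) :
    stepSum f (q + 1) (x + 1) = stepSum f q x + f (x + (q + 1)) := by
  rw [stepSum, Finset.sum_range_succ']
  push_cast
  congr 1
  · exact Finset.sum_congr rfl fun k _ ↦ congrArg f (by ring)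
  · exact congrArg f (by ring)

lemma stepSum_succ_sub_one (q : ℕ) (x : ℤ) :
    stepSum f (q + 1) (x - 1) = stepSum f q x + f (x - (q + 1)) := by
  rw [stepSum, Finset.sum_range_succ]
  push_cast
  congr 1
  · exact Finset.sum_congr rfl fun k _ ↦ congrArg f (by ring)
  · exact congrArg f (by ring)

lemma stepSum_add_two (q : ℕ) (x : ℤ) :
    stepSum f (q + 2) x = stepSum f q x + (f (x + (q + 1)) + f (x - (q + 1))) := by
  have h := stepSum_succ_add_one f (q + 1) (x - 1)
  rw [sub_add_cancel, stepSum_succ_sub_one] at h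
  rw [h, add_assoc, add_comm (f _)]
  push_cast
  congr 3
  ring

lemma stepSum_add_one_add_stepSum_sub_one (q : ℕ) (x : ℤ) :
    stepSum f (q + 1) (x + 1) + stepSum f (q + 1) (x - 1) =
      stepSum f (q + 2) x + stepSum f q x := by
  rw [stepSum_succ_add_one, stepSum_succ_sub_one, stepSum_add_two]
  ring

variable {f}

lemma stepSum_zero_right (hodd : ∀ x, f (-x) = -f x) (q : ℕ) : stepSum f q 0 = 0 := by
  induction q using Nat.twoStepInduction with
  | zero => exact stepSum_zero f 0
  | one =>
    have h := hodd 0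
    rw [neg_zero] at h
    rw [stepSum_one]
    omega
  | more q ih _ => rw [stepSum_add_two, ih, zero_add, zero_add, zero_sub, hodd, add_neg_cancel]

lemma mul_add_sub_le_two_mul_stepSum {x : ℤ}
    (hpair : ∀ y : ℕ, f (x + (y + 2)) + f (x - (y + 2)) ≤ f (x + y) + f (x - y)) (q : ℕ) :
    q * (f (x + (q + 1)) + f (x - (q + 1))) ≤ 2 * stepSum f q x := by
  induction q using Nat.twoStepInduction with
  | zero => simp [stepSum_zero]
  | one =>
    have h := hpair 0
    norm_num at h
    rw [stepSum_one]
    norm_num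
    linarith
  | more q ih _ =>
    have h := mul_le_mul_of_nonneg_left (hpair (q + 1)) (show (0 : ℤ) ≤ q + 2 by positivity)
    rw [stepSum_add_two]
    push_cast at h ⊢
    rw [show (q : ℤ) + 2 + 1 = q + 1 + 2 by ring]
    linarith

end StepSum

section WalkSum

/-- For `x ≥ 0`, `walkSum K x` is the central coefficient of
`(1 + t + ⋯ + t ^ (x - 1)) * (1 + t) ^ K`; it is extended to an odd function of `x`. -/
def walkSum : ℕ → ℤ → ℤ
  | 0, x => x.sign
  | K + 1, x => walkSum K (x + 1) + walkSum K (x - 1)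

lemma walkSum_succ (K : ℕ) (x : ℤ) :
    walkSum (K + 1) x = walkSum K (x + 1) + walkSum K (x - 1) := rfl

lemma walkSum_neg (K : ℕ) (x : ℤ) : walkSum K (-x) = -walkSum K x := by
  induction K generalizing x with
  | zero => exact Int.sign_neg x
  | succ K ih =>
    rw [walkSum_succ, walkSum_succ, show -x + 1 = -(x - 1) by ring,
      show -x - 1 = -(x + 1) by ring, ih, ih]
    ring

lemma walkSum_zero_right (K : ℕ) : walkSum K 0 = 0 := by
  have h := walkSum_neg K 0
  rw [neg_zero] at h
  omega

lemma sign_add_sub_le {x y : ℤ} (hx : 0 ≤ x) (hy : 0 ≤ y) :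
    (x + (y + 2)).sign + (x - (y + 2)).sign ≤ (x + y).sign + (x - y).sign := by
  rw [Int.sign_eq_one_of_pos (by omega : 0 < x + (y + 2))]
  rcases lt_trichotomy x y with h | rfl | h
  · rw [Int.sign_eq_neg_one_of_neg (by omega : x - (y + 2) < 0),
      Int.sign_eq_neg_one_of_neg (by omega : x - y < 0),
      Int.sign_eq_one_of_pos (by omega : 0 < x + y)]
  · rw [Int.sign_eq_neg_one_of_neg (by omega : x - (x + 2) < 0), sub_self,
      Int.sign_zero, add_zero, add_neg_cancel]
    exact Int.sign_nonneg_iff.2 (by omega)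
  · rw [Int.sign_eq_one_of_pos (by omega : 0 < x + y), Int.sign_eq_one_of_pos (sub_pos.2 h)]
    rcases Int.sign_trichotomy (x - (y + 2)) with h | h | h <;> omega

lemma walkSum_add_sub_le (K : ℕ) {x y : ℤ} (hx : 0 ≤ x) (hy : 0 ≤ y) :
    walkSum K (x + (y + 2)) + walkSum K (x - (y + 2)) ≤ walkSum K (x + y) + walkSum K (x - y) := by
  induction K generalizing x with
  | zero => exact sign_add_sub_le hx hy
  | succ K ih =>
    rcases hx.eq_or_lt with rfl | hx
    · rw [zero_add, zero_sub, zero_add, zero_sub, walkSum_neg, walkSum_neg, add_neg_cancel,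
        add_neg_cancel]
    · have hright := ih (x := x + 1) (by omega)
      have hleft := ih (x := x - 1) (by omega)
      simp only [walkSum_succ]
      ring_nf at hright hleft ⊢
      linarith

-- Uniform steps average `walkSum` less than binomial steps do; the recursion in `q` compares
-- `stepSum` at `q + 2` and at `q` by pairing opposite steps.
theorem two_pow_mul_stepSum_walkSum_le (K q : ℕ) {x : ℤ} (hx : 0 ≤ x) :
    2 ^ q * stepSum (walkSum K) (q + 1) x ≤ (q + 1) * walkSum (K + q) x := by
  induction q generalizing x with
  | zero => simp [stepSum_one]
  | succ q ih =>
    rcases hx.eq_or_lt with rfl | hx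
    · rw [stepSum_zero_right (walkSum_neg K), walkSum_zero_right, mul_zero, mul_zero]
    have hright := ih (x := x + 1) (by omega)
    have hleft := ih (x := x - 1) (by omega)
    have hmean : 2 * (q + 1) * stepSum (walkSum K) (q + 2) x ≤ (q + 2) *
        (stepSum (walkSum K) (q + 1) (x + 1) + stepSum (walkSum K) (q + 1) (x - 1)) := by
      have hpair := mul_add_sub_le_two_mul_stepSum
        (fun y ↦ walkSum_add_sub_le K hx.le (Int.natCast_nonneg y)) q
      rw [stepSum_add_one_add_stepSum_sub_one, stepSum_add_two]
      linarith
    refine le_of_mul_le_mul_left ?_ (show (0 : ℤ) < q + 1 by positivity)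
    calc (q + 1) * (2 ^ (q + 1) * stepSum (walkSum K) (q + 1 + 1) x)
        = 2 ^ q * (2 * (q + 1) * stepSum (walkSum K) (q + 2) x) := by ring
      _ ≤ 2 ^ q * ((q + 2) *
            (stepSum (walkSum K) (q + 1) (x + 1) + stepSum (walkSum K) (q + 1) (x - 1))) := by
          gcongr
      _ = (q + 2) * (2 ^ q * stepSum (walkSum K) (q + 1) (x + 1) +
            2 ^ q * stepSum (walkSum K) (q + 1) (x - 1)) := by ring
      _ ≤ (q + 2) * ((q + 1) * walkSum (K + q) (x + 1) + (q + 1) * walkSum (K + q) (x - 1)) := by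
          gcongr
      _ = (q + 1) * (((q + 1 : ℕ) + 1) * walkSum (K + (q + 1)) x) := by
          rw [← add_assoc, walkSum_succ]
          push_cast
          ring

lemma walkSum_of_lt_neg {K : ℕ} {x : ℤ} (hx : x < -K) : walkSum K x = -2 ^ K := by
  induction K generalizing x with
  | zero => exact Int.sign_eq_neg_one_of_neg hx
  | succ K ih =>
    push_cast at hx
    rw [walkSum_succ, ih (by omega), ih (by omega)]
    ring

lemma walkSum_sub_walkSum_sub_two (K i : ℕ) :
    walkSum K (2 * i - K + 1) - walkSum K (2 * i - K - 1) = 2 * K.choose i ∧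
      walkSum K (2 * i - K) - walkSum K (2 * i - K - 2) = (K + 1).choose i := by
  induction K generalizing i with
  | zero =>
    simp only [walkSum]
    match i with
    | 0 => decide
    | 1 => decide
    | i + 2 =>
      push_cast
      rw [Int.sign_eq_one_of_pos (by omega), Int.sign_eq_one_of_pos (by omega),
        Int.sign_eq_one_of_pos (by omega), Int.sign_eq_one_of_pos (by omega)]
      simp [Nat.choose_eq_zero_of_lt]
  | succ K ih =>
    simp only [walkSum_succ]
    match i with
    | 0 =>
      obtain ⟨hodd, heven⟩ := ih 0
      have h₁ : walkSum K (-K - 1) = -2 ^ K := walkSum_of_lt_neg (by omega)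
      have h₂ : walkSum K (-K - 2) = -2 ^ K := walkSum_of_lt_neg (by omega)
      have h₃ : walkSum K (-K - 3) = -2 ^ K := walkSum_of_lt_neg (by omega)
      have h₄ : walkSum K (-K - 4) = -2 ^ K := walkSum_of_lt_neg (by omega)
      simp only [Nat.choose_zero_right] at hodd heven ⊢
      push_cast at hodd heven ⊢
      ring_nf at hodd heven h₁ h₂ h₃ h₄ ⊢
      constructor <;> linarith
    | i + 1 =>
      obtain ⟨hodd, heven⟩ := ih i
      obtain ⟨hodd', heven'⟩ := ih (i + 1)
      rw [Nat.choose_succ_succ' K, Nat.choose_succ_succ' (K + 1)]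
      push_cast at hodd heven hodd' heven' ⊢
      ring_nf at hodd heven hodd' heven' ⊢
      constructor <;> linarith

lemma walkSum_two_mul_one (r : ℕ) : walkSum (2 * r) 1 = r.centralBinom := by
  have h := (walkSum_sub_walkSum_sub_two (2 * r) r).1
  push_cast at h
  rw [sub_self, zero_add, zero_sub, walkSum_neg] at h
  rw [Nat.centralBinom]
  omega

lemma two_mul_walkSum_two_mul_add_one_one (r : ℕ) :
    2 * walkSum (2 * r + 1) 1 = (r + 1).centralBinom := by
  have h := (walkSum_sub_walkSum_sub_two (2 * r + 1) (r + 1)).2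
  push_cast at h
  rw [show 2 * ((r : ℤ) + 1) - (2 * r + 1) = 1 by ring, show (1 : ℤ) - 2 = -1 by ring,
    walkSum_neg] at h
  rw [Nat.centralBinom]
  linarith [show (2 * r + 1 + 1).choose (r + 1) = (2 * (r + 1)).choose (r + 1) from rfl]

end WalkSum

section CentralBinomial

lemma wallis_W_eq_centralBinom (r : ℕ) :
    Real.Wallis.W r = (4 ^ r) ^ 2 / ((r.centralBinom : ℝ) ^ 2 * (2 * r + 1)) := by
  have hchoose : (r.centralBinom : ℝ) = (2 * r).factorial / (r.factorial : ℝ) ^ 2 := by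
    rw [Nat.centralBinom, Nat.cast_choose ℝ (by omega : r ≤ 2 * r), two_mul, Nat.add_sub_cancel, sq]
  rw [Real.Wallis.W_eq_factorial_ratio, hchoose, pow_mul, ← pow_mul 4 r 2, mul_comm r 2,
    pow_mul 4 2 r]
  norm_num
  field_simp

theorem centralBinom_le {r : ℕ} (hr : r ≠ 0) :
    (r.centralBinom : ℝ) ≤ 4 ^ r / √(Real.pi * r) := by
  have : (0 : ℝ) < r := by positivity
  have hc : (0 : ℝ) < r.centralBinom := Nat.cast_pos.2 r.centralBinom_pos
  have hwallis := Real.Wallis.le_W r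
  rw [wallis_W_eq_centralBinom, div_mul_div_comm,
    div_le_div_iff₀ (by positivity) (by positivity)] at hwallis
  rw [le_div_iff₀ (by positivity)]
  refine (sq_le_sq₀ (by positivity) (by positivity)).1 ?_
  rw [mul_pow, Real.sq_sqrt (by positivity)]
  set c := (r.centralBinom : ℝ) ^ 2
  refine le_of_mul_le_mul_right ?_ (show (0 : ℝ) < (2 * r + 2) * 2 by positivity)
  calc c * (Real.pi * r) * ((2 * r + 2) * 2) = Real.pi * c * (4 * r * (r + 1)) := by ring
    _ ≤ Real.pi * c * (2 * r + 1) ^ 2 := by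
        gcongr
        linarith
    _ = (2 * r + 1) * Real.pi * (c * (2 * r + 1)) := by ring
    _ ≤ (4 ^ r) ^ 2 * ((2 * r + 2) * 2) := hwallis

theorem walkSum_one_le {K : ℕ} (hK : K ≠ 0) :
    (walkSum K 1 : ℝ) ≤ 2 ^ K * (√(2 / Real.pi) / √K) := by
  have hsqrt : √(2 / Real.pi) / √K = 1 / √(Real.pi * (K / 2)) := by
    rw [← Real.sqrt_div (by positivity), one_div, ← Real.sqrt_inv]
    congr 1
    field_simp
  rw [hsqrt, mul_one_div]
  obtain ⟨r, rfl | rfl⟩ := Nat.even_or_odd' K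
  · have hr := centralBinom_le (r := r) (by omega)
    rw [walkSum_two_mul_one, pow_mul]
    push_cast
    rw [mul_div_cancel_left₀ _ two_ne_zero]
    norm_num at hr ⊢
    exact hr
  · have hwalk : 2 * (walkSum (2 * r + 1) 1 : ℝ) = (r + 1).centralBinom := by
      exact_mod_cast two_mul_walkSum_two_mul_add_one_one r
    refine le_of_mul_le_mul_left ?_ (zero_lt_two' ℝ)
    calc 2 * (walkSum (2 * r + 1) 1 : ℝ)
        ≤ 4 ^ (r + 1) / √(Real.pi * (r + 1 : ℕ)) :=
          hwalk.trans_le (centralBinom_le r.succ_ne_zero)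
      _ ≤ 4 ^ (r + 1) / √(Real.pi * ((2 * r + 1 : ℕ) / 2)) := by
          gcongr
          push_cast
          linarith
      _ = 2 * (2 ^ (2 * r + 1) / √(Real.pi * ((2 * r + 1 : ℕ) / 2))) := by
          rw [← mul_div_assoc, pow_succ 2 (2 * r), pow_mul, pow_succ]
          norm_num
          ring

end CentralBinomial

section RelativeRank

variable {R M N : Type*} [Ring R] [AddCommGroup M] [Module R M] [AddCommGroup N] [Module R N]

/-- The rank of `B` relative to `A`: the minimal number of elements of `B` which generate `B`
modulo `A`, whether or not `A` is contained in `B`. -/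
noncomputable def relRank (A B : Submodule R M) : ℕ :=
  (B.map A.mkQ).spanFinrank

lemma relRank_le_card {A B : Submodule R M} {T : Finset M} (hT : (T : Set M) ⊆ B)
    (h : B ≤ A ⊔ Submodule.span R T) : relRank A B ≤ T.card := by
  have hspan : B.map A.mkQ = Submodule.span R (A.mkQ '' T) := by
    rw [← Submodule.map_span]
    refine le_antisymm ?_ (Submodule.map_mono (Submodule.span_le.2 hT))
    simpa [Submodule.map_sup] using Submodule.map_mono (f := A.mkQ) h
  rw [relRank, hspan]
  calc (Submodule.span R (A.mkQ '' T)).spanFinrank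
      ≤ (A.mkQ '' T).ncard := Submodule.spanFinrank_span_le_ncard_of_finite (T.finite_toSet.image _)
    _ ≤ (T : Set M).ncard := Set.ncard_image_le T.finite_toSet
    _ = T.card := Set.ncard_coe_finset T

lemma relRank_bot_left (B : Submodule R M) : relRank ⊥ B = B.spanFinrank :=
  Submodule.spanFinrank_map_eq_of_injective _ (LinearMap.ker_eq_bot.1 (Submodule.ker_mkQ ⊥))

lemma relRank_eq_zero_of_le {A B : Submodule R M} (h : B ≤ A) : relRank A B = 0 := by
  rw [relRank, LinearMap.le_ker_iff_map.1 (h.trans_eq A.ker_mkQ.symm),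
    Submodule.spanFinrank_bot]

lemma relRank_map (A : Submodule R N) (f : M →ₗ[R] N) (B : Submodule R M) :
    relRank A (B.map f) = relRank (A.comap f) B := by
  have hinj : Function.Injective ((A.comap f).mapQ A f le_rfl) := by
    rw [← LinearMap.ker_eq_bot, Submodule.ker_mapQ, Submodule.mkQ_map_self]
  rw [relRank, relRank, ← Submodule.spanFinrank_map_eq_of_injective _ hinj, ← Submodule.map_comp,
    ← Submodule.map_comp, Submodule.mapQ_mkQ]

variable [IsNoetherian R M]

lemma exists_finset_card_le_relRank (A B : Submodule R M) :
    ∃ T : Finset M, T.card ≤ relRank A B ∧ (T : Set M) ⊆ B ∧ B ≤ A ⊔ Submodule.span R T := by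
  classical
  obtain ⟨T, hcard, hT⟩ :=
    (IsNoetherian.noetherian (B.map A.mkQ)).exists_span_finset_card_eq_spanFinrank
  have hTB : (T : Set (M ⧸ A)) ⊆ A.mkQ '' B := by
    rw [← Submodule.map_coe, ← hT]
    exact Submodule.subset_span
  obtain ⟨T', hT'B, hinj, rfl⟩ := Finset.exists_subset_injOn_image_eq_of_surjOn _ _ hTB
  refine ⟨T', ?_, hT'B, ?_⟩
  · rw [relRank, ← hcard, Finset.card_image_of_injOn hinj]
  · rw [Finset.coe_image, ← Submodule.map_span] at hT
    have h := Submodule.comap_mono (f := A.mkQ) hT.ge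
    rw [Submodule.comap_map_mkQ, Submodule.comap_map_mkQ] at h
    exact le_sup_right.trans h

-- `B / (A ⊓ B)` maps onto `B' / (A' ⊓ B')`.
lemma relRank_le_relRank {A B A' B' : Submodule R M} (hBB' : B ≤ B') (hB' : B' ≤ A' ⊔ B)
    (hAA' : A ⊓ B ≤ A') : relRank A' B' ≤ relRank A B := by
  obtain ⟨T, hcard, hTB, hT⟩ := exists_finset_card_le_relRank A B
  refine (relRank_le_card (hTB.trans hBB') (hB'.trans (sup_le le_sup_left ?_))).trans hcard
  calc B ≤ (A ⊔ Submodule.span R T) ⊓ B := le_inf hT le_rfl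
    _ = A ⊓ B ⊔ Submodule.span R T := by
      rw [sup_comm A, sup_inf_assoc_of_le A (Submodule.span_le.2 hTB), sup_comm]
    _ ≤ A' ⊔ Submodule.span R T := sup_le_sup_right hAA' _

lemma relRank_antitone_left (B : Submodule R M) : Antitone fun A ↦ relRank A B := fun _ _ h ↦
  relRank_le_relRank le_rfl le_sup_right (inf_le_left.trans h)

lemma relRank_le_add (A : Submodule R M) {B C : Submodule R M} (h : B ≤ C) :
    relRank A C ≤ relRank A B + relRank B C := by
  classical
  obtain ⟨T, hTcard, hTB, hT⟩ := exists_finset_card_le_relRank A B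
  obtain ⟨U, hUcard, hUC, hU⟩ := exists_finset_card_le_relRank B C
  refine (relRank_le_card (T := T ∪ U) ?_ ?_).trans
    ((Finset.card_union_le T U).trans (add_le_add hTcard hUcard))
  · rw [Finset.coe_union]
    exact Set.union_subset (hTB.trans h) hUC
  · rw [Finset.coe_union, Submodule.span_union, ← sup_assoc]
    exact hU.trans (sup_le_sup_right hT _)

lemma relRank_le_sum_of_antitone {X : ℕ → Submodule R M} (hX : Antitone X) (k : ℕ) :
    relRank (X k) (X 0) ≤ ∑ j ∈ Finset.range k, relRank (X (j + 1)) (X j) := by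
  induction k with
  | zero => exact (relRank_eq_zero_of_le le_rfl).le
  | succ k ih =>
    rw [Finset.sum_range_succ_comm]
    exact (relRank_le_add _ (hX k.zero_le)).trans (Nat.add_le_add_left ih _)

lemma spanFinrank_le_add (A S : Submodule R M) :
    S.spanFinrank ≤ (S ⊓ A).spanFinrank + (S.map A.mkQ).spanFinrank := by
  rw [← relRank_bot_left, ← relRank_bot_left]
  refine (relRank_le_add ⊥ (inf_le_left : S ⊓ A ≤ S)).trans (Nat.add_le_add_left ?_ _)
  exact relRank_le_relRank le_rfl le_sup_right (inf_comm A S).le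

lemma spanFinrank_le_sum_of_le_iSup {ι : Type*} {N : ι → Submodule R M} {b : ι → ℕ}
    (hb : ∀ i, ∀ A B : Submodule R M, B ≤ A ⊔ N i → relRank A B ≤ b i) (I : Finset ι)
    {S : Submodule R M} (hS : S ≤ ⨆ i ∈ I, N i) : S.spanFinrank ≤ ∑ i ∈ I, b i := by
  classical
  induction I using Finset.induction_on generalizing S with
  | empty =>
    have hS0 : S = ⊥ := by simpa using hS
    simp [hS0]
  | insert i I hi ih =>
    rw [Finset.iSup_insert, sup_comm] at hS
    calc S.spanFinrank
        ≤ (S ⊓ ⨆ i ∈ I, N i).spanFinrank + relRank (⨆ i ∈ I, N i) S := spanFinrank_le_add _ S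
      _ ≤ ∑ i ∈ I, b i + b i := add_le_add (ih inf_le_right) (hb i _ S hS)
      _ = ∑ i ∈ insert i I, b i := by rw [Finset.sum_insert hi, add_comm]

end RelativeRank

section LayerChain

variable {R M : Type*} [Ring R] [AddCommGroup M] [Module R M] {ζ : Module.End R M}

/-- The layers of a submodule `B` along the filtration by the ranges of the powers of `ζ`, seen in
the quotient by the range of `ζ`; the index is shifted by one, and the first term is `⊥`. -/
def layerChain (ζ : Module.End R M) (B : Submodule R M) :
    ℕ → Submodule R (M ⧸ LinearMap.range ζ)
  | 0 => ⊥
  | j + 1 => (B.comap (ζ ^ j)).map (LinearMap.range ζ).mkQ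

lemma layerChain_mono (j : ℕ) : Monotone fun B ↦ layerChain ζ B j := by
  intro A B h
  cases j with
  | zero => exact le_rfl
  | succ j => exact Submodule.map_mono (Submodule.comap_mono h)

lemma layerChain_le_layerChain_map_succ (B : Submodule R M) (j : ℕ) :
    layerChain ζ B j ≤ layerChain ζ (B.map ζ) (j + 1) := by
  cases j with
  | zero => exact bot_le
  | succ j =>
    refine Submodule.map_mono fun x hx ↦ ?_
    rw [Submodule.mem_comap, pow_succ', Module.End.mul_apply]
    exact Submodule.mem_map_of_mem hx

lemma monotone_layerChain {B : Submodule R M} (hB : B.map ζ ≤ B) : Monotone (layerChain ζ B) :=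
  monotone_nat_of_le_succ fun j ↦
    (layerChain_le_layerChain_map_succ B j).trans (layerChain_mono (j + 1) hB)

lemma le_of_le_sup_map_of_isNilpotent (hζ : IsNilpotent ζ) {B C : Submodule R M}
    (hC : C.map ζ ≤ C) (h : B ≤ C ⊔ B.map ζ) : B ≤ C := by
  have hpow (k : ℕ) : B ≤ C ⊔ B.map (ζ ^ k) := by
    induction k with
    | zero => simp [Module.End.one_eq_id]
    | succ k ih =>
      calc B ≤ C ⊔ B.map ζ := h
        _ ≤ C ⊔ (C ⊔ B.map (ζ ^ k)).map ζ := sup_le_sup_left (Submodule.map_mono ih) _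
        _ = C ⊔ C.map ζ ⊔ B.map (ζ ^ (k + 1)) := by
          rw [Submodule.map_sup, ← Submodule.map_comp, ← Module.End.mul_eq_comp, ← pow_succ',
            sup_assoc]
        _ = C ⊔ B.map (ζ ^ (k + 1)) := by rw [sup_eq_left.2 hC]
  obtain ⟨k, hk⟩ := hζ
  simpa [hk] using hpow k

variable [IsNoetherian R M]

lemma relRank_le_relRank_sup_map (hζ : IsNilpotent ζ) (hstable : ∀ N : Submodule R M, N.map ζ ≤ N)
    {A B : Submodule R M} : relRank A B ≤ relRank (A ⊔ B.map ζ) B := by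
  obtain ⟨T, hcard, hTB, hT⟩ := exists_finset_card_le_relRank (A ⊔ B.map ζ) B
  refine (relRank_le_card hTB ?_).trans hcard
  refine le_of_le_sup_map_of_isNilpotent hζ (hstable _) ?_
  rwa [sup_right_comm]

lemma relRank_sup_inf_range_pow_le {A B : Submodule R M} (hAB : A ≤ B) (j : ℕ) :
    relRank (A ⊔ B ⊓ LinearMap.range (ζ ^ (j + 1))) (A ⊔ B ⊓ LinearMap.range (ζ ^ j)) ≤
      relRank (layerChain ζ A (j + 1)) (layerChain ζ B (j + 1)) := by
  have hlift : (A.comap (ζ ^ j) ⊔ LinearMap.range ζ) ⊓ B.comap (ζ ^ j) ≤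
      (A ⊔ B ⊓ LinearMap.range (ζ ^ (j + 1))).comap (ζ ^ j) := by
    rintro x ⟨hx, hxB⟩
    obtain ⟨y, hy, _, ⟨u, rfl⟩, rfl⟩ := Submodule.mem_sup.1 hx
    have hu : (ζ ^ (j + 1)) u ∈ B := by
      rw [pow_succ, Module.End.mul_apply, ← add_sub_cancel_left y (ζ u), map_sub]
      exact B.sub_mem hxB (hAB hy)
    rw [Submodule.mem_comap, map_add, ← Module.End.mul_apply, ← pow_succ]
    exact Submodule.add_mem_sup hy ⟨hu, u, rfl⟩
  calc relRank (A ⊔ B ⊓ LinearMap.range (ζ ^ (j + 1))) (A ⊔ B ⊓ LinearMap.range (ζ ^ j))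
      ≤ relRank (A ⊔ B ⊓ LinearMap.range (ζ ^ (j + 1))) ((B.comap (ζ ^ j)).map (ζ ^ j)) := by
        rw [Submodule.map_comap_eq, inf_comm (LinearMap.range _)]
        exact relRank_le_relRank le_sup_right (sup_le_sup_right le_sup_left _) inf_le_left
    _ = relRank ((A ⊔ B ⊓ LinearMap.range (ζ ^ (j + 1))).comap (ζ ^ j)) (B.comap (ζ ^ j)) :=
        relRank_map _ _ _
    _ ≤ relRank (A.comap (ζ ^ j) ⊔ LinearMap.range ζ) (B.comap (ζ ^ j)) :=
        relRank_le_relRank le_rfl le_sup_right hlift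
    _ = relRank (layerChain ζ A (j + 1)) (layerChain ζ B (j + 1)) := by
        rw [layerChain, layerChain, relRank_map, Submodule.comap_map_mkQ, sup_comm]

lemma relRank_le_sum_relRank_layerChain_succ {p : ℕ} (hζ : ζ ^ p = 0) {A B : Submodule R M}
    (hAB : A ≤ B) : relRank A B ≤
      ∑ j ∈ Finset.range p, relRank (layerChain ζ A (j + 1)) (layerChain ζ B (j + 1)) := by
  have hanti : Antitone fun j ↦ A ⊔ B ⊓ LinearMap.range (ζ ^ j) :=
    antitone_nat_of_succ_le fun j ↦ by
      rw [pow_succ]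
      gcongr
      exact LinearMap.range_comp_le_range _ _
  have hsum := relRank_le_sum_of_antitone hanti p
  simp only [hζ, pow_zero, Module.End.one_eq_id, LinearMap.range_id, LinearMap.range_zero,
    inf_bot_eq, inf_top_eq, sup_bot_eq, sup_eq_right.2 hAB] at hsum
  exact hsum.trans (Finset.sum_le_sum fun j _ ↦ relRank_sup_inf_range_pow_le hAB j)

theorem relRank_le_sum_relRank_layerChain (hstable : ∀ N : Submodule R M, N.map ζ ≤ N) {p : ℕ}
    (hζ : ζ ^ p = 0) {A B : Submodule R M} (hAB : A ≤ B) :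
    relRank A B ≤ ∑ j ∈ Finset.range p,
      relRank (layerChain ζ A (j + 1) ⊔ layerChain ζ B j) (layerChain ζ B (j + 1)) := by
  refine (relRank_le_relRank_sup_map ⟨p, hζ⟩ hstable).trans
    ((relRank_le_sum_relRank_layerChain_succ hζ (sup_le hAB (hstable B))).trans ?_)
  refine Finset.sum_le_sum fun j _ ↦ relRank_antitone_left _ (sup_le ?_ ?_)
  · exact layerChain_mono (j + 1) le_sup_left
  · exact (layerChain_le_layerChain_map_succ B j).trans (layerChain_mono (j + 1) le_sup_right)

end LayerChain

section Grid

variable {L : Type*} {r : L → L → ℤ} {f : ℤ → ℤ}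

lemma sum_range_add_sum_range_le [Preorder L]
    (hf : ∀ Y : ℕ → L, Monotone Y → ∀ l : ℕ, ∑ i ∈ Finset.range l, r (Y i) (Y (i + 1)) ≤ f l)
    {Y Z : ℕ → L} (hY : Monotone Y) (hZ : Monotone Z) {m : ℕ} (hYZ : Y m = Z 0) (k : ℕ) :
    ∑ i ∈ Finset.range m, r (Y i) (Y (i + 1)) + ∑ j ∈ Finset.range k, r (Z j) (Z (j + 1)) ≤
      f (m + k) := by
  let W : ℕ → L := fun t ↦ if t ≤ m then Y t else Z (t - m)
  have hleft {i : ℕ} (hi : i ≤ m) : W i = Y i := if_pos hi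
  have hright (j : ℕ) : W (m + j) = Z j := by
    rcases Nat.eq_zero_or_pos j with rfl | hj
    · exact (hleft le_rfl).trans hYZ
    · exact (if_neg (by omega)).trans (by rw [Nat.add_sub_cancel_left])
  have hmono : Monotone W := monotone_nat_of_le_succ fun t ↦ by
    rcases Nat.lt_or_ge t m with ht | ht
    · rw [hleft ht.le, hleft ht]
      exact hY t.le_succ
    · obtain ⟨j, rfl⟩ := Nat.exists_eq_add_of_le ht
      rw [add_assoc, hright, hright]
      exact hZ j.le_succ
  have hchain := hf W hmono (m + k)
  simp only [Finset.sum_range_add, Nat.cast_add, add_assoc, hright] at hchain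
  refine le_of_eq_of_le (congrArg (· + _) (Finset.sum_congr rfl fun i hi ↦ ?_)) hchain
  rw [Finset.mem_range] at hi
  rw [hleft hi.le, hleft hi]

-- Cut the grid into hooks; the steps along each hook are steps of a chain.
theorem sum_grid_le_stepSum [SemilatticeSup L] (hr : ∀ B, Antitone fun A ↦ r A B)
    (hodd : ∀ x, f (-x) = -f x)
    (hf : ∀ Y : ℕ → L, Monotone Y → ∀ l : ℕ, ∑ i ∈ Finset.range l, r (Y i) (Y (i + 1)) ≤ f l)
    (l q : ℕ) {X : ℕ → ℕ → L} (hX : ∀ j, Monotone fun i ↦ X i j) (hX' : ∀ i, Monotone (X i)) :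
    ∑ i ∈ Finset.range l, ∑ j ∈ Finset.range q,
      r (X i (j + 1) ⊔ X (i + 1) j) (X (i + 1) (j + 1)) ≤ stepSum f q l := by
  induction q generalizing l X with
  | zero => simp [stepSum_zero]
  | succ q ih =>
    rcases l with _ | l
    · rw [Nat.cast_zero, stepSum_zero_right hodd, Finset.sum_range_zero]
    have hhook := sum_range_add_sum_range_le hf (hX 1)
      ((hX' (l + 1)).comp (Order.succ_mono : Monotone fun j : ℕ ↦ j + 1))
      (m := l + 1) rfl q
    have hrow : ∑ i ∈ Finset.range (l + 1), r (X i 1 ⊔ X (i + 1) 0) (X (i + 1) 1) ≤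
        ∑ i ∈ Finset.range (l + 1), r (X i 1) (X (i + 1) 1) :=
      Finset.sum_le_sum fun i _ ↦ hr _ le_sup_left
    have hcol : ∑ j ∈ Finset.range q, r (X l (j + 2) ⊔ X (l + 1) (j + 1)) (X (l + 1) (j + 2)) ≤
        ∑ j ∈ Finset.range q, r (X (l + 1) (j + 1)) (X (l + 1) (j + 2)) :=
      Finset.sum_le_sum fun j _ ↦ hr _ le_sup_right
    have hrest := ih l (fun j ↦ hX (j + 1))
      fun i ↦ (hX' i).comp (Order.succ_mono : Monotone fun j : ℕ ↦ j + 1)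
    calc ∑ i ∈ Finset.range (l + 1), ∑ j ∈ Finset.range (q + 1),
          r (X i (j + 1) ⊔ X (i + 1) j) (X (i + 1) (j + 1))
        = ∑ i ∈ Finset.range l, ∑ j ∈ Finset.range q,
            r (X i (j + 2) ⊔ X (i + 1) (j + 1)) (X (i + 1) (j + 2)) +
          (∑ i ∈ Finset.range (l + 1), r (X i 1 ⊔ X (i + 1) 0) (X (i + 1) 1) +
            ∑ j ∈ Finset.range q, r (X l (j + 2) ⊔ X (l + 1) (j + 1)) (X (l + 1) (j + 2))) := by
          simp_rw [Finset.sum_range_succ' _ q]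
          rw [Finset.sum_add_distrib, Finset.sum_range_succ]
          ring
      _ ≤ stepSum f q l + f ((l + 1 : ℕ) + q) :=
          add_le_add hrest ((add_le_add hrow hcol).trans hhook)
      _ = stepSum f (q + 1) (l + 1 : ℕ) := by
          push_cast
          rw [stepSum_succ_add_one, add_right_comm, add_assoc (l : ℤ)]

end Grid

section ChainOfSubmodules

variable {R M : Type*} [Ring R] [AddCommGroup M] [Module R M] [IsNoetherian R M]
  {ζ : Module.End R M}

-- Along the filtration by the ranges of the powers of `ζ`, a chain of length `l` becomes an
-- `l × p` grid of submodules of the quotient by the range of `ζ`.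
lemma mul_sum_relRank_le_stepSum (hstable : ∀ N : Submodule R M, N.map ζ ≤ N) {p : ℕ}
    (hζ : ζ ^ p = 0) {c : ℕ} {f : ℤ → ℤ} (hodd : ∀ x, f (-x) = -f x)
    (hf : ∀ {Y : ℕ → Submodule R (M ⧸ LinearMap.range ζ)}, Monotone Y → ∀ l : ℕ,
      c * ∑ i ∈ Finset.range l, (relRank (Y i) (Y (i + 1)) : ℤ) ≤ f l)
    {Y : ℕ → Submodule R M} (hY : Monotone Y) (l : ℕ) :
    c * ∑ i ∈ Finset.range l, (relRank (Y i) (Y (i + 1)) : ℤ) ≤ stepSum f p l := by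
  calc c * ∑ i ∈ Finset.range l, (relRank (Y i) (Y (i + 1)) : ℤ)
      ≤ c * ∑ i ∈ Finset.range l, ∑ j ∈ Finset.range p,
          (relRank (layerChain ζ (Y i) (j + 1) ⊔ layerChain ζ (Y (i + 1)) j)
            (layerChain ζ (Y (i + 1)) (j + 1)) : ℤ) := by
        gcongr with i
        exact_mod_cast relRank_le_sum_relRank_layerChain hstable hζ (hY i.le_succ)
    _ = ∑ i ∈ Finset.range l, ∑ j ∈ Finset.range p,
          (c * relRank (layerChain ζ (Y i) (j + 1) ⊔ layerChain ζ (Y (i + 1)) j)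
            (layerChain ζ (Y (i + 1)) (j + 1)) : ℤ) := by simp only [Finset.mul_sum]
    _ ≤ stepSum f p l :=
        sum_grid_le_stepSum (r := fun A B ↦ (c * relRank A B : ℤ))
          (fun B A A' h ↦ mul_le_mul_of_nonneg_left
            (Int.ofNat_le.2 (relRank_antitone_left B h)) c.cast_nonneg)
          hodd (fun Y' hY' l ↦ by rw [← Finset.mul_sum]; exact hf hY' l) l p
          (fun j ↦ (layerChain_mono j).comp hY) fun i ↦ monotone_layerChain (hstable (Y i))

end ChainOfSubmodules

section CentralModuloCore

open scoped commutatorElement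

variable {G : Type*} [Group G] [Finite G] {p : ℕ} [Fact p.Prime]

lemma prime_mul_index_sup_zpowers {y : G} (hy : y ∈ Subgroup.center G) (hord : orderOf y = p)
    {R : Subgroup G} (hyR : y ∉ R) : p * (R ⊔ Subgroup.zpowers y).index = R.index := by
  have hnormal : (Subgroup.zpowers y).Normal :=
    ⟨fun x hx g ↦ by
      rwa [Subgroup.mem_center_iff.1 (Subgroup.zpowers_le.2 hy hx) g, mul_inv_cancel_right]⟩
  have hcard : Nat.card (Subgroup.zpowers y) = p := by rw [Nat.card_zpowers, hord]
  have hcardFact : Fact (Nat.card (Subgroup.zpowers y)).Prime := by rwa [hcard]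
  have hdisj : Disjoint R (Subgroup.zpowers y) :=
    Subgroup.subgroupOf_eq_bot.1 ((Subgroup.eq_bot_or_eq_top_of_prime_card _).resolve_right
      fun h ↦ hyR (Subgroup.subgroupOf_eq_top.1 h (Subgroup.mem_zpowers y)))
  have hrel : p * Nat.card R = Nat.card R * R.relIndex (R ⊔ Subgroup.zpowers y) := by
    calc p * Nat.card R
        = (⊥ : Subgroup G).relIndex (Subgroup.zpowers y) *
            (Subgroup.zpowers y).relIndex (R ⊔ Subgroup.zpowers y) := by
          rw [Subgroup.relIndex_sup_right, ← Subgroup.inf_relIndex_right _ R,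
            hdisj.symm.eq_bot, Subgroup.relIndex_bot_left, Subgroup.relIndex_bot_left, hcard]
      _ = (⊥ : Subgroup G).relIndex R * R.relIndex (R ⊔ Subgroup.zpowers y) := by
          rw [Subgroup.relIndex_mul_relIndex _ _ _ bot_le le_sup_right,
            Subgroup.relIndex_mul_relIndex _ _ _ bot_le le_sup_left]
      _ = Nat.card R * R.relIndex (R ⊔ Subgroup.zpowers y) := by rw [Subgroup.relIndex_bot_left]
  rw [← Subgroup.relIndex_mul_index (le_sup_left : R ≤ R ⊔ Subgroup.zpowers y),
    Nat.eq_of_mul_eq_mul_left Nat.card_pos ((mul_comm _ p).trans hrel)]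

lemma exists_mem_center_orderOf_eq_prime [Nontrivial G] (hG : IsPGroup p G) :
    ∃ y ∈ Subgroup.center G, orderOf y = p := by
  obtain ⟨k, hk, hcard⟩ :=
    (hG.to_subgroup (Subgroup.center G)).nontrivial_iff_card.1 hG.center_nontrivial
  obtain ⟨⟨y, hy⟩, hord⟩ := exists_prime_orderOf_dvd_card' (G := Subgroup.center G) p
    (hcard ▸ dvd_pow_self p hk.ne')
  exact ⟨y, hy, by rwa [Subgroup.orderOf_mk] at hord⟩

lemma exists_central_modulo_normalCore (hG : IsPGroup p G) {R : Subgroup G} (hR : R ≠ ⊤) :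
    ∃ z : G, p * (R ⊔ Subgroup.zpowers z).index = R.index ∧ z ^ p ∈ R.normalCore ∧
      ∀ g : G, ⁅g, z⁆ ∈ R.normalCore := by
  set N := R.normalCore
  let π := QuotientGroup.mk' N
  have hker : π.ker = N := QuotientGroup.ker_mk' N
  have hsurj : Function.Surjective π := QuotientGroup.mk'_surjective N
  have : Nontrivial (G ⧸ N) :=
    QuotientGroup.nontrivial_iff.2 fun h ↦ hR (top_le_iff.1 (h.ge.trans R.normalCore_le))
  obtain ⟨y, hy, hord⟩ := exists_mem_center_orderOf_eq_prime (hG.to_quotient N)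
  obtain ⟨z, rfl⟩ := hsurj y
  have hcomm (g : G) : ⁅g, z⁆ ∈ N := by
    rw [← hker, MonoidHom.mem_ker, map_commutatorElement, commutatorElement_eq_one_iff_mul_comm]
    exact Subgroup.mem_center_iff.1 hy (π g)
  have hzR : z ∉ R := by
    intro hz
    have hzN : z ∈ N := fun g ↦ by
      have h := R.mul_mem (R.normalCore_le (hcomm g)) hz
      rwa [commutatorElement_def, inv_mul_cancel_right] at h
    rw [← hker, MonoidHom.mem_ker] at hzN
    rw [hzN, orderOf_one] at hord
    exact (Fact.out : p.Prime).one_lt.ne hord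
  have hNR : π.ker ≤ R := hker.trans_le R.normalCore_le
  have hzR' : π z ∉ R.map π := fun h ↦ hzR ((Subgroup.comap_map_eq_self hNR).le h)
  refine ⟨z, ?_, ?_, hcomm⟩
  · have hindex := prime_mul_index_sup_zpowers hy hord hzR'
    rwa [← MonoidHom.map_zpowers, ← Subgroup.map_sup, Subgroup.index_map_eq _ hsurj hNR,
      Subgroup.index_map_eq _ hsurj (hNR.trans le_sup_left)] at hindex
  · rw [← hker, MonoidHom.mem_ker, map_pow, ← hord, pow_orderOf_eq_one]

end CentralModuloCore

section VecStabilizer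

open scoped MonoidAlgebra commutatorElement

variable {F P M : Type*} [Field F] [Group P] [AddCommGroup M] [Module F[P] M]

/-- The stabilizer in `P` of a vector `v` of a module over the group algebra `F[P]`. -/
noncomputable def vecStabilizer (F P : Type*) {M : Type*} [Field F] [Group P] [AddCommGroup M]
    [Module F[P] M] (v : M) : Subgroup P :=
  (MulAction.stabilizer F[P]ˣ v).comap (MonoidAlgebra.of F P).toHomUnits

lemma mem_vecStabilizer {v : M} {g : P} :
    g ∈ vecStabilizer F P v ↔ MonoidAlgebra.of F P g • v = v :=
  Iff.rfl

lemma vecStabilizer_le_vecStabilizer_map {N : Type*} [AddCommGroup N] [Module F[P] N]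
    (f : M →ₗ[F[P]] N) (v : M) : vecStabilizer F P v ≤ vecStabilizer F P (f v) := fun g hg ↦ by
  rw [mem_vecStabilizer, ← map_smul, mem_vecStabilizer.1 hg]

lemma of_smul_eq_self_of_le_vecStabilizer [Module F M] [IsScalarTower F F[P] M] {N : Subgroup P}
    [hN : N.Normal] {v : M} (hv : Submodule.span F[P] {v} = ⊤) (hfix : N ≤ vecStabilizer F P v)
    {g : P} (hg : g ∈ N) (x : M) : MonoidAlgebra.of F P g • x = x := by
  obtain ⟨d, rfl⟩ := Submodule.mem_span_singleton.1 (hv ▸ Submodule.mem_top : x ∈ _)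
  induction d using MonoidAlgebra.induction_on with
  | of h =>
    have hconj : h⁻¹ * g * h ∈ vecStabilizer F P v := hfix (hN.conj_mem' g hg h)
    calc MonoidAlgebra.of F P g • MonoidAlgebra.of F P h • v
        = MonoidAlgebra.of F P h • MonoidAlgebra.of F P (h⁻¹ * g * h) • v := by
          rw [← mul_smul, ← mul_smul, ← map_mul, ← map_mul, mul_assoc h⁻¹, mul_inv_cancel_left]
      _ = MonoidAlgebra.of F P h • v := by rw [mem_vecStabilizer.1 hconj]
  | add a b ha hb => rw [add_smul, smul_add, ha, hb]
  | smul r a ha =>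
    rw [smul_assoc, ← algebraMap_smul F[P] r, ← mul_smul, ← Algebra.commutes, mul_smul, ha]

lemma exists_end_eq_of_sub_one_smul [Module F M] [IsScalarTower F F[P] M] {z : P}
    (hz : ∀ (g : P) (x : M), MonoidAlgebra.of F P g • MonoidAlgebra.of F P z • x =
      MonoidAlgebra.of F P z • MonoidAlgebra.of F P g • x) :
    ∃ ζ : Module.End F[P] M, ∀ x, ζ x = (MonoidAlgebra.of F P z - 1) • x := by
  refine ⟨MonoidAlgebra.equivariantOfLinearOfComm
    (Algebra.lsmul F F M (MonoidAlgebra.of F P z - 1)) fun g x ↦ ?_, fun x ↦ rfl⟩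
  change (MonoidAlgebra.of F P z - 1) • MonoidAlgebra.of F P g • x =
    MonoidAlgebra.of F P g • (MonoidAlgebra.of F P z - 1) • x
  rw [sub_smul, sub_smul, smul_sub, hz, one_smul, one_smul]

lemma of_sub_one_pow_char (p : ℕ) [Fact p.Prime] [CharP F p] (z : P) :
    (MonoidAlgebra.of F P z - 1) ^ p = MonoidAlgebra.of F P (z ^ p) - 1 := by
  have : CharP F[P] p := charP_of_injective_algebraMap (algebraMap F F[P]).injective p
  rw [sub_pow_char_of_commute _ (Commute.one_right _), one_pow, map_pow]

-- The endomorphism is `z - 1`, for an element `z` of order `p` in the centre of `P` modulo the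
-- normal core of `R`; this core acts trivially on `M`.
lemma exists_end_pow_eq_zero [Finite P] {p : ℕ} [Fact p.Prime] [CharP F p] (hP : IsPGroup p P)
    [Module F M] [IsScalarTower F F[P] M] {v : M} (hv : Submodule.span F[P] {v} = ⊤)
    {R : Subgroup P} (hfix : R ≤ vecStabilizer F P v) (hR : R ≠ ⊤) :
    ∃ (ζ : Module.End F[P] M) (R' : Subgroup P), ζ ^ p = 0 ∧
      (∀ N : Submodule F[P] M, N.map ζ ≤ N) ∧ p * R'.index = R.index ∧
      R' ≤ vecStabilizer F P ((LinearMap.range ζ).mkQ v) := by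
  obtain ⟨z, hindex, hzp, hcomm⟩ := exists_central_modulo_normalCore hP hR
  have htriv {g : P} (hg : g ∈ R.normalCore) (x : M) : MonoidAlgebra.of F P g • x = x :=
    of_smul_eq_self_of_le_vecStabilizer hv (R.normalCore_le.trans hfix) hg x
  obtain ⟨ζ, hζ⟩ := exists_end_eq_of_sub_one_smul (F := F) (M := M) (z := z) fun g x ↦ by
    rw [← mul_smul, ← mul_smul, ← map_mul, ← map_mul, show g * z = ⁅g, z⁆ * (z * g) by group,
      map_mul, mul_smul, htriv (hcomm g)]
  refine ⟨ζ, R ⊔ Subgroup.zpowers z, LinearMap.ext fun x ↦ ?_, fun N ↦ ?_, hindex,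
    sup_le (hfix.trans (vecStabilizer_le_vecStabilizer_map _ v)) (Subgroup.zpowers_le.2 ?_)⟩
  · have hpow (k : ℕ) : (ζ ^ k) x = (MonoidAlgebra.of F P z - 1) ^ k • x := by
      induction k with
      | zero => simp
      | succ k ih => rw [pow_succ', Module.End.mul_apply, ih, hζ, pow_succ', mul_smul]
    rw [hpow, of_sub_one_pow_char, sub_smul, htriv hzp, one_smul, sub_self, LinearMap.zero_apply]
  · rintro _ ⟨x, hx, rfl⟩
    rw [hζ]
    exact N.smul_mem _ hx
  · rw [mem_vecStabilizer, ← map_smul, ← sub_eq_zero, ← map_sub]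
    exact (Submodule.Quotient.mk_eq_zero _).2 ⟨v, by rw [hζ, sub_smul, one_smul]⟩

open scoped Pointwise in
lemma exists_mem_smul_eq_self_of_isPGroup {Q A : Type*} [Group Q] [Finite Q] [AddCommGroup A]
    [DistribMulAction Q A] {p : ℕ} [Fact p.Prime] (hQ : IsPGroup p Q) (hA : ∀ x : A, p • x = 0)
    {U : AddSubgroup A} (hU : ∀ g : Q, ∀ u ∈ U, g • u ∈ U) (hU0 : U ≠ ⊥) :
    ∃ w ∈ U, w ≠ 0 ∧ ∀ g : Q, g • w = w := by
  have hp : p.Prime := Fact.out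
  obtain ⟨u, hu, hu0⟩ := U.bot_or_exists_ne_zero.resolve_left hU0
  set D := AddSubgroup.closure (MulAction.orbit Q u) with hD
  have hDU : D ≤ U := (AddSubgroup.closure_le _).2 (Set.range_subset_iff.2 fun g ↦ hU g u hu)
  have hmap (g : Q) : D.map (DistribSMul.toAddMonoidHom A g) = D := by
    rw [hD, AddMonoidHom.map_closure]
    exact congrArg AddSubgroup.closure (MulAction.smul_orbit g u)
  let D' : SubMulAction Q A :=
    { carrier := D
      smul_mem' := fun g _ hx ↦ (hmap g).le (AddSubgroup.mem_map_of_mem _ hx) }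
  have hDp (x : D) : p • x = 0 := Subtype.ext (hA x)
  have : AddGroup.FG D := by
    rw [AddGroup.fg_iff_addSubgroup_fg, AddSubgroup.fg_iff]
    exact ⟨_, hD.symm, Set.finite_range _⟩
  have : Finite D := AddCommGroup.finite_of_fg_isAddTorsion D fun x ↦
    isOfFinAddOrder_iff_nsmul_eq_zero.2 ⟨p, hp.pos, hDp x⟩
  have hdvd : p ∣ Nat.card D := by
    have huD : u ∈ D := AddSubgroup.subset_closure (MulAction.mem_orbit_self u)
    rw [← addOrderOf_eq_prime (hDp ⟨u, huD⟩) fun h ↦ hu0 (congrArg Subtype.val h)]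
    exact addOrderOf_dvd_natCard _
  obtain ⟨w, hw, hw0⟩ := hQ.exists_fixed_point_of_prime_dvd_card_of_fixed_point D' hdvd
    (a := ⟨0, zero_mem D⟩) fun g ↦ Subtype.ext (smul_zero g)
  exact ⟨w, hDU w.2, fun h ↦ hw0 (Subtype.ext h.symm), fun g ↦ congrArg Subtype.val (hw g)⟩

lemma exists_mem_le_vecStabilizer [Module F M] [Finite P] {p : ℕ} [Fact p.Prime]
    [CharP F p] (hP : IsPGroup p P) {R : Subgroup P} {U : Submodule F M}
    (hU : ∀ g ∈ R, ∀ u ∈ U, MonoidAlgebra.of F P g • u ∈ U) (hU0 : U ≠ ⊥) :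
    ∃ w ∈ U, w ≠ 0 ∧ R ≤ vecStabilizer F P w := by
  have hchar (x : M) : p • x = 0 := by
    rw [← Nat.cast_smul_eq_nsmul F, CharP.cast_eq_zero, zero_smul]
  let : DistribMulAction R M :=
    DistribMulAction.compHom M ((MonoidAlgebra.of F P).comp R.subtype)
  obtain ⟨w, hwU, hw0, hw⟩ := exists_mem_smul_eq_self_of_isPGroup (hP.to_subgroup R) hchar
    (U := U.toAddSubgroup) (fun g u hu ↦ hU g g.2 u hu)
    (fun h ↦ hU0 (Submodule.toAddSubgroup_injective h))
  exact ⟨w, hwU, hw0, fun g hg ↦ hw ⟨g, hg⟩⟩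

end VecStabilizer

section CyclicModule

open scoped MonoidAlgebra

section Finrank

variable {F V : Type*} [Field F] [AddCommGroup V] [Module F V]

lemma finrank_map_add_finrank_inf_ker {W : Type*} [AddCommGroup W] [Module F W] (f : V →ₗ[F] W)
    (U : Submodule F V) [FiniteDimensional F U] :
    Module.finrank F (U.map f) + Module.finrank F ↥(U ⊓ LinearMap.ker f) = Module.finrank F U := by
  rw [← LinearMap.finrank_range_add_finrank_ker (f.domRestrict U), LinearMap.range_domRestrict,
    LinearMap.ker_domRestrict, ← Submodule.finrank_map_subtype_eq U, Submodule.map_comap_subtype]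

variable {R M : Type*} [Ring R] [Algebra F R] [AddCommGroup M] [Module F M] [Module R M]
  [IsScalarTower F R M]

lemma spanFinrank_span_le_finrank (U : Submodule F M) [FiniteDimensional F U] :
    (Submodule.span R (U : Set M)).spanFinrank ≤ Module.finrank F U := by
  obtain ⟨T, hTcard, hT⟩ :=
    (Module.Finite.iff_fg.1 ‹FiniteDimensional F U›).exists_span_finset_card_eq_spanFinrank
  calc (Submodule.span R (U : Set M)).spanFinrank
      = (Submodule.span R (T : Set M)).spanFinrank := by rw [← hT, Submodule.span_span_of_tower]
    _ ≤ T.card := by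
        simpa using Submodule.spanFinrank_span_le_ncard_of_finite (R := R) T.finite_toSet
    _ = Module.finrank F U := by
        rw [hTcard, ← Submodule.spanFinrank_top, Module.finrank_eq_spanFinrank_of_free]

variable [FiniteDimensional F M]

lemma spanFinrank_le_finrank (B : Submodule R M) : B.spanFinrank ≤ Module.finrank F B := by
  have h := spanFinrank_span_le_finrank (R := R) (B.restrictScalars F)
  rwa [Submodule.coe_restrictScalars, Submodule.span_eq] at h

lemma finrank_add_relRank_le {A B : Submodule R M} (hAB : A ≤ B) :
    Module.finrank F A + relRank A B ≤ Module.finrank F B := by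
  have h := finrank_map_add_finrank_inf_ker (A.mkQ.restrictScalars F) (B.restrictScalars F)
  rw [LinearMap.ker_restrictScalars, A.ker_mkQ, ← Submodule.restrictScalars_inf, inf_eq_right.2 hAB,
    add_comm] at h
  exact (Nat.add_le_add_left (spanFinrank_le_finrank (F := F) (B.map A.mkQ)) _).trans h.le

lemma sum_relRank_le_finrank {Y : ℕ → Submodule R M} (hY : Monotone Y)
    (l : ℕ) : ∑ i ∈ Finset.range l, relRank (Y i) (Y (i + 1)) ≤ Module.finrank F M := by
  suffices h : ∑ i ∈ Finset.range l, relRank (Y i) (Y (i + 1)) ≤ Module.finrank F (Y l) from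
    h.trans ((Y l).restrictScalars F).finrank_le
  induction l with
  | zero => exact zero_le
  | succ l ih =>
    rw [Finset.sum_range_succ]
    exact (Nat.add_le_add_right ih _).trans (finrank_add_relRank_le (hY l.le_succ))

end Finrank

section Cyclic

variable {F P M : Type*} [Field F] [Group P] [AddCommGroup M] [Module F M] [Module F[P] M]
  [IsScalarTower F F[P] M]

lemma finrank_le_one_of_vecStabilizer_eq_top {v : M} (hv : Submodule.span F[P] {v} = ⊤)
    (hfix : vecStabilizer F P v = ⊤) : Module.finrank F M ≤ 1 := by
  refine finrank_le_one v fun x ↦ ?_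
  obtain ⟨d, rfl⟩ := Submodule.mem_span_singleton.1 (hv ▸ Submodule.mem_top : x ∈ _)
  induction d using MonoidAlgebra.induction_on with
  | of g => exact ⟨1, by rw [one_smul, mem_vecStabilizer.1 (hfix ▸ Subgroup.mem_top g)]⟩
  | add a b ha hb =>
    obtain ⟨⟨c, hc⟩, c', hc'⟩ := ha, hb
    exact ⟨c + c', by rw [add_smul, add_smul, hc, hc']⟩
  | smul r a ha =>
    obtain ⟨c, hc⟩ := ha
    exact ⟨r * c, by rw [mul_smul, hc, smul_assoc]⟩

lemma sum_relRank_le_sign [FiniteDimensional F M] {v : M} (hv : Submodule.span F[P] {v} = ⊤)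
    (hfix : vecStabilizer F P v = ⊤) {Y : ℕ → Submodule F[P] M} (hY : Monotone Y) (l : ℕ) :
    ∑ i ∈ Finset.range l, (relRank (Y i) (Y (i + 1)) : ℤ) ≤ (l : ℤ).sign := by
  rcases l.eq_zero_or_pos with rfl | hl
  · simp
  · rw [Int.sign_eq_one_of_pos (Int.natCast_pos.2 hl)]
    exact_mod_cast (sum_relRank_le_finrank (F := F) hY l).trans
      (finrank_le_one_of_vecStabilizer_eq_top hv hfix)

theorem two_pow_mul_sum_relRank_le [Finite P] {p : ℕ} [Fact p.Prime] [CharP F p]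
    (hP : IsPGroup p P) [FiniteDimensional F M] {v : M} (hv : Submodule.span F[P] {v} = ⊤)
    {R : Subgroup P} (hfix : R ≤ vecStabilizer F P v) {m : ℕ} (hR : R.index = p ^ m)
    {Y : ℕ → Submodule F[P] M} (hY : Monotone Y) (l : ℕ) :
    2 ^ (m * (p - 1)) * ∑ i ∈ Finset.range l, (relRank (Y i) (Y (i + 1)) : ℤ) ≤
      p ^ m * walkSum (m * (p - 1)) l := by
  have hp : p.Prime := Fact.out
  obtain ⟨q, rfl⟩ : ∃ q, p = q + 1 := Nat.exists_eq_add_one.2 hp.pos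
  rw [Nat.add_sub_cancel]
  induction m generalizing M R l with
  | zero =>
    have hR' : R = ⊤ := Subgroup.index_eq_one.1 (by simpa using hR)
    simpa [walkSum] using sum_relRank_le_sign hv (top_le_iff.1 (hR' ▸ hfix)) hY l
  | succ m ih =>
    have : IsNoetherian F[P] M := isNoetherian_of_tower F inferInstance
    have hRtop : R ≠ ⊤ := by
      rintro rfl
      exact (Nat.one_lt_pow m.succ_ne_zero hp.one_lt).ne (Subgroup.index_top.symm.trans hR)
    obtain ⟨ζ, R', hζ, hstable, hindex, hfix'⟩ := exists_end_pow_eq_zero hP hv hfix hRtop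
    have hR' : R'.index = (q + 1) ^ m :=
      Nat.eq_of_mul_eq_mul_left hp.pos (by rw [hindex, hR, pow_succ'])
    have hv' : Submodule.span F[P] {(LinearMap.range ζ).mkQ v} = ⊤ := by
      rw [← Set.image_singleton, ← Submodule.map_span, hv, Submodule.map_top,
        Submodule.range_mkQ]
    have hgrid : 2 ^ (m * q) * ∑ i ∈ Finset.range l, (relRank (Y i) (Y (i + 1)) : ℤ) ≤
        (q + 1) ^ m * stepSum (walkSum (m * q)) (q + 1) l := by
      rw [stepSum, Finset.mul_sum (a := ((q : ℤ) + 1) ^ m)]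
      exact_mod_cast mul_sum_relRank_le_stepSum hstable hζ
        (f := fun x ↦ ((q + 1 : ℕ) : ℤ) ^ m * walkSum (m * q) x)
        (fun x ↦ by rw [walkSum_neg, mul_neg])
        (fun hY' l ↦ by exact_mod_cast ih hv' hfix' hY' l hR') hY l
    rw [Nat.succ_mul, pow_add]
    push_cast
    calc (2 : ℤ) ^ (m * q) * 2 ^ q * ∑ i ∈ Finset.range l, (relRank (Y i) (Y (i + 1)) : ℤ)
        = 2 ^ q * (2 ^ (m * q) * ∑ i ∈ Finset.range l, (relRank (Y i) (Y (i + 1)) : ℤ)) := by ring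
      _ ≤ 2 ^ q * ((q + 1) ^ m * stepSum (walkSum (m * q)) (q + 1) l) := by gcongr
      _ = (q + 1) ^ m * (2 ^ q * stepSum (walkSum (m * q)) (q + 1) l) := by ring
      _ ≤ (q + 1) ^ m * ((q + 1) * walkSum (m * q + q) l) :=
        mul_le_mul_of_nonneg_left (two_pow_mul_stepSum_walkSum_le (m * q) q l.cast_nonneg)
          (by positivity)
      _ = (q + 1) ^ (m + 1) * walkSum (m * q + q) l := by ring

lemma spanFinrank_le_of_le_vecStabilizer [Finite P] {p : ℕ} [Fact p.Prime] [CharP F p]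
    (hP : IsPGroup p P) [FiniteDimensional F M] {v : M} {R : Subgroup P}
    (hfix : R ≤ vecStabilizer F P v) {m : ℕ} (hm : m ≠ 0) (hR : R.index = p ^ m)
    {S : Submodule F[P] M} (hS : S ≤ Submodule.span F[P] {v}) :
    S.spanFinrank ≤ ⌊√(2 / Real.pi) * (p ^ m : ℕ) / √(((p : ℝ) - 1) * m)⌋₊ := by
  have hp : p.Prime := Fact.out
  set C := Submodule.span F[P] {v}
  let w : C := ⟨v, Submodule.mem_span_singleton_self v⟩
  have hw : Submodule.span F[P] {w} = ⊤ := by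
    apply Submodule.map_injective_of_injective C.injective_subtype
    rw [Submodule.map_span, Set.image_singleton, Submodule.map_top, Submodule.range_subtype]
    rfl
  have hfixw : R ≤ vecStabilizer F P w := fun g hg ↦ Subtype.ext (mem_vecStabilizer.1 (hfix hg))
  have hfin : FiniteDimensional F C :=
    inferInstanceAs (FiniteDimensional F (C.restrictScalars F))
  have hspan : (S.comap C.subtype).spanFinrank = S.spanFinrank := by
    rw [← Submodule.spanFinrank_map_eq_of_injective _ C.injective_subtype,
      Submodule.map_comap_subtype, inf_eq_right.2 hS]
  have hchain : 2 ^ (m * (p - 1)) * (S.spanFinrank : ℤ) ≤ p ^ m * walkSum (m * (p - 1)) 1 := by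
    have hY : Monotone fun i ↦ if i = 0 then ⊥ else S.comap C.subtype :=
      monotone_nat_of_le_succ fun i ↦ by split_ifs <;> simp_all
    simpa [relRank_bot_left, hspan] using two_pow_mul_sum_relRank_le hP hw hfixw hR hY 1
  have hK : m * (p - 1) ≠ 0 := Nat.mul_ne_zero hm (Nat.sub_pos_of_lt hp.one_lt).ne'
  refine Nat.le_floor (le_of_mul_le_mul_left ?_ (by positivity : (0 : ℝ) < 2 ^ (m * (p - 1))))
  calc (2 : ℝ) ^ (m * (p - 1)) * S.spanFinrank
      ≤ p ^ m * walkSum (m * (p - 1)) 1 := by exact_mod_cast hchain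
    _ ≤ p ^ m * (2 ^ (m * (p - 1)) * (√(2 / Real.pi) / √(m * (p - 1) : ℕ))) := by
      gcongr
      exact walkSum_one_le hK
    _ = 2 ^ (m * (p - 1)) * (√(2 / Real.pi) * (p ^ m : ℕ) / √(((p : ℝ) - 1) * m)) := by
      rw [Nat.cast_mul, Nat.cast_sub hp.one_le, Nat.cast_one, mul_comm (m : ℝ), Nat.cast_pow]
      ring

lemma spanFinrank_le_finrank_mul [Finite P] {p : ℕ} [Fact p.Prime] [CharP F p]
    (hP : IsPGroup p P) [FiniteDimensional F M] {R : Subgroup P} {m : ℕ} (hm : m ≠ 0)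
    (hR : R.index = p ^ m) {U : Submodule F M}
    (hU : ∀ g ∈ R, ∀ u ∈ U, MonoidAlgebra.of F P g • u ∈ U) {S : Submodule F[P] M}
    (hS : S ≤ Submodule.span F[P] U) : S.spanFinrank ≤ Module.finrank F U *
      ⌊√(2 / Real.pi) * (p ^ m : ℕ) / √(((p : ℝ) - 1) * m)⌋₊ := by
  set b := ⌊√(2 / Real.pi) * (p ^ m : ℕ) / √(((p : ℝ) - 1) * m)⌋₊
  induction hk : Module.finrank F U using Nat.strong_induction_on generalizing M with | _ k ih =>
  subst hk
  by_cases hU0 : U = ⊥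
  · have hS0 : S = ⊥ := by simpa [hU0] using hS
    simp [hS0]
  have : IsNoetherian F[P] M := isNoetherian_of_tower F inferInstance
  obtain ⟨u, hu, hu0, hfix⟩ := exists_mem_le_vecStabilizer hP hU hU0
  set C := Submodule.span F[P] {u}
  let π : M →ₗ[F] M ⧸ C := C.mkQ.restrictScalars F
  have hdrop : Module.finrank F (U.map π) < Module.finrank F U := by
    have huker : u ∈ U ⊓ LinearMap.ker π :=
      ⟨hu, (Submodule.Quotient.mk_eq_zero C).2 (Submodule.mem_span_singleton_self u)⟩
    have hpos : 0 < Module.finrank F ↥(U ⊓ LinearMap.ker π) :=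
      Module.finrank_pos_iff_exists_ne_zero.2 ⟨⟨u, huker⟩, fun h ↦ hu0 (congrArg Subtype.val h)⟩
    have := finrank_map_add_finrank_inf_ker π U
    omega
  have hSC : (S.map C.mkQ).spanFinrank ≤ Module.finrank F (U.map π) * b := by
    refine ih _ hdrop ?_ ?_ rfl
    · rintro g hg _ ⟨x, hx, rfl⟩
      exact ⟨_, hU g hg x hx, map_smul C.mkQ _ x⟩
    · have h := Submodule.map_mono (f := C.mkQ) hS
      rwa [Submodule.map_span] at h
  calc S.spanFinrank
      ≤ (S ⊓ C).spanFinrank + (S.map C.mkQ).spanFinrank := spanFinrank_le_add C S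
    _ ≤ b + Module.finrank F (U.map π) * b :=
        add_le_add (spanFinrank_le_of_le_vecStabilizer hP hfix hm hR inf_le_right) hSC
    _ = (Module.finrank F (U.map π) + 1) * b := by rw [add_mul, one_mul, add_comm]
    _ ≤ Module.finrank F U * b := Nat.mul_le_mul_right _ hdrop

end Cyclic

end CyclicModule

section Semisimple

variable {R M : Type*} [Ring R] [AddCommGroup M] [Module R M] [IsNoetherian R M]

lemma spanFinrank_le_spanFinrank_of_isSemisimpleModule [IsSemisimpleModule R M]
    {A B : Submodule R M} (h : A ≤ B) : A.spanFinrank ≤ B.spanFinrank := by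
  obtain ⟨C, hC⟩ := exists_isCompl A
  have hA : B.map (A.projection C hC) = A := by
    refine le_antisymm (LinearMap.map_le_range.trans_eq (Submodule.range_projection hC)) ?_
    exact fun a ha ↦ ⟨a, h ha, Submodule.projection_apply_of_mem_left hC ha⟩
  calc A.spanFinrank = (B.map (A.projection C hC)).spanFinrank := by rw [hA]
    _ ≤ B.spanFinrank := Submodule.spanFinrank_map_le_of_fg _ (IsNoetherian.noetherian B)

lemma relRank_le_spanFinrank_of_isSemisimpleModule [IsSemisimpleModule R M]
    {A B C : Submodule R M} (h : B ≤ A ⊔ C) : relRank A B ≤ C.spanFinrank := by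
  have hBC : B.map A.mkQ ≤ C.map A.mkQ := by
    simpa [Submodule.map_sup] using Submodule.map_mono (f := A.mkQ) h
  exact (spanFinrank_le_spanFinrank_of_isSemisimpleModule hBC).trans
    (Submodule.spanFinrank_map_le_of_fg _ (IsNoetherian.noetherian C))

end Semisimple

section Orbits

open scoped MonoidAlgebra

variable {F P W Ω : Type*} [Field F] [Group P] [AddCommGroup W] [Module F W] [Module F[P] W]
  [IsScalarTower F F[P] W] [MulAction P Ω] {φ : Ω → Submodule F W}

lemma relRank_le_finrank_mul [FiniteDimensional F W] [Finite P] {p : ℕ} [Fact p.Prime] [CharP F p]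
    (hP : IsPGroup p P) {R : Subgroup P} {m : ℕ} (hm : m ≠ 0) (hR : R.index = p ^ m)
    {U : Submodule F W} (hU : ∀ g ∈ R, ∀ u ∈ U, MonoidAlgebra.of F P g • u ∈ U)
    {A S : Submodule F[P] W} (hS : S ≤ A ⊔ Submodule.span F[P] U) : relRank A S ≤
      Module.finrank F U * ⌊√(2 / Real.pi) * (p ^ m : ℕ) / √(((p : ℝ) - 1) * m)⌋₊ := by
  let π : W →ₗ[F] W ⧸ A := A.mkQ.restrictScalars F
  have hstable : ∀ g ∈ R, ∀ u ∈ U.map π, MonoidAlgebra.of F P g • u ∈ U.map π := by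
    rintro g hg _ ⟨u, hu, rfl⟩
    exact ⟨_, hU g hg u hu, map_smul A.mkQ _ u⟩
  have hspan : S.map A.mkQ ≤ Submodule.span F[P] (U.map π) := by
    have h := Submodule.map_mono (f := A.mkQ) hS
    rwa [Submodule.map_sup, Submodule.mkQ_map_self, bot_sup_eq, Submodule.map_span] at h
  exact (spanFinrank_le_finrank_mul hP hm hR hstable hspan).trans
    (Nat.mul_le_mul_right _ (Submodule.finrank_map_le π U))

lemma iSup_span_orbitRel_out_eq_top
    (hφ : ∀ (g : P) (x : Ω), ∀ w ∈ φ x, MonoidAlgebra.of F P g • w ∈ φ (g • x))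
    (htop : iSup φ = ⊤) :
    ⨆ O : MulAction.orbitRel.Quotient P Ω, Submodule.span F[P] (φ O.out : Set W) = ⊤ := by
  rw [← Submodule.restrictScalars_eq_top_iff F, eq_top_iff, ← htop, iSup_le_iff]
  intro x w hw
  obtain ⟨g, hg : g • x = _⟩ :=
    MulAction.orbitRel_apply.1 (Quotient.mk_out (s := MulAction.orbitRel P Ω) x)
  have hgw : MonoidAlgebra.of F P g • w ∈ φ (⟦x⟧ : MulAction.orbitRel.Quotient P Ω).out :=
    hg ▸ hφ g x w hw
  have hw' : w = MonoidAlgebra.of F P g⁻¹ • MonoidAlgebra.of F P g • w := by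
    rw [← mul_smul, ← map_mul, inv_mul_cancel, map_one, one_smul]
  rw [Submodule.restrictScalars_mem, hw']
  exact Submodule.mem_iSup_of_mem _ (Submodule.smul_mem _ _ (Submodule.subset_span hgw))

lemma sum_card_orbit_out [Finite Ω] [Fintype (MulAction.orbitRel.Quotient P Ω)] :
    ∑ O : MulAction.orbitRel.Quotient P Ω, Nat.card (MulAction.orbit P O.out) = Nat.card Ω := by
  rw [Nat.card_congr (MulAction.selfEquivSigmaOrbits P Ω), Nat.card_sigma]

lemma card_orbit_eq_index_stabilizer (x : Ω) :
    Nat.card (MulAction.orbit P x) = (MulAction.stabilizer P x).index := by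
  rw [MulAction.index_stabilizer, Nat.card_coe_set_eq]

variable [FiniteDimensional F W]

lemma spanFinrank_le_sum_orbits
    (hφ : ∀ (g : P) (x : Ω), ∀ w ∈ φ x, MonoidAlgebra.of F P g • w ∈ φ (g • x))
    (htop : iSup φ = ⊤) [Fintype (MulAction.orbitRel.Quotient P Ω)] {b : Ω → ℕ}
    (hb : ∀ x, ∀ A B : Submodule F[P] W, B ≤ A ⊔ Submodule.span F[P] (φ x) → relRank A B ≤ b x)
    (S : Submodule F[P] W) :
    S.spanFinrank ≤ ∑ O : MulAction.orbitRel.Quotient P Ω, b O.out := by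
  have : IsNoetherian F[P] W := isNoetherian_of_tower F inferInstance
  refine spanFinrank_le_sum_of_le_iSup
    (N := fun O : MulAction.orbitRel.Quotient P Ω ↦ Submodule.span F[P] (φ O.out : Set W))
    (fun O ↦ hb O.out) Finset.univ ?_
  simp only [Finset.mem_univ, iSup_pos, iSup_span_orbitRel_out_eq_top hφ htop, le_top]

variable [Finite Ω]

theorem spanFinrank_le_of_isPGroup [Finite P] {p : ℕ} [Fact p.Prime] [CharP F p]
    (hP : IsPGroup p P)
    (hφ : ∀ (g : P) (x : Ω), ∀ w ∈ φ x, MonoidAlgebra.of F P g • w ∈ φ (g • x))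
    (htop : iSup φ = ⊤) {a : ℕ} (ha : ∀ x, Module.finrank F (φ x) ≤ a) {k : ℕ} (hk : k ≠ 0)
    (horb : ∀ x : Ω, p ^ k ∣ Nat.card (MulAction.orbit P x)) (S : Submodule F[P] W) :
    S.spanFinrank ≤ a * ⌊√(2 / Real.pi) * Nat.card Ω / √(((p : ℝ) - 1) * k)⌋₊ := by
  have hp : p.Prime := Fact.out
  have hp1 : (0 : ℝ) < p - 1 := sub_pos.2 (mod_cast hp.one_lt)
  have : Fintype (MulAction.orbitRel.Quotient P Ω) := Fintype.ofFinite _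
  set c : Ω → ℝ := fun x ↦
    √(2 / Real.pi) * Nat.card (MulAction.orbit P x) / √(((p : ℝ) - 1) * k) with hc
  have hblock (x : Ω) (A B : Submodule F[P] W) (hB : B ≤ A ⊔ Submodule.span F[P] (φ x)) :
      relRank A B ≤ a * ⌊c x⌋₊ := by
    obtain ⟨m, hm⟩ := hP.index (MulAction.stabilizer P x)
    have hkm : k ≤ m := (Nat.pow_dvd_pow_iff_le_right hp.one_lt).1
      (by simpa only [card_orbit_eq_index_stabilizer, hm] using horb x)
    have hstable : ∀ g ∈ MulAction.stabilizer P x, ∀ w ∈ φ x, MonoidAlgebra.of F P g • w ∈ φ x :=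
      fun g hg w hw ↦ by simpa only [MulAction.mem_stabilizer_iff.1 hg] using hφ g x w hw
    refine (relRank_le_finrank_mul hP (Nat.ne_zero_of_lt (hk.bot_lt.trans_le hkm)) hm hstable
      hB).trans (Nat.mul_le_mul (ha x) (Nat.floor_mono ?_))
    have : (0 : ℝ) < k := mod_cast hk.bot_lt
    simp only [hc, card_orbit_eq_index_stabilizer, hm]
    gcongr
  have hsum : ∑ O : MulAction.orbitRel.Quotient P Ω, c O.out =
      √(2 / Real.pi) * Nat.card Ω / √(((p : ℝ) - 1) * k) := by
    rw [← Finset.sum_div, ← Finset.mul_sum, ← Nat.cast_sum, sum_card_orbit_out]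
  have hfloor : ∑ O : MulAction.orbitRel.Quotient P Ω, ⌊c O.out⌋₊ ≤
      ⌊√(2 / Real.pi) * Nat.card Ω / √(((p : ℝ) - 1) * k)⌋₊ := by
    refine Nat.le_floor ?_
    rw [← hsum, Nat.cast_sum]
    exact Finset.sum_le_sum fun O _ ↦ Nat.floor_le (by positivity)
  calc S.spanFinrank ≤ ∑ O : MulAction.orbitRel.Quotient P Ω, a * ⌊c O.out⌋₊ :=
        spanFinrank_le_sum_orbits hφ htop hblock S
    _ ≤ a * ⌊√(2 / Real.pi) * Nat.card Ω / √(((p : ℝ) - 1) * k)⌋₊ := by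
        rw [← Finset.mul_sum]
        exact Nat.mul_le_mul_left a hfloor

theorem spanFinrank_le_of_neZero_card [Finite P] [NeZero (Nat.card P : F)]
    (hφ : ∀ (g : P) (x : Ω), ∀ w ∈ φ x, MonoidAlgebra.of F P g • w ∈ φ (g • x))
    (htop : iSup φ = ⊤) {a : ℕ} (ha : ∀ x, Module.finrank F (φ x) ≤ a) {d : ℕ} (hd : 0 < d)
    (horb : ∀ x : Ω, d ≤ Nat.card (MulAction.orbit P x)) (S : Submodule F[P] W) :
    S.spanFinrank ≤ a * (Nat.card Ω / d) := by
  have : Fintype (MulAction.orbitRel.Quotient P Ω) := Fintype.ofFinite _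
  have : IsNoetherian F[P] W := isNoetherian_of_tower F inferInstance
  have hblock (x : Ω) (A B : Submodule F[P] W) (hB : B ≤ A ⊔ Submodule.span F[P] (φ x)) :
      relRank A B ≤ a :=
    ((relRank_le_spanFinrank_of_isSemisimpleModule hB).trans
      (spanFinrank_span_le_finrank (φ x))).trans (ha x)
  have hcard : Fintype.card (MulAction.orbitRel.Quotient P Ω) ≤ Nat.card Ω / d := by
    rw [Nat.le_div_iff_mul_le hd, ← sum_card_orbit_out (P := P) (Ω := Ω), ← smul_eq_mul,
      ← Finset.card_univ]
    exact Finset.card_nsmul_le_sum _ _ _ fun O _ ↦ horb O.out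
  calc S.spanFinrank ≤ ∑ _O : MulAction.orbitRel.Quotient P Ω, a :=
        spanFinrank_le_sum_orbits hφ htop hblock S
    _ = a * Fintype.card (MulAction.orbitRel.Quotient P Ω) := by
        rw [Finset.sum_const, Finset.card_univ, smul_eq_mul, mul_comm]
    _ ≤ a * (Nat.card Ω / d) := Nat.mul_le_mul_left a hcard

end Orbits

section GroupRank

open scoped MonoidAlgebra

variable {F W G : Type*} [Field F] [AddCommGroup W] [Module F W] [Group G] [DistribMulAction G W]
  [SMulCommClass G F W]

lemma smul_mem_span_smul (T : Finset W) (g : G) {w : W}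
    (hw : w ∈ Submodule.span F {w : W | ∃ g : G, ∃ t ∈ T, w = g • t}) :
    g • w ∈ Submodule.span F {w : W | ∃ g : G, ∃ t ∈ T, w = g • t} := by
  induction hw using Submodule.span_induction with
  | mem w hw =>
    obtain ⟨h, t, ht, rfl⟩ := hw
    exact Submodule.subset_span ⟨g * h, t, ht, (mul_smul g h t).symm⟩
  | zero => rw [smul_zero]; exact zero_mem _
  | add x y _ _ hx hy => rw [smul_add]; exact add_mem hx hy
  | smul r x _ hx => rw [smul_comm]; exact Submodule.smul_mem _ r hx

lemma exists_finset_card_eq_spanFinrank_asSubmodule {P : Type*} [Group P] [FiniteDimensional F W]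
    {ρ : Representation F P W} (σ : Subrepresentation ρ) :
    ∃ T : Finset W, T.card = σ.asSubmodule.spanFinrank ∧ (T : Set W) ⊆ σ ∧
      ∀ τ : Subrepresentation ρ, (T : Set W) ⊆ τ → (σ : Set W) ⊆ τ := by
  have : IsNoetherian F[P] ρ.asModule := isNoetherian_of_tower F inferInstance
  obtain ⟨T, hcard, hT⟩ :=
    (IsNoetherian.noetherian σ.asSubmodule).exists_span_finset_card_eq_spanFinrank
  refine ⟨T, hcard, fun t ht ↦ ?_, fun τ hτ ↦ ?_⟩
  · exact Subrepresentation.mem_asSubmodule_iff.1 (hT ▸ Submodule.subset_span ht)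
  · have hle : σ.asSubmodule ≤ τ.asSubmodule := hT ▸ Submodule.span_le.2 hτ
    exact hle

lemma dMod_le_of_spanFinrank_le (Q : Subgroup G) [FiniteDimensional F W] {S : Submodule F W}
    (hS : ∀ g : G, ∀ w ∈ S, g • w ∈ S) {N : ℕ}
    (h : ∀ [Module F[Q] W] [IsScalarTower F F[Q] W],
      (∀ (g : Q) (w : W), MonoidAlgebra.of F Q g • w = g • w) →
        ∀ S : Submodule F[Q] W, S.spanFinrank ≤ N) :
    dMod G S ≤ N := by
  let ρ := Representation.ofDistribMulAction F Q W
  let : Module F[Q] W := inferInstanceAs (Module F[Q] ρ.asModule)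
  have : IsScalarTower F F[Q] W := inferInstanceAs (IsScalarTower F F[Q] ρ.asModule)
  let σ : Subrepresentation ρ := ⟨S, fun g w ↦ hS g w⟩
  obtain ⟨T, hcard, hTS, hT⟩ := exists_finset_card_eq_spanFinrank_asSubmodule σ
  have hgen : Submodule.span F {w : W | ∃ g : G, ∃ t ∈ T, w = g • t} = S := by
    refine le_antisymm (Submodule.span_le.2 ?_) ?_
    · rintro _ ⟨g, t, ht, rfl⟩
      exact hS g t (hTS ht)
    · exact hT ⟨_, fun g _ ↦ smul_mem_span_smul T (g : G)⟩
        fun t ht ↦ Submodule.subset_span ⟨1, t, ht, (one_smul G t).symm⟩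
  have hdT : dMod G S ≤ T.card := Nat.sInf_le ⟨T, rfl, hTS, hgen⟩
  have hρ (g : Q) (w : W) : MonoidAlgebra.of F Q g • w = g • w :=
    (ρ.asModuleEquiv_symm_map_rho g w).symm
  exact hdT.trans (hcard.trans_le (h hρ σ.asSubmodule))

end GroupRank

section InducedModule

lemma pow_factorization_dvd_card_orbit {G : Type*} [Group G] [Finite G] (H : Subgroup G) {q : ℕ}
    [Fact q.Prime] (Q : Sylow q G) (x : G ⧸ H) :
    q ^ H.index.factorization q ∣ Nat.card (MulAction.orbit Q x) := by
  have hq : q.Prime := Fact.out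
  set K := MulAction.stabilizer G x
  have hindex : (K ⊓ Q).index = Nat.card (MulAction.orbit Q x) * (Q : Subgroup G).index := by
    have hstab : MulAction.stabilizer Q x = K.subgroupOf Q := rfl
    rw [card_orbit_eq_index_stabilizer, hstab, ← Subgroup.relIndex, ← Subgroup.inf_relIndex_right,
      Subgroup.relIndex_mul_index inf_le_right]
  have hdvd : H.index ∣ (K ⊓ Q).index := by
    have hindexK : K.index = H.index := MulAction.index_stabilizer_of_transitive G x
    exact hindexK ▸ Subgroup.index_dvd_of_le inf_le_left
  have hcop : (q ^ H.index.factorization q).Coprime (Q : Subgroup G).index :=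
    Nat.Coprime.pow_left _ ((Nat.Prime.coprime_iff_not_dvd hq).2 Q.not_dvd_index)
  exact hcop.dvd_of_dvd_mul_right (hindex ▸ (Nat.ordProj_dvd _ _).trans hdvd)

lemma card_orbit_pos {P Ω : Type*} [Group P] [MulAction P Ω] [Finite Ω] (x : Ω) :
    0 < Nat.card (MulAction.orbit P x) :=
  have := (MulAction.nonempty_orbit (M := P) x).to_subtype
  Nat.card_pos

lemma exists_not_dvd_card_and_lpp_le_card_orbit {G : Type*} [Group G] [Finite G] (H : Subgroup G)
    {p : ℕ} (hp : p.Prime) : ∃ Q : Subgroup G, ¬p ∣ Nat.card Q ∧ ∀ x : G ⧸ H,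
      lpp (H.index / p ^ H.index.factorization p) ≤ Nat.card (MulAction.orbit Q x) := by
  rcases lpp_eq_one_or_exists_mem_primeFactors (H.index / p ^ H.index.factorization p) with
    h | ⟨q, hq, h⟩
  · exact ⟨⊥, by simpa using hp.ne_one, fun x ↦ h ▸ card_orbit_pos x⟩
  · have hqprime : q.Prime := Nat.prime_of_mem_primeFactors hq
    have hqp : q ≠ p := by
      rintro rfl
      exact Nat.not_dvd_ordCompl hqprime Subgroup.index_ne_zero_of_finite
        (Nat.dvd_of_mem_primeFactors hq)
    have : Fact q.Prime := ⟨hqprime⟩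
    obtain ⟨Q⟩ : Nonempty (Sylow q G) := inferInstance
    refine ⟨Q, fun hdvd ↦ hqp ?_, fun x ↦ ?_⟩
    · obtain ⟨k, hk⟩ := IsPGroup.iff_card.1 Q.isPGroup'
      exact ((Nat.prime_dvd_prime_iff_eq hp hqprime).1 (hp.dvd_of_dvd_pow (hk ▸ hdvd))).symm
    · rw [h, Nat.factorization_ordCompl, Finsupp.erase_ne hqp]
      exact Nat.le_of_dvd (card_orbit_pos x) (pow_factorization_dvd_card_orbit H Q x)

variable {F W G : Type*} [Field F] [AddCommGroup W] [Module F W] [Group G] [DistribMulAction G W]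
  [SMulCommClass G F W] {H : Subgroup G} {V : Submodule F W}

/-- The translate `g • V` of the subspace `V` attached to the coset `g H`. It is computed from the
chosen representative of the coset, which is immaterial as soon as `V` is stable under `H`. -/
noncomputable def cosetTranslate (V : Submodule F W) (x : G ⧸ H) : Submodule F W :=
  V.map (DistribSMul.toLinearMap F W x.out)

lemma smul_mem_cosetTranslate_mk (hV : ∀ h ∈ H, ∀ v ∈ V, h • v ∈ V) (g : G) {v : W} (hv : v ∈ V) :
    g • v ∈ cosetTranslate V (g : G ⧸ H) := by
  obtain ⟨h, hh⟩ := QuotientGroup.mk_out_eq_mul H g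
  refine ⟨(h : G)⁻¹ • v, hV _ (inv_mem h.2) v hv, ?_⟩
  rw [DistribSMul.toLinearMap_apply, hh, smul_smul, mul_inv_cancel_right]

lemma smul_mem_cosetTranslate_smul (hV : ∀ h ∈ H, ∀ v ∈ V, h • v ∈ V) (g : G) (x : G ⧸ H) {w : W}
    (hw : w ∈ cosetTranslate V x) : g • w ∈ cosetTranslate V (g • x) := by
  obtain ⟨v, hv, rfl⟩ := hw
  have h := smul_mem_cosetTranslate_mk hV (g * x.out) hv
  rwa [← smul_eq_mul, ← MulAction.Quotient.smul_mk, QuotientGroup.out_eq', smul_assoc] at h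

lemma iSup_cosetTranslate_eq_top (hV : ∀ h ∈ H, ∀ v ∈ V, h • v ∈ V)
    (hgen : ⨆ g : G, V.map (DistribSMul.toLinearMap F W g) = ⊤) :
    ⨆ x : G ⧸ H, cosetTranslate V x = ⊤ := by
  rw [eq_top_iff, ← hgen, iSup_le_iff]
  rintro g _ ⟨v, hv, rfl⟩
  exact Submodule.mem_iSup_of_mem (g : G ⧸ H) (smul_mem_cosetTranslate_mk hV g hv)

variable [Finite G] [FiniteDimensional F V]

lemma finiteDimensional_of_iSup_map_eq_top
    (hgen : ⨆ g : G, V.map (DistribSMul.toLinearMap F W g) = ⊤) : FiniteDimensional F W :=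
  Module.finite_def.2 (hgen ▸ Module.Finite.iff_fg.1 (Submodule.finite_iSup _))

variable {S : Submodule F W}

lemma dMod_le_mul_div (hV : ∀ h ∈ H, ∀ v ∈ V, h • v ∈ V)
    (hgen : ⨆ g : G, V.map (DistribSMul.toLinearMap F W g) = ⊤)
    (hS : ∀ g : G, ∀ w ∈ S, g • w ∈ S) {Q : Subgroup G} (hQ : (Nat.card Q : F) ≠ 0) {d : ℕ}
    (hd : 0 < d) (horb : ∀ x : G ⧸ H, d ≤ Nat.card (MulAction.orbit Q x)) :
    dMod G S ≤ Module.finrank F V * (H.index / d) := by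
  have := finiteDimensional_of_iSup_map_eq_top hgen
  have : NeZero (Nat.card Q : F) := ⟨hQ⟩
  refine dMod_le_of_spanFinrank_le Q hS fun hsmul S ↦ ?_
  refine spanFinrank_le_of_neZero_card (φ := cosetTranslate V) (fun g x w hw ↦ ?_)
    (iSup_cosetTranslate_eq_top hV hgen) (fun x ↦ Submodule.finrank_map_le _ V) hd horb S
  exact hsmul g w ▸ smul_mem_cosetTranslate_smul hV (g : G) x hw

variable {p : ℕ} [Fact p.Prime] [CharP F p]

lemma dMod_le_mul_floor (hV : ∀ h ∈ H, ∀ v ∈ V, h • v ∈ V)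
    (hgen : ⨆ g : G, V.map (DistribSMul.toLinearMap F W g) = ⊤)
    (hS : ∀ g : G, ∀ w ∈ S, g • w ∈ S) (hp : H.index.factorization p ≠ 0) :
    dMod G S ≤ Module.finrank F V * ⌊√(2 / Real.pi) * H.index /
      √(((p : ℝ) - 1) * H.index.factorization p)⌋₊ := by
  have := finiteDimensional_of_iSup_map_eq_top hgen
  obtain ⟨P⟩ : Nonempty (Sylow p G) := inferInstance
  refine dMod_le_of_spanFinrank_le P hS fun hsmul S ↦ ?_
  refine spanFinrank_le_of_isPGroup P.isPGroup' (φ := cosetTranslate V) (fun g x w hw ↦ ?_)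
    (iSup_cosetTranslate_eq_top hV hgen) (fun x ↦ Submodule.finrank_map_le _ V) hp
    (pow_factorization_dvd_card_orbit H P) S
  exact hsmul g w ▸ smul_mem_cosetTranslate_smul hV (g : G) x hw

theorem dMod_le_mul_Efun (hV : ∀ h ∈ H, ∀ v ∈ V, h • v ∈ V)
    (hgen : ⨆ g : G, V.map (DistribSMul.toLinearMap F W g) = ⊤)
    (hS : ∀ g : G, ∀ w ∈ S, g • w ∈ S) :
    dMod G S ≤ Module.finrank F V * Efun H.index p := by
  have hp : p.Prime := Fact.out
  have hdiv : dMod G S ≤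
      Module.finrank F V * (H.index / lpp (H.index / p ^ H.index.factorization p)) := by
    obtain ⟨Q, hQ, horb⟩ := exists_not_dvd_card_and_lpp_le_card_orbit H hp
    exact dMod_le_mul_div hV hgen hS (mt (CharP.cast_eq_zero_iff F p _).1 hQ) (lpp_pos _) horb
  rw [Efun]
  split_ifs with hk
  · exact hdiv
  · rw [mul_min_of_nonneg _ _ (Nat.zero_le _), logb_self_pow (mod_cast hp.one_lt)]
    exact le_min (dMod_le_mul_floor hV hgen hS hk) hdiv

end InducedModule

theorem stmt_16_general (G : Type*) [Group G] [Finite G]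
    (H : Subgroup G) (n : ℕ) (hn : 2 ≤ n) (hidx : H.index = n)
    (F W : Type*) [Field F] (p : ℕ) [Fact p.Prime] (hchar : CharP F p)
    [AddCommGroup W] [Module F W] [DistribMulAction G W] [SMulCommClass G F W]
    (V : Submodule F W) [FiniteDimensional F V] (a : ℕ) (ha : Module.finrank F V = a)
    (hVstable : ∀ g ∈ H, ∀ v ∈ V, g • v ∈ V)
    (hgen : ⨆ g : G, V.map (DistribSMul.toLinearMap F W g) = ⊤)
    (S : Submodule F W) (hSstable : ∀ g : G, ∀ w ∈ S, g • w ∈ S) :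
    (√n ≤ (p ^ n.factorization p : ℕ) →
      dMod G S ≤ a * Efun n p ∧
      (a * Efun n p : ℝ) ≤
        a * ⌊(2 / √Real.pi) * n / √(Real.logb 2 n)⌋₊) ∧
    ((p ^ n.factorization p : ℕ) ≤ √n →
      dMod G S ≤ a * Efun n p ∧
      (a * Efun n p : ℝ) ≤
        ⌊2 * a * n / (Real.log 2 / 1.25506 * Real.logb 2 n)⌋₊) ∧
    (n ≤ 1260 →
      dMod G S ≤ a * Efun n p ∧
      (a * Efun n p : ℝ) ≤
        ⌊2 * a * n / (Real.log 2 / 1.25506 * Real.logb 2 n)⌋₊) ∧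
    (1261 ≤ n →
      dMod G S ≤ a * Efun n p ∧
      (a * Efun n p : ℝ) ≤
        ⌊a * (2 / √Real.pi) * n / √(Real.logb 2 n)⌋₊) := by
  have hd : dMod G S ≤ a * Efun n p := by
    rw [← ha, ← hidx]
    exact dMod_le_mul_Efun hVstable hgen hSstable
  have hp : 2 ≤ p := (Fact.out : p.Prime).two_le
  have ha0 : (0 : ℝ) ≤ a := Nat.cast_nonneg a
  refine ⟨fun h ↦ ⟨hd, ?_⟩, fun h ↦ ⟨hd, ?_⟩, fun h ↦ ⟨hd, ?_⟩, fun h ↦ ⟨hd, ?_⟩⟩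
  · exact_mod_cast Nat.mul_le_mul_left a (Efun_le_of_sqrt_le_ordProj hn hp h)
  all_goals
    rw [← Nat.cast_mul, Nat.cast_le]
    apply Nat.le_floor
    rw [Nat.cast_mul]
  · exact (mul_le_mul_of_nonneg_left (Efun_le_of_ordProj_le_sqrt hn h) ha0).trans_eq (by ring)
  · exact (mul_le_mul_of_nonneg_left (Efun_le_of_le_1260 hn hp h) ha0).trans_eq (by ring)
  · exact (mul_le_mul_of_nonneg_left (Efun_le_of_1261_le hp h) ha0).trans_eq (by ring)

/-- Let `G` be a finite group, `H ≤ G` of index `n ≥ 2`, `F` a field of characteristic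
`p > 0`, `V` an `H`-module of finite dimension `a` over `F`, and `S` a submodule of the
induced module `V↑G` (presented internally: `W` is a `G`-module containing an `H`-stable
subspace `V` of dimension `a` such that `W` is the direct sum of the translates `g • V` over
the cosets `g H ∈ G ⧸ H`).  Then: (i) if `n_p ≥ √n` then
`d_G(S) ≤ a·E(n,p) ≤ a·⌊b₁·n/√(log n)⌋` with `b₁ = 2/√π`; (ii) if `n_p ≤ √n` then
`d_G(S) ≤ a·E(n,p) ≤ ⌊2an/(c'·log n)⌋` with `c' = ln 2/1.25506`.  In particular,
`d_G(S) ≤ a·E(n,p) ≤ ⌊2an/(c'·log n)⌋` if `2 ≤ n ≤ 1260`, and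
`d_G(S) ≤ a·E(n,p) ≤ ⌊a·b₁·n/√(log n)⌋` if `n ≥ 1261`. -/
theorem stmt_16 (G : Type*) [Group G] [Fintype G]
    (H : Subgroup G) (n : ℕ) (hn : 2 ≤ n) (hidx : H.index = n)
    (F W : Type*) [Field F] (p : ℕ) [Fact p.Prime] (hchar : CharP F p)
    [AddCommGroup W] [Module F W] [DistribMulAction G W] [SMulCommClass G F W]
    (V : Submodule F W) [FiniteDimensional F V] (a : ℕ) (ha : Module.finrank F V = a)
    (hVstable : ∀ g ∈ H, ∀ v ∈ V, g • v ∈ V)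
    (hinduced : ∃ φ : G ⧸ H → Submodule F W,
      (∀ g : G, φ (g : G ⧸ H) = V.map (DistribMulAction.toLinearMap F W g)) ∧
        iSupIndep φ ∧ iSup φ = ⊤)
    (S : Submodule F W) (hSstable : ∀ g : G, ∀ w ∈ S, g • w ∈ S) :
    (Real.sqrt n ≤ (p ^ n.factorization p : ℕ) →
      dMod G S ≤ a * Efun n p ∧
      (a * Efun n p : ℝ) ≤
        a * ⌊(2 / Real.sqrt Real.pi) * n / Real.sqrt (Real.logb 2 n)⌋₊) ∧
    ((p ^ n.factorization p : ℕ) ≤ Real.sqrt n →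
      dMod G S ≤ a * Efun n p ∧
      (a * Efun n p : ℝ) ≤
        ⌊2 * a * n / (Real.log 2 / 1.25506 * Real.logb 2 n)⌋₊) ∧
    (n ≤ 1260 →
      dMod G S ≤ a * Efun n p ∧
      (a * Efun n p : ℝ) ≤
        ⌊2 * a * n / (Real.log 2 / 1.25506 * Real.logb 2 n)⌋₊) ∧
    (1261 ≤ n →
      dMod G S ≤ a * Efun n p ∧
      (a * Efun n p : ℝ) ≤
        ⌊a * (2 / Real.sqrt Real.pi) * n / Real.sqrt (Real.logb 2 n)⌋₊) := by
  obtain ⟨φ, hφ, -, htop⟩ := hinduced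
  refine stmt_16_general G H n hn hidx F W p hchar V a ha hVstable ?_ S hSstable
  rw [← htop, ← QuotientGroup.mk_surjective.iSup_comp]
  exact iSup_congr fun g ↦ (hφ g).symm
end
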